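/- arXiv:1710.02060 — 12 statements merged into one kernel-verified Lean document; each statement's English description precedes it below -/
import Mathlib

section
/- For every real number p with 0 < p < 1 and every sequence (x_n) of positive real numbers, the power means satisfy the Hardy inequality ∑_{n=1}^∞ ((x_1^p + x_2^p + ⋯ + x_n^p)/n)^{1/p} ≤ (1-p)^{-1/p} · ∑_{n=1}^∞ x_n. -/
/-!
With `q = 1 / p > 1`, `a i = x i ^ p`, `c = (1 - p)⁻¹ = q / (q - 1)` and the averages
`α n = (a 0 + ⋯ + a (n - 1)) / n`, the claim is the classical discrete Hardy inequality
`∑ α n ^ q ≤ c ^ q * ∑ a n ^ q`. The proof is a variant of Elliott's: two applications of Young's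
inequality (`young_tangent`) give the one-step estimate (`hardy_step`)
`α (n+1) ^ q + c * ((n+1) * α (n+1) ^ q - n * α n ^ q) ≤ (c * a n) ^ q`,
whose bracket telescopes to a nonnegative quantity. Using Young's inequality termwise, instead of
Hölder's inequality for the sums, makes division by a partial sum unnecessary.
-/

open scoped ENNReal

/-- Young's inequality for the exponent `q`, in the form that the convex function `t ↦ t ^ q` lies
above its tangent at `v`. -/
theorem young_tangent {q u v : ℝ} (hq : 1 < q) (hu : 0 ≤ u) (hv : 0 ≤ v) :
    q * (u * v ^ (q - 1)) ≤ u ^ q + (q - 1) * v ^ q := by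
  have hq0 : q ≠ 0 := by linarith
  have hq1 : q - 1 ≠ 0 := by linarith
  have h := Real.young_inequality_of_nonneg hu (Real.rpow_nonneg hv (q - 1))
    (Real.HolderConjugate.conjExponent hq)
  rw [Real.conjExponent, ← Real.rpow_mul hv, mul_div_cancel₀ q hq1] at h
  calc q * (u * v ^ (q - 1)) ≤ q * (u ^ q / q + v ^ q / (q / (q - 1))) := by gcongr
    _ = u ^ q + (q - 1) * v ^ q := by field_simp

/-- The one-step estimate: `α` is the average obtained when the value `a` is appended to `n` values
of average `β`. -/
theorem hardy_step {q c n α β a : ℝ} (hq : 1 < q) (hc : c * (q - 1) = q) (hn : 0 ≤ n)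
    (hα : 0 ≤ α) (hβ : 0 ≤ β) (ha : 0 ≤ a) (h : (n + 1) * α = n * β + a) :
    α ^ q + c * ((n + 1) * α ^ q - n * β ^ q) ≤ (c * a) ^ q := by
  have hc0 : 0 < c := pos_of_mul_pos_left (b := q - 1) (by linarith) (by linarith)
  have h1 := mul_le_mul_of_nonneg_left (young_tangent hq hβ hα) (mul_nonneg hc0.le hn)
  have h2 := young_tangent hq (mul_nonneg hc0.le ha) hα
  have h3 : α ^ q = α * α ^ (q - 1) := by
    rw [← Real.rpow_one_add' hα (by linarith)]; congr 1; ring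
  have h4 : (n + 1) * α ^ q = n * (β * α ^ (q - 1)) + a * α ^ (q - 1) := by
    rw [h3]; linear_combination α ^ (q - 1) * h
  have h5 : α ^ q * (c * (q - 1)) = α ^ q * q := by rw [hc]
  linear_combination h1 + h2 + c * q * h4 + (-1) * h5

/-- Hardy's inequality for finite sums, with the telescoped term kept on the left-hand side. For
`N = 0` the average is the junk value `0 / 0 = 0`, and is multiplied by `0`. -/
theorem hardy_finite {q c : ℝ} (hq : 1 < q) (hc : c * (q - 1) = q) (a : ℕ → ℝ)
    (ha : ∀ n, 0 ≤ a n) (N : ℕ) :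
    ∑ n ∈ Finset.range N, ((∑ i ∈ Finset.range (n + 1), a i) / ((n : ℝ) + 1)) ^ q
        + c * (N * ((∑ i ∈ Finset.range N, a i) / N) ^ q)
      ≤ ∑ n ∈ Finset.range N, (c * a n) ^ q := by
  induction N with
  | zero => simp
  | succ N ih =>
    have hA : ∀ M, 0 ≤ ∑ i ∈ Finset.range M, a i := fun M => Finset.sum_nonneg fun i _ => ha i
    have key : ((N : ℝ) + 1) * ((∑ i ∈ Finset.range (N + 1), a i) / ((N : ℝ) + 1))
        = N * ((∑ i ∈ Finset.range N, a i) / N) + a N := by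
      rw [mul_div_cancel₀ _ (by positivity), Finset.sum_range_succ]
      rcases Nat.eq_zero_or_pos N with rfl | hN
      · simp
      · rw [mul_div_cancel₀ _ (by positivity)]
    have hs := hardy_step hq hc N.cast_nonneg (div_nonneg (hA (N + 1)) (by positivity))
      (div_nonneg (hA N) N.cast_nonneg) (ha N) key
    rw [Finset.sum_range_succ _ N, Finset.sum_range_succ (fun n => (c * a n) ^ q) N]
    push_cast
    linarith

/-- **Hardy's inequality for power means, case `0 < p < 1`.**
For every `p ∈ (0,1)` and every sequence of positive reals,
`∑_{n=1}^∞ P_p(x_1,…,x_n) ≤ (1-p)^{-1/p} ∑_{n=1}^∞ x_n` (in the extended real sense). -/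
theorem hardy_powerMean_pos (p : ℝ) (hp0 : 0 < p) (hp1 : p < 1)
    (x : ℕ → ℝ) (hx : ∀ n, 0 < x n) :
    ∑' n : ℕ,
        ENNReal.ofReal (((∑ i ∈ Finset.range (n + 1), x i ^ p) / ((n : ℝ) + 1)) ^ (1 / p)) ≤
      ENNReal.ofReal ((1 - p) ^ (-1 / p)) * ∑' n : ℕ, ENNReal.ofReal (x n) := by
  have hp : 0 < 1 - p := by linarith
  have hq : 1 < 1 / p := by rw [lt_div_iff₀ hp0]; linarith
  have hc : (1 - p)⁻¹ * (1 / p - 1) = 1 / p := by field_simp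
  have hx0 : ∀ n, 0 ≤ x n ^ p := fun n => Real.rpow_nonneg (hx n).le p
  have hterm : ∀ n, ((1 - p)⁻¹ * x n ^ p) ^ (1 / p) = (1 - p) ^ (-1 / p) * x n := by
    intro n
    rw [Real.mul_rpow (inv_nonneg.2 hp.le) (hx0 n), ← Real.rpow_mul (hx n).le,
      mul_one_div_cancel hp0.ne', Real.rpow_one, Real.inv_rpow hp.le, ← Real.rpow_neg hp.le,
      neg_div]
  rw [ENNReal.tsum_eq_iSup_nat]
  refine iSup_le fun N => ?_
  have hfin := hardy_finite hq hc (fun n => x n ^ p) hx0 N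
  simp only [hterm, ← Finset.mul_sum] at hfin
  have htel : 0 ≤ (1 - p)⁻¹ * (N * ((∑ i ∈ Finset.range N, x i ^ p) / N) ^ (1 / p)) := by
    have := Finset.sum_nonneg fun i (_ : i ∈ Finset.range N) => hx0 i
    positivity
  rw [← ENNReal.ofReal_sum_of_nonneg fun n _ => Real.rpow_nonneg
    (div_nonneg (Finset.sum_nonneg fun i _ => hx0 i) (by positivity)) _]
  calc _ ≤ ENNReal.ofReal ((1 - p) ^ (-1 / p) * ∑ n ∈ Finset.range N, x n) :=
        ENNReal.ofReal_le_ofReal (by linarith)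
    _ = ENNReal.ofReal ((1 - p) ^ (-1 / p)) * ∑ n ∈ Finset.range N, ENNReal.ofReal (x n) := by
        rw [ENNReal.ofReal_mul (Real.rpow_nonneg hp.le _),
          ENNReal.ofReal_sum_of_nonneg fun n _ => (hx n).le]
    _ ≤ _ := by gcongr; exact ENNReal.sum_le_tsum _
end

section
/- For every real number p < 0 and every sequence (x_n) of positive real numbers, the power means satisfy the Hardy inequality ∑_{n=1}^∞ ((x_1^p + x_2^p + ⋯ + x_n^p)/n)^{1/p} ≤ (1-p)^{-1/p} · ∑_{n=1}^∞ x_n. -/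
/-!
Put `s = -1/p > 0`, `κ = s / (1 + s)`, so that the constant is `(1 - p) ^ s = κ ^ (-s)`. Write
`S n = ∑ i < n, x i ^ p` and `M n = (n / S n) ^ s` for the power mean of the first `n` terms
(with `M 0 = 0`). The key is the one-step inequality
`(1 + κ (n + 1)) M (n + 1) ≤ κ ^ (-s) x n + κ n M n` (`powerMean_step`), which telescopes to
`∑ i < n, M (i + 1) + κ n M n ≤ κ ^ (-s) ∑ i < n, x i`; the extra term on the left is nonnegative.

With `a = x n ^ p` and `T = S n`, the one-step inequality combines two facts.
* `radon_two`: `(1 + D) ^ (1 + s) / (a + T) ^ s ≤ 1 / a ^ s + D ^ (1 + s) / T ^ s`, which is Jensen's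
  inequality for `t ↦ t ^ (1 + s)`; it is applied with `D = κ n`.
* `bernoulli_shift`: with `d = κ (n + 1)`, one has `1 + D = d + 1 / (1 + s)`, and Bernoulli's
  inequality gives `(1 + D) ^ (1 + s) ≥ (1 + d) d ^ s`.
-/

/-- A two-term Radon inequality in perspective form: Jensen's inequality for `t ↦ t ^ e` with
weights `a / (a + T)` and `T / (a + T)`. When `T = 0` the last term vanishes, whence `hD`. -/
lemma radon_two {e a T D : ℝ} (he : 1 ≤ e) (ha : 0 < a) (hT : 0 ≤ T) (hD0 : 0 ≤ D)
    (hD : T = 0 → D = 0) :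
    (a + T) * ((1 + D) / (a + T)) ^ e ≤ a * (1 / a) ^ e + T * (D / T) ^ e := by
  have hS : 0 < a + T := by positivity
  have h := (convexOn_rpow he).2 (show 1 / a ∈ Set.Ici (0 : ℝ) from Set.mem_Ici.2 (by positivity))
    (show D / T ∈ Set.Ici (0 : ℝ) from Set.mem_Ici.2 (by positivity))
    (show 0 ≤ a / (a + T) by positivity) (show 0 ≤ T / (a + T) by positivity) (by field_simp)
  simp only [smul_eq_mul] at h
  have h1 : a / (a + T) * (1 / a) + T / (a + T) * (D / T) = (1 + D) / (a + T) := by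
    rcases hT.eq_or_lt with h0 | h0
    · rw [hD h0.symm, ← h0]; field_simp
    · field_simp
  rw [h1] at h
  calc _ ≤ (a + T) * (a / (a + T) * (1 / a) ^ e + T / (a + T) * (D / T) ^ e) := by gcongr
    _ = _ := by field_simp

lemma bernoulli_shift {s d : ℝ} (hs : 0 < s) (hd : 0 < d) :
    (1 + d) * d ^ s ≤ (d + 1 / (1 + s)) ^ (1 + s) := by
  have hB := one_add_mul_self_le_rpow_one_add (s := 1 / ((1 + s) * d)) (p := 1 + s)
    (by have : 0 < 1 / ((1 + s) * d) := by positivity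
        linarith) (by linarith)
  have h1 : d + 1 / (1 + s) = d * (1 + 1 / ((1 + s) * d)) := by field_simp
  have h2 : 1 + (1 + s) * (1 / ((1 + s) * d)) = 1 + 1 / d := by field_simp
  rw [h2] at hB
  rw [h1, Real.mul_rpow hd.le (by positivity), Real.rpow_add hd, Real.rpow_one]
  calc (1 + d) * d ^ s = d * d ^ s * (1 + 1 / d) := by field_simp; ring
    _ ≤ _ := by gcongr

lemma mul_div_rpow_one_add {s u v : ℝ} (hs : 0 < s) (hu : 0 ≤ u) (hv : 0 ≤ v)
    (h : v = 0 → u = 0) : v * (u / v) ^ (1 + s) = u * (u / v) ^ s := by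
  rw [Real.rpow_add_of_nonneg (by positivity) zero_le_one hs.le, Real.rpow_one]
  rcases hv.eq_or_lt with h0 | h0
  · rw [h h0.symm, ← h0]; simp
  · field_simp

/-- The one-step inequality, in terms of `a = x n ^ p` and `T = S n` and multiplied by `κ ^ s`. -/
lemma powerMean_step {s κ n a T : ℝ} (hs : 0 < s) (hκ : κ = s / (1 + s)) (hn : 0 ≤ n)
    (ha : 0 < a) (hT : 0 ≤ T) (h0 : T = 0 → n = 0) :
    (1 + κ * (n + 1)) * (κ ^ s * ((n + 1) / (a + T)) ^ s) ≤
      (1 / a) ^ s + κ * n * (κ ^ s * (n / T) ^ s) := by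
  have hκ0 : 0 < κ := by rw [hκ]; positivity
  have hS : 0 < a + T := by positivity
  have hd : 0 < κ * (n + 1) := by positivity
  have hR := radon_two (e := 1 + s) (D := κ * n) (by linarith) ha hT (by positivity)
    (fun h => by rw [h0 h, mul_zero])
  rw [mul_div_rpow_one_add hs zero_le_one ha.le (fun h => absurd h ha.ne'),
    mul_div_rpow_one_add hs (by positivity) hT (fun h => by rw [h0 h, mul_zero]), one_mul,
    mul_div_assoc κ n T, Real.mul_rpow hκ0.le (by positivity)] at hR
  refine le_trans ?_ hR
  have hB := bernoulli_shift hs hd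
  have h1 : κ * (n + 1) + 1 / (1 + s) = 1 + κ * n := by rw [hκ]; field_simp; ring
  rw [h1] at hB
  rw [← Real.mul_rpow hκ0.le (by positivity), ← mul_div_assoc, Real.div_rpow hd.le hS.le,
    Real.div_rpow (by positivity) hS.le, Real.rpow_add hS, Real.rpow_one]
  calc _ = (1 + κ * (n + 1)) * (κ * (n + 1)) ^ s / (a + T) ^ s := by ring
    _ ≤ (1 + κ * n) ^ (1 + s) / (a + T) ^ s := by gcongr
    _ = _ := by field_simp

/-- The telescoped inequality for partial sums. -/
lemma powerMean_partial {s κ : ℝ} (hs : 0 < s) (hκ : κ = s / (1 + s)) (a : ℕ → ℝ)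
    (ha : ∀ n, 0 < a n) (N : ℕ) :
    κ ^ s * ∑ n ∈ Finset.range N, (((n : ℝ) + 1) / ∑ i ∈ Finset.range (n + 1), a i) ^ s
      + κ * N * (κ ^ s * ((N : ℝ) / ∑ i ∈ Finset.range N, a i) ^ s)
      ≤ ∑ n ∈ Finset.range N, (1 / a n) ^ s := by
  induction N with
  | zero => simp
  | succ N ih =>
    have hT : 0 ≤ ∑ i ∈ Finset.range N, a i := Finset.sum_nonneg fun i _ => (ha i).le
    have h := powerMean_step (n := N) hs hκ (Nat.cast_nonneg N) (ha N) hT (fun h => by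
      rcases Nat.eq_zero_or_pos N with h' | h'
      · simp [h']
      · exact absurd h (Finset.sum_pos (fun i _ => ha i) ⟨0, by simpa using h'⟩).ne')
    rw [Finset.sum_range_succ, Finset.sum_range_succ (fun n => (1 / a n) ^ s),
      Finset.sum_range_succ a N, add_comm (∑ i ∈ Finset.range N, a i)]
    push_cast
    linarith

open scoped ENNReal

/-- **Hardy's inequality for power means, case `p < 0`.**
For every `p < 0` and every sequence of positive reals,
`∑_{n=1}^∞ P_p(x_1,…,x_n) ≤ (1-p)^{-1/p} ∑_{n=1}^∞ x_n` (in the extended real sense). -/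
theorem hardy_powerMean_neg (p : ℝ) (hp : p < 0)
    (x : ℕ → ℝ) (hx : ∀ n, 0 < x n) :
    ∑' n : ℕ,
        ENNReal.ofReal (((∑ i ∈ Finset.range (n + 1), x i ^ p) / ((n : ℝ) + 1)) ^ (1 / p)) ≤
      ENNReal.ofReal ((1 - p) ^ (-1 / p)) * ∑' n : ℕ, ENNReal.ofReal (x n) := by
  have hs : 0 < -1 / p := div_pos_of_neg_of_neg (by norm_num) hp
  have hp1 : 0 < 1 - p := by linarith
  have ha : ∀ n, 0 < x n ^ p := fun n => Real.rpow_pos_of_pos (hx n) p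
  have hκ : (1 - p)⁻¹ = (-1 / p) / (1 + -1 / p) := by
    have : p ≠ 0 := hp.ne
    have : p - 1 ≠ 0 := by linarith
    have : 1 + -1 / p = (p - 1) / p := by field_simp; ring
    rw [this]
    field_simp
    ring
  have hM : ∀ n : ℕ, ((∑ i ∈ Finset.range (n + 1), x i ^ p) / ((n : ℝ) + 1)) ^ (1 / p) =
      (((n : ℝ) + 1) / ∑ i ∈ Finset.range (n + 1), x i ^ p) ^ (-1 / p) := fun n => by
    have hS : 0 ≤ ∑ i ∈ Finset.range (n + 1), x i ^ p := Finset.sum_nonneg fun i _ => (ha i).le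
    rw [neg_div, Real.rpow_neg (by positivity), ← Real.inv_rpow (by positivity), inv_div]
  have hX : ∀ n : ℕ, (1 / x n ^ p) ^ (-1 / p) = x n := fun n => by
    rw [one_div, ← Real.rpow_neg (hx n).le, ← Real.rpow_mul (hx n).le]
    have : -p * (-1 / p) = 1 := by field_simp [hp.ne]
    rw [this, Real.rpow_one]
  have hM0 : ∀ n : ℕ,
      0 ≤ (((n : ℝ) + 1) / ∑ i ∈ Finset.range (n + 1), x i ^ p) ^ (-1 / p) := fun n =>
    Real.rpow_nonneg (div_nonneg (by positivity) (Finset.sum_nonneg fun i _ => (ha i).le)) _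
  simp only [hM]
  refine ENNReal.tsum_le_of_sum_range_le fun N => ?_
  have h := powerMean_partial hs hκ (fun n => x n ^ p) ha N
  simp only [hX] at h
  have hrest : 0 ≤ (1 - p)⁻¹ * N * ((1 - p)⁻¹ ^ (-1 / p) *
      ((N : ℝ) / ∑ i ∈ Finset.range N, x i ^ p) ^ (-1 / p)) := by
    have : 0 ≤ ∑ i ∈ Finset.range N, x i ^ p := Finset.sum_nonneg fun i _ => (ha i).le
    positivity
  have hfin : ∑ n ∈ Finset.range N,
      (((n : ℝ) + 1) / ∑ i ∈ Finset.range (n + 1), x i ^ p) ^ (-1 / p) ≤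
      (1 - p) ^ (-1 / p) * ∑ n ∈ Finset.range N, x n := by
    have h' := (le_add_of_nonneg_right hrest).trans h
    rw [Real.inv_rpow hp1.le] at h'
    exact (inv_mul_le_iff₀ (by positivity)).1 h'
  rw [← ENNReal.ofReal_sum_of_nonneg fun n _ => hM0 n]
  refine (ENNReal.ofReal_le_ofReal hfin).trans ?_
  rw [ENNReal.ofReal_mul (by positivity), ENNReal.ofReal_sum_of_nonneg fun n _ => (hx n).le]
  gcongr
  exact ENNReal.sum_le_tsum _
end

section
/- (Carleman's inequality) For every sequence (x_n) of positive real numbers, ∑_{n=1}^∞ (x_1 x_2 ⋯ x_n)^{1/n} ≤ e · ∑_{n=1}^∞ x_n. -/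
open scoped ENNReal

/-!
Pólya's proof. Put `c i = (i + 2) ^ (i + 1) / (i + 1) ^ i`, so that the product
`c 0 ⋯ c n` telescopes to `(n + 2) ^ (n + 1)`. Applying AM-GM to the numbers `c i * x i` bounds
the `n`-th geometric mean by `(∑ i ≤ n, c i * x i) / ((n + 1) * (n + 2))`
(`geomMean_le_weighted_sum`). Since `1 / ((n + 1) * (n + 2)) = 1 / (n + 1) - 1 / (n + 2)`,
summation by parts bounds the partial sums of the geometric means by `∑ c i * x i / (i + 1)`
(`sum_geomMean_add_le`), and `c i / (i + 1) = (1 + 1 / (i + 1)) ^ (i + 1) ≤ e`.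
-/

/-- Pólya's weights for the terms of the sequence; the index is shifted by one from the usual
`(k + 1) ^ k / k ^ (k - 1)`, `k ≥ 1`. -/
noncomputable def carlemanWeight (i : ℕ) : ℝ := ((i : ℝ) + 2) ^ (i + 1) / ((i : ℝ) + 1) ^ i

lemma carlemanWeight_pos (i : ℕ) : 0 < carlemanWeight i := by
  unfold carlemanWeight
  positivity

lemma prod_carlemanWeight (n : ℕ) :
    ∏ i ∈ Finset.range n, carlemanWeight i = ((n : ℝ) + 1) ^ n := by
  induction n with
  | zero => simp
  | succ n ih =>
    rw [Finset.prod_range_succ, ih, carlemanWeight]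
    have h : ((n : ℝ) + 1) ^ n ≠ 0 := by positivity
    rw [mul_div_cancel₀ _ h]
    push_cast
    ring

lemma carlemanWeight_le (i : ℕ) : carlemanWeight i ≤ Real.exp 1 * ((i : ℝ) + 1) := by
  have hi : (0 : ℝ) < (i : ℝ) + 1 := by positivity
  have h1 : carlemanWeight i = (1 / ((i : ℝ) + 1) + 1) ^ (i + 1) * ((i : ℝ) + 1) := by
    have h2 : 1 / ((i : ℝ) + 1) + 1 = ((i : ℝ) + 2) / ((i : ℝ) + 1) := by
      field_simp
      ring
    rw [h2, carlemanWeight, div_pow]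
    field_simp
    ring
  rw [h1]
  gcongr
  calc (1 / ((i : ℝ) + 1) + 1) ^ (i + 1) ≤ Real.exp (1 / ((i : ℝ) + 1)) ^ (i + 1) := by
        gcongr
        exact Real.add_one_le_exp _
    _ = Real.exp 1 := by
        rw [← Real.exp_nat_mul]
        congr 1
        push_cast
        field_simp

lemma geomMean_le_weighted_sum (x : ℕ → ℝ) (hx : ∀ n, 0 < x n) (n : ℕ) :
    (∏ i ∈ Finset.range (n + 1), x i) ^ (1 / ((n : ℝ) + 1)) ≤
      (∑ i ∈ Finset.range (n + 1), carlemanWeight i * x i) / (((n : ℝ) + 1) * ((n : ℝ) + 2)) := by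
  have hn : (0 : ℝ) < (n : ℝ) + 1 := by positivity
  have hP : 0 ≤ ∏ i ∈ Finset.range (n + 1), x i := Finset.prod_nonneg fun i _ => (hx i).le
  have amgm := Real.geom_mean_le_arith_mean (Finset.range (n + 1)) (fun _ => 1)
    (fun i => carlemanWeight i * x i) (fun _ _ => zero_le_one) (by simpa using hn)
    (fun i _ => (mul_pos (carlemanWeight_pos i) (hx i)).le)
  have hroot : (((n : ℝ) + 1 + 1) ^ (n + 1)) ^ ((n : ℝ) + 1)⁻¹ = (n : ℝ) + 2 := by
    have h := Real.pow_rpow_inv_natCast (x := (n : ℝ) + 1 + 1) (by positivity) n.succ_ne_zero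
    push_cast at h
    rw [h]
    ring
  simp only [Real.rpow_one, one_mul, Finset.sum_const, Finset.card_range, nsmul_eq_mul, mul_one,
    Finset.prod_mul_distrib, prod_carlemanWeight, Nat.cast_add, Nat.cast_one] at amgm
  rw [Real.mul_rpow (by positivity) hP, hroot, le_div_iff₀ hn] at amgm
  rw [one_div, le_div_iff₀ (by positivity)]
  linarith

/-- The second term on the left is the boundary term of the summation by parts; it makes the
induction close. -/
lemma sum_geomMean_add_le (x : ℕ → ℝ) (hx : ∀ n, 0 < x n) (N : ℕ) :
    ∑ n ∈ Finset.range N, (∏ i ∈ Finset.range (n + 1), x i) ^ (1 / ((n : ℝ) + 1)) +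
        (∑ i ∈ Finset.range N, carlemanWeight i * x i) / ((N : ℝ) + 1) ≤
      ∑ i ∈ Finset.range N, carlemanWeight i * x i / ((i : ℝ) + 1) := by
  induction N with
  | zero => simp
  | succ N ih =>
    have h := geomMean_le_weighted_sum x hx N
    rw [Finset.sum_range_succ _ N, Finset.sum_range_succ (fun i => _ / _) N]
    have hS := Finset.sum_range_succ (fun i => carlemanWeight i * x i) N
    have key : (∑ i ∈ Finset.range (N + 1), carlemanWeight i * x i) /
          (((N : ℝ) + 1) * ((N : ℝ) + 2)) +
        (∑ i ∈ Finset.range (N + 1), carlemanWeight i * x i) / (((N + 1 : ℕ) : ℝ) + 1) =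
        (∑ i ∈ Finset.range N, carlemanWeight i * x i) / ((N : ℝ) + 1) +
          carlemanWeight N * x N / ((N : ℝ) + 1) := by
      rw [← add_div, ← hS]
      push_cast
      have h2 : (N : ℝ) + 1 + 1 = N + 2 := by ring
      rw [h2]
      field_simp
      ring
    linarith

/-- **Carleman's inequality.** For every sequence of positive reals,
`∑_{n=1}^∞ (x_1 ⋯ x_n)^{1/n} ≤ e ∑_{n=1}^∞ x_n` (in the extended real sense). -/
theorem carleman_inequality (x : ℕ → ℝ) (hx : ∀ n, 0 < x n) :
    ∑' n : ℕ, ENNReal.ofReal ((∏ i ∈ Finset.range (n + 1), x i) ^ (1 / ((n : ℝ) + 1))) ≤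
      ENNReal.ofReal (Real.exp 1) * ∑' n : ℕ, ENNReal.ofReal (x n) := by
  refine ENNReal.tsum_le_of_sum_range_le fun N => ?_
  have hS : 0 ≤ (∑ i ∈ Finset.range N, carlemanWeight i * x i) / ((N : ℝ) + 1) :=
    div_nonneg (Finset.sum_nonneg fun i _ => (mul_pos (carlemanWeight_pos i) (hx i)).le)
      (by positivity)
  have hle : ∑ i ∈ Finset.range N, carlemanWeight i * x i / ((i : ℝ) + 1) ≤
      Real.exp 1 * ∑ i ∈ Finset.range N, x i := by
    rw [Finset.mul_sum]
    refine Finset.sum_le_sum fun i _ => ?_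
    rw [div_le_iff₀ (by positivity)]
    nlinarith [mul_le_mul_of_nonneg_right (carlemanWeight_le i) (hx i).le]
  calc ∑ n ∈ Finset.range N,
        ENNReal.ofReal ((∏ i ∈ Finset.range (n + 1), x i) ^ (1 / ((n : ℝ) + 1)))
      = ENNReal.ofReal (∑ n ∈ Finset.range N,
          (∏ i ∈ Finset.range (n + 1), x i) ^ (1 / ((n : ℝ) + 1))) :=
        (ENNReal.ofReal_sum_of_nonneg fun n _ =>
          Real.rpow_nonneg (Finset.prod_nonneg fun i _ => (hx i).le) _).symm
    _ ≤ ENNReal.ofReal (Real.exp 1 * ∑ i ∈ Finset.range N, x i) :=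
        ENNReal.ofReal_le_ofReal (by linarith [sum_geomMean_add_le x hx N])
    _ = ENNReal.ofReal (Real.exp 1) * ∑ i ∈ Finset.range N, ENNReal.ofReal (x i) := by
        rw [ENNReal.ofReal_mul (Real.exp_pos 1).le,
          ENNReal.ofReal_sum_of_nonneg fun i _ => (hx i).le]
    _ ≤ ENNReal.ofReal (Real.exp 1) * ∑' n : ℕ, ENNReal.ofReal (x n) := by
        gcongr
        exact ENNReal.sum_le_tsum _
end

section
/- The constant e in Carleman's inequality is sharp: for every real constant C < e there exists a sequence (x_n) of positive real numbers with ∑_{n=1}^∞ x_n < ∞ such that ∑_{n=1}^∞ (x_1 x_2 ⋯ x_n)^{1/n} > C · ∑_{n=1}^∞ x_n. -/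
/-!
For `i ≥ 0` put `a i = (i + 1) ^ i / (i + 2) ^ (i + 1)`. The product of the first `n` of these
telescopes to `1 / (n + 1) ^ n`, so the geometric means of `a` are exactly the harmonic terms
`1 / (n + 2)` (`carlemanTerm_geom_mean`), while `(i + 2) * a i = (1 + 1 / (i + 1)) ^ (-i)` tends
to `1 / e`. Hence, for `C < D < e`, eventually `D * a i ≤ 1 / (i + 2)`
(`carlemanTerm_eventually_le`), and since the harmonic series diverges, the partial sums of
`1 / (i + 2) - C * a i` are unbounded (`exists_partial_sum_gt`). Following `a` up to an index
where this partial sum exceeds `2 * C`, and the sequence `2⁻ⁱ` (of total mass at most `2`)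
afterwards, gives the required summable sequence.
-/

open Filter Topology

/-- The sequence whose `n`-th geometric mean is `1 / (n + 2)` (indices from `0`). -/
noncomputable def carlemanTerm (i : ℕ) : ℝ := ((i : ℝ) + 1) ^ i / ((i : ℝ) + 2) ^ (i + 1)

lemma carlemanTerm_pos (i : ℕ) : 0 < carlemanTerm i := by
  unfold carlemanTerm; positivity

lemma carlemanTerm_prod (n : ℕ) :
    ∏ i ∈ Finset.range n, carlemanTerm i = (((n : ℝ) + 1) ^ n)⁻¹ := by
  induction n with
  | zero => simp
  | succ k ih =>
    rw [Finset.prod_range_succ, ih, carlemanTerm]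
    have h : (k : ℝ) + 1 ≠ 0 := by positivity
    have h2 : (k : ℝ) + 2 ≠ 0 := by positivity
    have h3 : ((k + 1 : ℕ) : ℝ) + 1 = (k : ℝ) + 2 := by push_cast; ring
    rw [h3]
    field_simp

lemma carlemanTerm_geom_mean (n : ℕ) :
    (∏ i ∈ Finset.range (n + 1), carlemanTerm i) ^ (1 / ((n : ℝ) + 1)) = 1 / ((n : ℝ) + 2) := by
  have h3 : ((n + 1 : ℕ) : ℝ) + 1 = (n : ℝ) + 2 := by push_cast; ring
  have h4 : 1 / ((n : ℝ) + 1) = (((n + 1 : ℕ) : ℝ))⁻¹ := by push_cast; simp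
  rw [carlemanTerm_prod, h3, h4, ← inv_pow, Real.pow_rpow_inv_natCast (by positivity) (by simp)]
  simp

lemma carlemanTerm_eventually_le {D : ℝ} (hD : D < Real.exp 1) :
    ∀ᶠ i : ℕ in atTop, D * carlemanTerm i ≤ 1 / ((i : ℝ) + 2) := by
  have h1 : Tendsto (fun i : ℕ => (1 + 1 / ((i : ℝ) + 1)) ^ (i + 1)) atTop (𝓝 (Real.exp 1)) := by
    have := (Real.tendsto_one_add_div_pow_exp 1).comp (tendsto_add_atTop_nat 1)
    refine this.congr fun i => ?_
    simp
  have h2 : Tendsto (fun i : ℕ => 1 + 1 / ((i : ℝ) + 1)) atTop (𝓝 1) := by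
    simpa using tendsto_one_div_add_atTop_nhds_zero_nat (𝕜 := ℝ).const_add 1
  have h3 := h1.div h2 one_ne_zero
  rw [div_one] at h3
  filter_upwards [h3.eventually (lt_mem_nhds hD)] with i hi
  have hp : (0 : ℝ) < (i : ℝ) + 1 := by positivity
  have hq : (0 : ℝ) < (i : ℝ) + 2 := by positivity
  have e : 1 + 1 / ((i : ℝ) + 1) = ((i : ℝ) + 2) / ((i : ℝ) + 1) := by field_simp; ring
  have hi' : D < (((i : ℝ) + 2) / ((i : ℝ) + 1)) ^ i := by
    rw [← e]
    refine hi.trans_eq ?_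
    have : 1 + 1 / ((i : ℝ) + 1) ≠ 0 := by positivity
    simp only [Pi.div_apply]
    rw [pow_succ, mul_div_cancel_right₀ _ this]
  rw [div_pow, lt_div_iff₀ (by positivity)] at hi'
  rw [carlemanTerm, ← mul_div_assoc, div_le_div_iff₀ (by positivity) hq, pow_succ, one_mul]
  gcongr

lemma exists_partial_sum_gt {C : ℝ} (h0 : 0 < C) (hC : C < Real.exp 1) (B : ℝ) :
    ∃ N : ℕ, B < ∑ i ∈ Finset.range N, (1 / ((i : ℝ) + 2) - C * carlemanTerm i) := by
  obtain ⟨D, hCD, hD⟩ := exists_between hC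
  have hD0 : 0 < D := h0.trans hCD
  obtain ⟨M, hM⟩ := eventually_atTop.1 (carlemanTerm_eventually_le hD)
  have hns : ¬ Summable (fun j : ℕ => 1 / (((M + j : ℕ) : ℝ) + 2)) := by
    intro h
    refine Real.not_summable_one_div_natCast ((summable_nat_add_iff (M + 2)).1 ?_)
    refine h.congr fun j => ?_
    push_cast
    ring_nf
  have ht := (not_summable_iff_tendsto_nat_atTop_of_nonneg (fun j => by positivity)).1 hns
  have hc : 0 < 1 - C / D := by rw [sub_pos, div_lt_one hD0]; exact hCD
  have ht2 := tendsto_atTop_add_const_left _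
    (∑ i ∈ Finset.range M, (1 / ((i : ℝ) + 2) - C * carlemanTerm i)) (ht.const_mul_atTop hc)
  obtain ⟨n, hn⟩ := (ht2.eventually_gt_atTop B).exists
  refine ⟨M + n, hn.trans_le ?_⟩
  rw [Finset.sum_range_add, Finset.mul_sum]
  gcongr with j _
  have := mul_le_mul_of_nonneg_left (hM (M + j) (by omega)) (div_nonneg h0.le hD0.le)
  rw [← mul_assoc, div_mul_cancel₀ _ hD0.ne'] at this
  linarith

/-- **Sharpness of the constant `e` in Carleman's inequality.** For every `C < e` there is a
summable sequence of positive reals whose sequence of geometric means has sum exceeding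
`C` times the sum of the sequence. -/
theorem carleman_constant_sharp (C : ℝ) (hC : C < Real.exp 1) :
    ∃ x : ℕ → ℝ, (∀ n, 0 < x n) ∧ (∑' n : ℕ, ENNReal.ofReal (x n)) < ⊤ ∧
      ENNReal.ofReal C * ∑' n : ℕ, ENNReal.ofReal (x n) <
        ∑' n : ℕ, ENNReal.ofReal ((∏ i ∈ Finset.range (n + 1), x i) ^ (1 / ((n : ℝ) + 1))) := by
  -- Enlarging `C`, it may be assumed positive.
  obtain ⟨E, hCE, hE0, hE⟩ : ∃ E, C ≤ E ∧ 0 < E ∧ E < Real.exp 1 :=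
    ⟨max C 1, le_max_left _ _, by positivity, max_lt hC (by simp)⟩
  obtain ⟨N, hN⟩ := exists_partial_sum_gt hE0 hE (2 * E)
  set x : ℕ → ℝ := fun i => if i < N then carlemanTerm i else (1 / 2) ^ i with hx
  have hsum : ∑' n, ENNReal.ofReal (x n) ≤
      ENNReal.ofReal (∑ i ∈ Finset.range N, carlemanTerm i + 2) := by
    have h1 : ∀ n, ENNReal.ofReal (x n) ≤
        (if n ∈ Finset.range N then ENNReal.ofReal (carlemanTerm n) else 0) +
          ENNReal.ofReal ((1 / 2) ^ n) := by
      intro n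
      by_cases h : n < N <;> simp [hx, h]
    refine (ENNReal.tsum_le_tsum h1).trans ?_
    rw [ENNReal.tsum_add, ENNReal.ofReal_add
      (Finset.sum_nonneg fun i _ => (carlemanTerm_pos i).le) zero_le_two,
      ENNReal.ofReal_sum_of_nonneg fun i _ => (carlemanTerm_pos i).le,
      ← ENNReal.ofReal_tsum_of_nonneg (fun n => by positivity) summable_geometric_two,
      tsum_geometric_two, tsum_eq_sum (s := Finset.range N) (fun n hn => if_neg hn)]
    gcongr with i hi
    rw [if_pos hi]
  refine ⟨x, fun n => ?_, hsum.trans_lt ENNReal.ofReal_lt_top, ?_⟩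
  · simp only [hx]
    split_ifs
    · exact carlemanTerm_pos n
    · positivity
  calc _ ≤ ENNReal.ofReal E * ENNReal.ofReal (∑ i ∈ Finset.range N, carlemanTerm i + 2) := by
        gcongr
    _ = ENNReal.ofReal (E * (∑ i ∈ Finset.range N, carlemanTerm i + 2)) :=
        (ENNReal.ofReal_mul hE0.le).symm
    _ < ENNReal.ofReal (∑ i ∈ Finset.range N, 1 / ((i : ℝ) + 2)) := by
        have hA : 0 ≤ ∑ i ∈ Finset.range N, carlemanTerm i :=
          Finset.sum_nonneg fun i _ => (carlemanTerm_pos i).le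
        rw [Finset.sum_sub_distrib, ← Finset.mul_sum] at hN
        have hE2 : 0 ≤ E * (∑ i ∈ Finset.range N, carlemanTerm i + 2) := by positivity
        rw [ENNReal.ofReal_lt_ofReal_iff_of_nonneg hE2]
        linarith
    _ = ∑ n ∈ Finset.range N,
          ENNReal.ofReal ((∏ i ∈ Finset.range (n + 1), x i) ^ (1 / ((n : ℝ) + 1))) := by
        rw [ENNReal.ofReal_sum_of_nonneg fun i _ => by positivity]
        refine Finset.sum_congr rfl fun n hn => ?_
        rw [← carlemanTerm_geom_mean]
        congr 2
        refine Finset.prod_congr rfl fun i hi => ?_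
        rw [Finset.mem_range] at hn hi
        exact (if_pos (by omega)).symm
    _ ≤ _ := ENNReal.sum_le_tsum _
end

section
/- Let I ⊆ ℝ₊ be an interval with inf I = 0, let M be a mean on I, and suppose C ≥ 0 is a constant such that ∑_{n=1}^∞ M(x_1,…,x_n) ≤ C · ∑_{n=1}^∞ x_n for every sequence (x_n) in I. Then for every sequence (x_n) in I with ∑_{n=1}^∞ x_n = ∞, one has C ≥ liminf_{n→∞} x_n^{-1} · M(x_1, x_2, …, x_n). -/
/-!
The Hardy inequality is tested on a long initial segment of `x`, continued by elements of `I`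
dominated by a geometric sequence; these exist because `inf I = 0`. If the liminf exceeded some
`c > C`, then `c * x n ≤ M (x 0, …, x n)` for all `n ≥ N`, so the partial sums `S` of `x` would
satisfy `m + c * (S (N + K) - S N) ≤ C * (S (N + K) + τ)`, where `m` is the sum of the first `N`
means and `τ` bounds the sum of the tail; neither depends on `K`. Since `c > C`, the sequence `S`
would be bounded, contradicting divergence.
-/

open scoped ENNReal

/-- The Hardy inequality, truncated: only the first `K` terms of `x` enter, at the price of an
error `C * ∑ (1/2)^n` that does not depend on `K`. -/
lemma truncated_hardy (I : Set ℝ) (hIpos : I ⊆ Set.Ioi 0) (hInf : sInf I = 0)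
    (M : (n : ℕ) → (Fin n → ℝ) → ℝ) (C : ℝ) (hC : 0 ≤ C)
    (hHardy : ∀ x : ℕ → ℝ, (∀ n, x n ∈ I) →
      ∑' n : ℕ, ENNReal.ofReal (M (n + 1) (fun i => x i.val)) ≤
        ENNReal.ofReal C * ∑' n : ℕ, ENNReal.ofReal (x n))
    (x : ℕ → ℝ) (hx : ∀ n, x n ∈ I) (K : ℕ) :
    ∑ n ∈ Finset.range K, (M (n + 1) (fun i => x i.val)) ≤
      C * (∑ n ∈ Finset.range K, x n + ∑' n : ℕ, (1 / 2 : ℝ) ^ n) := by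
  have hex : ∀ n : ℕ, ∃ e ∈ I, e < (1 / 2 : ℝ) ^ n := fun n =>
    exists_lt_of_csInf_lt ⟨x 0, hx 0⟩ (by rw [hInf]; positivity)
  choose e heI he using hex
  set y : ℕ → ℝ := fun n => if n < K then x n else e n with hy
  have hyI : ∀ n, y n ∈ I := fun n => by
    by_cases h : n < K <;> simp [hy, h, hx, heI]
  have hsumx : 0 ≤ ∑ n ∈ Finset.range K, x n :=
    Finset.sum_nonneg fun n _ => (hIpos (hx n)).le
  have hsumg : 0 ≤ ∑' n : ℕ, (1 / 2 : ℝ) ^ n := tsum_nonneg fun n => by positivity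
  have h1 : ENNReal.ofReal (∑ n ∈ Finset.range K, M (n + 1) (fun i => x i.val)) ≤
      ∑' n : ℕ, ENNReal.ofReal (M (n + 1) (fun i => y i.val)) := by
    refine le_trans ?_ (ENNReal.sum_le_tsum (Finset.range K))
    refine (Finset.le_sum_of_subadditive _ ENNReal.ofReal_zero.le
      (fun _ _ => ENNReal.ofReal_add_le) _ _).trans (Finset.sum_le_sum fun n hn => ?_)
    have : (fun i : Fin (n + 1) => y i.val) = fun i => x i.val := by
      funext i
      have := i.isLt
      have := Finset.mem_range.1 hn
      simp only [hy]
      rw [if_pos (by omega)]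
    rw [this]
  have h2 : ∑' n : ℕ, ENNReal.ofReal (y n) ≤
      ENNReal.ofReal (∑ n ∈ Finset.range K, x n + ∑' n : ℕ, (1 / 2 : ℝ) ^ n) := by
    have hg := ENNReal.ofReal_tsum_of_nonneg (f := fun n : ℕ => (1 / 2 : ℝ) ^ n)
      (fun n => by positivity) summable_geometric_two
    have hsplit := ENNReal.summable.sum_add_tsum_nat_add' (f := fun n => ENNReal.ofReal (y n))
      (k := K)
    rw [ENNReal.ofReal_add hsumx hsumg, hg, ← hsplit,
      ENNReal.ofReal_sum_of_nonneg fun n _ => (hIpos (hx n)).le]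
    refine add_le_add (Finset.sum_le_sum fun n hn => ?_) ?_
    · simp [hy, Finset.mem_range.1 hn]
    · refine le_trans (ENNReal.tsum_le_tsum fun n => ?_)
        (ENNReal.tsum_comp_le_tsum_of_injective (add_left_injective K)
          fun n => ENNReal.ofReal ((1 / 2 : ℝ) ^ n))
      simpa [hy] using ENNReal.ofReal_le_ofReal (he (n + K)).le
  have h3 := h1.trans ((hHardy y hyI).trans (mul_le_mul_right h2 _))
  rw [← ENNReal.ofReal_mul hC] at h3
  exact (ENNReal.ofReal_le_ofReal_iff (by positivity)).1 h3

/-- **Lower estimate for the Hardy constant (Theorem 1, first part).**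
If `M` is a mean on an interval `I ⊆ ℝ₊` with `inf I = 0` and `C ≥ 0` satisfies the Hardy
inequality `∑ M(x_1,…,x_n) ≤ C ∑ x_n` for all sequences in `I`, then for every non-summable
sequence `(x_n)` in `I` we have `C ≥ liminf_n x_n⁻¹ M(x_1,…,x_n)`. -/
theorem hardy_constant_lower_bound (I : Set ℝ) (hIpos : I ⊆ Set.Ioi 0)
    (hIint : I.OrdConnected) (hInf : sInf I = 0)
    (M : (n : ℕ) → (Fin n → ℝ) → ℝ)
    (hmean : ∀ (n : ℕ) (x : Fin (n + 1) → ℝ), (∀ i, x i ∈ I) →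
      Finset.univ.inf' Finset.univ_nonempty x ≤ M (n + 1) x ∧
        M (n + 1) x ≤ Finset.univ.sup' Finset.univ_nonempty x)
    (C : ℝ) (hC : 0 ≤ C)
    (hHardy : ∀ x : ℕ → ℝ, (∀ n, x n ∈ I) →
      ∑' n : ℕ, ENNReal.ofReal (M (n + 1) (fun i => x i.val)) ≤
        ENNReal.ofReal C * ∑' n : ℕ, ENNReal.ofReal (x n))
    (x : ℕ → ℝ) (hx : ∀ n, x n ∈ I)
    (hdiv : ∑' n : ℕ, ENNReal.ofReal (x n) = ⊤) :
    Filter.liminf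
        (fun n : ℕ => ENNReal.ofReal ((x n)⁻¹ * M (n + 1) (fun i => x i.val)))
        Filter.atTop ≤ ENNReal.ofReal C := by
  by_contra! hlt
  obtain ⟨c, hCc, hc⟩ := ENNReal.lt_iff_exists_nnreal_btwn.1 hlt
  have hCc' : C < c := by
    rwa [← ENNReal.ofReal_coe_nnreal, ENNReal.ofReal_lt_ofReal_iff_of_nonneg hC] at hCc
  obtain ⟨N, hN⟩ := Filter.eventually_atTop.1 (Filter.eventually_lt_of_lt_liminf hc)
  have hM : ∀ n ≥ N, c * x n ≤ M (n + 1) (fun i => x i.val) := fun n hn => by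
    have h := hN n hn
    have hxn : 0 < x n := hIpos (hx n)
    rw [← ENNReal.ofReal_coe_nnreal] at h
    have h' := (ENNReal.ofReal_lt_ofReal_iff_of_nonneg c.2).1 h
    rw [inv_mul_eq_div, lt_div_iff₀ hxn] at h'
    exact h'.le
  set τ : ℝ := ∑' n : ℕ, (1 / 2 : ℝ) ^ n
  have hS0 : ∀ n, 0 ≤ x n := fun n => (hIpos (hx n)).le
  -- `B` is the bound obtained by solving `m + c * (S (N + K) - S N) ≤ C * (S (N + K) + τ)` for `S (N + K)`.
  set B : ℝ := (c * ∑ n ∈ Finset.range N, x n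
    - ∑ n ∈ Finset.range N, M (n + 1) (fun i => x i.val) + C * τ) / (c - C)
  have hB : ∀ K, ∑ n ∈ Finset.range K, x n ≤ B := fun K => by
    have h := truncated_hardy I hIpos hInf M C hC hHardy x hx (N + K)
    have hmono : ∑ n ∈ Finset.range K, x n ≤ ∑ n ∈ Finset.range (N + K), x n :=
      Finset.sum_le_sum_of_subset_of_nonneg (Finset.range_subset_range.2 (by omega))
        fun n _ _ => hS0 n
    refine hmono.trans ((le_div_iff₀ (sub_pos.2 hCc')).2 ?_)
    have htail : c * ∑ k ∈ Finset.range K, x (N + k) ≤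
        ∑ k ∈ Finset.range K, M (N + k + 1) (fun i => x i.val) := by
      rw [Finset.mul_sum]
      exact Finset.sum_le_sum fun k _ => hM (N + k) (by omega)
    have hsx := Finset.sum_range_add x N K
    have hsM := Finset.sum_range_add (fun n => M (n + 1) (fun i => x i.val)) N K
    have hcx := congrArg (fun t => (c : ℝ) * t) hsx
    simp only [mul_add] at hcx
    linarith
  have hle : ∑' n : ℕ, ENNReal.ofReal (x n) ≤ ENNReal.ofReal B :=
    ENNReal.tsum_le_of_sum_range_le fun K => by
      rw [← ENNReal.ofReal_sum_of_nonneg fun n _ => hS0 n]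
      exact ENNReal.ofReal_le_ofReal (hB K)
  exact ENNReal.ofReal_ne_top (top_le_iff.1 (hdiv ▸ hle))
end

section
/- Let I ⊆ ℝ₊ be an interval with inf I = 0, let M be a mean on I, and suppose C ≥ 0 is a constant such that ∑_{n=1}^∞ M(x_1,…,x_n) ≤ C · ∑_{n=1}^∞ x_n for every sequence (x_n) in I. Then for every y ∈ I, one has C ≥ liminf_{n→∞} (n/y) · M(y/1, y/2, …, y/n). -/
/-!
The test sequences are `y, y/2, …, y/N` followed by the geometric tail `y / 2 ^ n`; they lie in `I`
because `inf I = 0` and convexity give `(0, y] ⊆ I`. If the liminf exceeded `C`, there would be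
`K > C` with `M (y/1, …, y/n) ≥ K y / n` for all large `n`, and the Hardy inequality would yield
`K (H_N - H_{n₀}) ≤ C (H_N + 2)` for every `N ≥ n₀`, where `H_N` is the `N`-th harmonic number.
This is absurd since `H_N → ∞`.
-/

open scoped ENNReal

/-- An order-connected set of reals with infimum `0` contains `(0, y]` for each of its
elements `y`. -/
theorem Ioc_subset_of_sInf_eq_zero {I : Set ℝ} (hIint : I.OrdConnected) (hInf : sInf I = 0)
    {y : ℝ} (hy : y ∈ I) : Set.Ioc 0 y ⊆ I := by
  intro t ht
  obtain ⟨z, hz, hzt⟩ := exists_lt_of_csInf_lt ⟨y, hy⟩ (hInf ▸ ht.1 : sInf I < t)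
  exact hIint.out hz hy ⟨hzt.le, ht.2⟩

/-- The harmonic sequence `y / (n + 1)`, replaced from index `N` on by `y / 2 ^ n`. -/
noncomputable def testSeq (y : ℝ) (N n : ℕ) : ℝ :=
  if n < N then y / ((n : ℝ) + 1) else y * (1 / 2) ^ n

theorem testSeq_mem_Ioc {y : ℝ} (hy : 0 < y) (N n : ℕ) : testSeq y N n ∈ Set.Ioc 0 y := by
  unfold testSeq
  split_ifs
  · exact ⟨by positivity, div_le_self hy.le (by linarith [n.cast_nonneg (α := ℝ)])⟩
  · exact ⟨by positivity, mul_le_of_le_one_right hy.le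
      (pow_le_one₀ (by norm_num) (by norm_num))⟩

theorem tsum_testSeq_le {y : ℝ} (hy : 0 < y) (N : ℕ) :
    ∑' n, ENNReal.ofReal (testSeq y N n) ≤
      ENNReal.ofReal (y * (∑ n ∈ Finset.range N, 1 / ((n : ℝ) + 1)) + y * 2) := by
  have h1 : HasSum (fun n : ℕ => if n < N then y / ((n : ℝ) + 1) else 0)
      (y * ∑ n ∈ Finset.range N, 1 / ((n : ℝ) + 1)) := by
    have := hasSum_sum_of_ne_finset_zero (L := .unconditional ℕ) (s := Finset.range N)
      (f := fun n : ℕ => if n < N then y / ((n : ℝ) + 1) else 0) (by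
        intro n hn
        exact if_neg (by simpa using hn))
    convert this using 1
    rw [Finset.mul_sum]
    refine Finset.sum_congr rfl fun n hn => ?_
    rw [if_pos (Finset.mem_range.1 hn)]
    ring
  have h3 := h1.add (hasSum_geometric_two.mul_left y)
  rw [← h3.tsum_eq, ENNReal.ofReal_tsum_of_nonneg _ h3.summable]
  · refine ENNReal.tsum_le_tsum fun n => ENNReal.ofReal_le_ofReal ?_
    unfold testSeq
    have : 0 < y * (1 / 2 : ℝ) ^ n := by positivity
    split_ifs <;> linarith
  · intro n
    have : 0 < y * (1 / 2 : ℝ) ^ n := by positivity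
    split_ifs
    · positivity
    · linarith

/-- **Lower estimate for the Hardy constant (Theorem 1, second part).**
If `M` is a mean on an interval `I ⊆ ℝ₊` with `inf I = 0` and `C ≥ 0` satisfies the Hardy
inequality for all sequences in `I`, then for every `y ∈ I` we have
`C ≥ liminf_n (n/y)·M(y/1,…,y/n)`. -/
theorem hardy_constant_lower_bound_harmonic (I : Set ℝ) (hIpos : I ⊆ Set.Ioi 0)
    (hIint : I.OrdConnected) (hInf : sInf I = 0)
    (M : (n : ℕ) → (Fin n → ℝ) → ℝ)
    (hmean : ∀ (n : ℕ) (x : Fin (n + 1) → ℝ), (∀ i, x i ∈ I) →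
      Finset.univ.inf' Finset.univ_nonempty x ≤ M (n + 1) x ∧
        M (n + 1) x ≤ Finset.univ.sup' Finset.univ_nonempty x)
    (C : ℝ) (hC : 0 ≤ C)
    (hHardy : ∀ x : ℕ → ℝ, (∀ n, x n ∈ I) →
      ∑' n : ℕ, ENNReal.ofReal (M (n + 1) (fun i => x i.val)) ≤
        ENNReal.ofReal C * ∑' n : ℕ, ENNReal.ofReal (x n))
    (y : ℝ) (hy : y ∈ I) :
    Filter.liminf
        (fun n : ℕ =>
          ENNReal.ofReal ((((n : ℝ) + 1) / y) * M (n + 1) (fun i => y / ((i : ℕ) + 1))))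
        Filter.atTop ≤ ENNReal.ofReal C := by
  have hy0 : 0 < y := hIpos hy
  by_contra! hlt
  obtain ⟨K, hCK, hK⟩ := ENNReal.lt_iff_exists_nnreal_btwn.1 hlt
  have hCK' : C < K := by
    rw [← ENNReal.ofReal_coe_nnreal] at hCK
    exact (ENNReal.ofReal_lt_ofReal_iff_of_nonneg hC).1 hCK
  obtain ⟨n₀, hn₀⟩ := Filter.eventually_atTop.1 (Filter.eventually_lt_of_lt_liminf hK)
  have hM : ∀ n ≥ n₀, y * (K * (1 / ((n : ℝ) + 1))) ≤
      M (n + 1) (fun i => y / ((i : ℕ) + 1)) := by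
    intro n hn
    have h := hn₀ n hn
    rw [← ENNReal.ofReal_coe_nnreal] at h
    have h' := (ENNReal.ofReal_lt_ofReal_iff_of_nonneg K.coe_nonneg).1 h
    have hn1 : (0 : ℝ) < (n : ℝ) + 1 := by positivity
    rw [div_mul_eq_mul_div, lt_div_iff₀ hy0] at h'
    rw [← mul_assoc, mul_one_div, div_le_iff₀ hn1]
    linarith
  set H : ℕ → ℝ := fun N => ∑ n ∈ Finset.range N, 1 / ((n : ℝ) + 1) with hH
  have key : ∀ N ≥ n₀, K * (H N - H n₀) ≤ C * (H N + 2) := by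
    intro N hN
    have hHN : 0 ≤ H N := Finset.sum_nonneg fun n _ => by positivity
    have hle : ENNReal.ofReal (y * (K * (H N - H n₀))) ≤
        ENNReal.ofReal (C * (y * H N + y * 2)) := by
      calc ENNReal.ofReal (y * (K * (H N - H n₀)))
          = ∑ n ∈ Finset.Ico n₀ N, ENNReal.ofReal (y * (K * (1 / ((n : ℝ) + 1)))) := by
            rw [← ENNReal.ofReal_sum_of_nonneg (fun n _ => by positivity), ← Finset.mul_sum,
              ← Finset.mul_sum, Finset.sum_Ico_eq_sub _ hN]
        _ ≤ ∑ n ∈ Finset.Ico n₀ N,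
              ENNReal.ofReal (M (n + 1) (fun i => testSeq y N i.val)) := by
            refine Finset.sum_le_sum fun n hn => ENNReal.ofReal_le_ofReal ?_
            obtain ⟨hn1, hn2⟩ := Finset.mem_Ico.1 hn
            have : (fun i : Fin (n + 1) => testSeq y N i.val) =
                fun i : Fin (n + 1) => y / ((i : ℕ) + 1) := by
              funext i
              exact if_pos (by omega)
            rw [this]
            exact hM n hn1
        _ ≤ ∑' n : ℕ, ENNReal.ofReal (M (n + 1) (fun i => testSeq y N i.val)) :=
            ENNReal.sum_le_tsum _
        _ ≤ ENNReal.ofReal C * ∑' n : ℕ, ENNReal.ofReal (testSeq y N n) :=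
            hHardy _ fun n => Ioc_subset_of_sInf_eq_zero hIint hInf hy (testSeq_mem_Ioc hy0 N n)
        _ ≤ ENNReal.ofReal C * ENNReal.ofReal (y * H N + y * 2) := by
            gcongr
            exact tsum_testSeq_le hy0 N
        _ = ENNReal.ofReal (C * (y * H N + y * 2)) := (ENNReal.ofReal_mul hC).symm
    have h := (ENNReal.ofReal_le_ofReal_iff (by positivity)).1 hle
    refine le_of_mul_le_mul_left ?_ hy0
    linarith
  have hdiv : Filter.Tendsto (fun N => (K - C) * H N) Filter.atTop Filter.atTop :=
    Real.tendsto_sum_range_one_div_nat_succ_atTop.const_mul_atTop (sub_pos.2 hCK')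
  obtain ⟨N, hN, hN'⟩ := ((hdiv.eventually_gt_atTop (K * H n₀ + C * 2)).and
    (Filter.eventually_ge_atTop n₀)).exists
  linarith [key N hN']
end

section
/- Let M be a mean on ℝ₊ that is increasing, symmetric, repetition invariant, and Jensen concave, and suppose that K := sup_{y>0} liminf_{n→∞} (n/y) · M(y/1, y/2, …, y/n) is finite. Then ∑_{n=1}^∞ M(x_1,…,x_n) ≤ K · ∑_{n=1}^∞ x_n for every sequence (x_n) of positive real numbers; moreover K is the smallest constant with this property. -/
/-!
The Hardy inequality follows from a Kedlaya-type inequality (`kedlaya`): with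
`A_i = (x_1 + ⋯ + x_i) / i`,
`M(x_1) + M(x_1, x_2) + ⋯ + M(x_1, …, x_n) ≤ n · M(A_1, …, A_n)`.
Indeed `A_i ≤ S / i` with `S = ∑ x_k`, so by monotonicity every partial sum on the left is at most
`n · M(S/1, …, S/n)` for all large `n`, and the lower limit of this is at most `K · S`.

The Kedlaya-type inequality goes by induction on `n`, through the identity
`n A_j = x_j + ((n - j) A_j + (j - 1) A_{j-1})`.
It exhibits `(A_1, …, A_n)` as the mean of one copy of `(x_1, …, x_n)` and `n - 1` copies of the
vector `B` with `B_j = ((n - j) A_j + (j - 1) A_{j-1}) / (n - 1)`. The `n (n - 1)` values averaged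
in the entries of `B` are `A_1, …, A_{n-1}`, each occurring `n` times (`stepEquiv`). Averaging
blocks of a vector does not decrease a symmetric, repetition invariant, concave mean
(`le_blockAverage`), since the blockwise average, with its entries repeated, is the mean of
the cyclic rearrangements of the original vector within the blocks. So
`M(B) ≥ M(A_1, …, A_{n-1})`.

Minimality of `K`: if `C < d <` the lower limit for some `y`, then the Hardy inequality with
constant `C`, applied to `y/1, …, y/N` followed by a small geometric tail, bounds
`(d - C) (1 + 1/2 + ⋯ + 1/N)` independently of `N`, contradicting the divergence of the harmonic
series.
-/

open Finset
open scoped ENNReal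

/-! ### Jensen concavity for finite averages -/

lemma jensen_pow_two {ι : Type} (φ : (ι → ℝ) → ℝ)
    (h : ∀ x y : ι → ℝ, (∀ i, 0 < x i) → (∀ i, 0 < y i) →
      (φ x + φ y) / 2 ≤ φ (fun i => (x i + y i) / 2)) (k : ℕ) :
    ∀ f : ℕ → ι → ℝ, (∀ t i, 0 < f t i) →
      ∑ t ∈ range (2 ^ k), φ (f t) ≤
        2 ^ k * φ (fun i => (∑ t ∈ range (2 ^ k), f t i) / 2 ^ k) := by
  induction k with
  | zero => intro f hf; simp
  | succ k ih =>
    intro f hf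
    have e : (2 : ℕ) ^ (k + 1) = 2 ^ k + 2 ^ k := by ring
    have h1 := ih f hf
    have h2 := ih (fun t => f (2 ^ k + t)) (fun t => hf _)
    have hpos : ∀ g : ℕ → ι → ℝ, (∀ t i, 0 < g t i) →
        ∀ i, 0 < (∑ t ∈ range (2 ^ k), g t i) / (2 : ℝ) ^ k := by
      intro g hg i
      have : 0 < ∑ t ∈ range (2 ^ k), g t i :=
        sum_pos (fun t _ => hg t i) ⟨0, by simp⟩
      positivity
    have h3 := h _ _ (hpos f hf) (hpos (fun t => f (2 ^ k + t)) (fun t => hf _))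
    have e2 : (fun i => (∑ t ∈ range (2 ^ (k + 1)), f t i) / (2 : ℝ) ^ (k + 1)) =
        fun i => ((∑ t ∈ range (2 ^ k), f t i) / (2 : ℝ) ^ k +
          (∑ t ∈ range (2 ^ k), f (2 ^ k + t) i) / (2 : ℝ) ^ k) / 2 := by
      funext i
      rw [e, sum_range_add, pow_succ]
      field_simp
    rw [e2, e, sum_range_add, pow_succ]
    have hp : (0 : ℝ) < 2 ^ k := by positivity
    nlinarith

/-- Jensen's inequality for averages of any number `m` of vectors, by Cauchy's argument: the list
is padded with copies of its own average up to length `2 ^ m`. -/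
lemma jensen_average {ι : Type} (φ : (ι → ℝ) → ℝ)
    (h : ∀ x y : ι → ℝ, (∀ i, 0 < x i) → (∀ i, 0 < y i) →
      (φ x + φ y) / 2 ≤ φ (fun i => (x i + y i) / 2)) (m : ℕ) (hm : 0 < m)
    (f : ℕ → ι → ℝ) (hf : ∀ t i, 0 < f t i) :
    ∑ t ∈ range m, φ (f t) ≤ m * φ (fun i => (∑ t ∈ range m, f t i) / m) := by
  obtain ⟨r, hr⟩ : ∃ r, 2 ^ m = m + r := Nat.exists_eq_add_of_le Nat.lt_two_pow_self.le
  have hm' : (0 : ℝ) < m := by exact_mod_cast hm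
  set a : ι → ℝ := fun i => (∑ t ∈ range m, f t i) / m with ha
  have hapos : ∀ i, 0 < a i := fun i =>
    div_pos (sum_pos (fun t _ => hf t i) ⟨0, by simpa using hm⟩) hm'
  have key := jensen_pow_two φ h m (fun t => if t < m then f t else a) (by
    intro t i
    split_ifs
    exacts [hf t i, hapos i])
  have hr' : (2 : ℝ) ^ m = m + r := by exact_mod_cast hr
  have s1 : ∀ g : (ι → ℝ) → ℝ, ∑ t ∈ range (2 ^ m), g (if t < m then f t else a) =
      ∑ t ∈ range m, g (f t) + r * g a := by
    intro g
    rw [hr, sum_range_add]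
    congr 1
    · exact sum_congr rfl fun t ht => by simp [mem_range.1 ht]
    · simp
  have s2 : (fun i => (∑ t ∈ range (2 ^ m), (if t < m then f t else a) i) / (2 : ℝ) ^ m) = a := by
    funext i
    rw [s1 (fun v => v i), hr']
    have : ∑ t ∈ range m, f t i = m * a i := by rw [ha]; field_simp
    rw [this]
    field_simp
  rw [s1 φ, s2, hr'] at key
  linarith

/-! ### Means indexed by finite types -/

/-- A symmetric, repetition invariant, Jensen concave family of functions of positive vectors,
with no mean value property required. -/
structure IsConcaveFamily (M : (n : ℕ) → (Fin n → ℝ) → ℝ) : Prop where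
  symm : ∀ (n : ℕ) (σ : Equiv.Perm (Fin (n + 1))) (x : Fin (n + 1) → ℝ),
    (∀ i, 0 < x i) → M (n + 1) (x ∘ σ) = M (n + 1) x
  rep : ∀ (n m : ℕ) (x : Fin (n + 1) → ℝ), (∀ i, 0 < x i) →
    M ((n + 1) * (m + 1)) (fun i => x i.divNat) = M (n + 1) x
  conc : ∀ (n : ℕ) (x y : Fin (n + 1) → ℝ), (∀ i, 0 < x i) → (∀ i, 0 < y i) →
    (M (n + 1) x + M (n + 1) y) / 2 ≤ M (n + 1) (fun i => (x i + y i) / 2)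

/-- The value of `M` on a vector indexed by a finite type, through an arbitrary enumeration of the
index type. For symmetric `M` the choice does not matter, see `typeMean_eq`. -/
noncomputable def typeMean (M : (n : ℕ) → (Fin n → ℝ) → ℝ) {ι : Type} [Fintype ι]
    (f : ι → ℝ) : ℝ :=
  M (Fintype.card ι) (f ∘ (Fintype.equivFin ι).symm)

namespace IsConcaveFamily

variable {M : (n : ℕ) → (Fin n → ℝ) → ℝ} {ι κ : Type} [Fintype ι] [Fintype κ]

lemma typeMean_eq (hM : IsConcaveFamily M) [Nonempty ι] {n : ℕ} (e : Fin n ≃ ι) (f : ι → ℝ) (hf : ∀ i, 0 < f i) :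
    typeMean M f = M n (f ∘ e) := by
  have hn : Fintype.card ι = n := by simpa using (Fintype.card_congr e).symm
  subst hn
  unfold typeMean
  generalize Fintype.equivFin ι = e' at *
  have hpos : 0 < Fintype.card ι := Fintype.card_pos
  generalize Fintype.card ι = n at *
  obtain ⟨k, rfl⟩ : ∃ k, n = k + 1 := ⟨n - 1, by omega⟩
  rw [← hM.symm k (e'.symm.trans e.symm) (f ∘ e) (fun i => hf _)]
  congr 1
  funext i
  simp

lemma typeMean_comp (hM : IsConcaveFamily M) [Nonempty ι] (e : κ ≃ ι) (f : ι → ℝ) (hf : ∀ i, 0 < f i) :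
    typeMean M (f ∘ e) = typeMean M f := by
  have : Nonempty κ := e.nonempty
  rw [hM.typeMean_eq ((Fintype.equivFin κ).symm.trans e) f hf,
    hM.typeMean_eq (Fintype.equivFin κ).symm (f ∘ e) (fun i => hf _)]
  rfl

lemma typeMean_rep (hM : IsConcaveFamily M) [Nonempty ι] (m : ℕ) (f : ι → ℝ) (hf : ∀ i, 0 < f i) :
    typeMean M (fun p : ι × Fin (m + 1) => f p.1) = typeMean M f := by
  obtain ⟨k, ⟨e⟩⟩ : ∃ k, Nonempty (Fin (k + 1) ≃ ι) := by
    have hpos : 0 < Fintype.card ι := Fintype.card_pos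
    exact ⟨Fintype.card ι - 1,
      ⟨(finCongr (by omega)).trans (Fintype.equivFin ι).symm⟩⟩
  rw [hM.typeMean_eq e f hf, ← hM.rep k m (f ∘ e) (fun i => hf _),
    hM.typeMean_eq (finProdFinEquiv.symm.trans (e.prodCongr (Equiv.refl (Fin (m + 1)))))
      (fun p : ι × Fin (m + 1) => f p.1) (fun p => hf _)]
  rfl

lemma typeMean_conc (hM : IsConcaveFamily M) [Nonempty ι] (x y : ι → ℝ) (hx : ∀ i, 0 < x i) (hy : ∀ i, 0 < y i) :
    (typeMean M x + typeMean M y) / 2 ≤ typeMean M (fun i => (x i + y i) / 2) := by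
  unfold typeMean
  generalize Fintype.equivFin ι = e
  have hpos : 0 < Fintype.card ι := Fintype.card_pos
  generalize Fintype.card ι = n at *
  obtain ⟨k, rfl⟩ : ∃ k, n = k + 1 := ⟨n - 1, by omega⟩
  exact hM.conc k (x ∘ e.symm) (y ∘ e.symm) (fun i => hx _) (fun i => hy _)

/-- Replacing the entries of each block of a vector by the average of the block, and keeping a
single copy of it, does not decrease the mean. -/
lemma le_blockAverage (hM : IsConcaveFamily M) [Nonempty ι] (m : ℕ) (u : ι × Fin (m + 1) → ℝ) (hu : ∀ p, 0 < u p) :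
    typeMean M u ≤ typeMean M (fun j : ι => (∑ s, u (j, s)) / ((m + 1 : ℕ) : ℝ)) := by
  have hpos : ∀ j, 0 < (∑ s, u (j, s)) / ((m + 1 : ℕ) : ℝ) := fun j =>
    div_pos (sum_pos (fun s _ => hu _) univ_nonempty) (by positivity)
  rw [← hM.typeMean_rep m _ hpos]
  -- the cyclic shifts within the blocks average to the blockwise average
  have key := jensen_average (typeMean M (ι := ι × Fin (m + 1))) hM.typeMean_conc (m + 1)
    (by omega) (fun t p => u (p.1, p.2 + Fin.ofNat (m + 1) t)) (fun t p => hu _)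
  have h1 : ∀ t : ℕ, typeMean M (fun p : ι × Fin (m + 1) => u (p.1, p.2 + Fin.ofNat (m + 1) t)) =
      typeMean M u := fun t =>
    hM.typeMean_comp ((Equiv.refl ι).prodCongr (Equiv.addRight (Fin.ofNat (m + 1) t))) u hu
  have h2 : ∀ p : ι × Fin (m + 1),
      ∑ t ∈ range (m + 1), u (p.1, p.2 + Fin.ofNat (m + 1) t) = ∑ s, u (p.1, s) := by
    intro p
    rw [← Fin.sum_univ_eq_sum_range (fun t => u (p.1, p.2 + Fin.ofNat (m + 1) t))]
    rw [← Equiv.sum_comp (Equiv.addLeft p.2) (fun s => u (p.1, s))]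
    simp
  simp only [h1, h2, sum_const, card_range, nsmul_eq_mul] at key
  exact le_of_mul_le_mul_left key (by positivity)

end IsConcaveFamily

/-! ### The Kedlaya-type inequality -/

/-- The rearrangement in the induction step: block `j` of `m` cells consists of `m - j` cells
labelled `j` and `j` cells labelled `j - 1`. Over all `m + 1` blocks, each label `i < m` is used
exactly `m + 1` times, and the equivalence sends a cell to its label and a counter. -/
def stepEquiv (m : ℕ) : Fin (m + 1) × Fin m ≃ Fin m × Fin (m + 1) where
  toFun p := if h : p.2.val + p.1.val < m then (⟨p.1, by omega⟩, ⟨p.2, by omega⟩)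
    else (⟨p.1 - 1, by omega⟩, ⟨p.2 + 1, by omega⟩)
  invFun q := if h : q.2.val + q.1.val < m then (⟨q.1, by omega⟩, ⟨q.2, by omega⟩)
    else (⟨q.1 + 1, by omega⟩, ⟨q.2 - 1, by omega⟩)
  left_inv := by
    rintro ⟨⟨j, hj⟩, ⟨s, hs⟩⟩
    by_cases h : s + j < m
    · simp [h]
    · have h' : ¬ (s + 1 + (j - 1) < m) := by omega
      simp only [h, h', dite_false, Prod.mk.injEq, Fin.mk.injEq]
      omega
  right_inv := by
    rintro ⟨⟨i, hi⟩, ⟨r, hr⟩⟩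
    by_cases h : r + i < m
    · simp [h]
    · have h' : ¬ (r - 1 + (i + 1) < m) := by omega
      simp only [h, h', dite_false, Prod.mk.injEq, Fin.mk.injEq]
      omega

/-- `A_{i+1}`, the arithmetic mean of the first `i + 1` terms. -/
noncomputable def cesaro (x : ℕ → ℝ) (i : ℕ) : ℝ := (∑ l ∈ range (i + 1), x l) / (i + 1)

lemma cesaro_pos {x : ℕ → ℝ} (hx : ∀ k, 0 < x k) (i : ℕ) : 0 < cesaro x i :=
  div_pos (sum_pos (fun l _ => hx l) ⟨0, by simp⟩) (by positivity)

/-- The sum of the entries of block `j`, in terms of the labels of `stepEquiv`. -/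
lemma sum_stepEquiv (m : ℕ) (a : ℕ → ℝ) (j : Fin (m + 1)) :
    ∑ s : Fin m, a (stepEquiv m (j, s)).1 = (m - j) * a j + j * a (j - 1) := by
  obtain ⟨j, hj⟩ := j
  have h1 : ∀ s : Fin m, a (stepEquiv m (⟨j, hj⟩, s)).1 =
      if s.val < m - j then a j else a (j - 1) := by
    intro s
    by_cases h : s.val + j < m
    · have : s.val < m - j := by omega
      simp [stepEquiv, h, this]
    · have : ¬ s.val < m - j := by omega
      simp [stepEquiv, h, this]
  obtain ⟨r, rfl⟩ : ∃ r, m = r + j := ⟨m - j, by omega⟩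
  simp only [h1, Nat.add_sub_cancel]
  rw [Fin.sum_univ_eq_sum_range (fun s => if s < r then a j else a (j - 1)), sum_range_add]
  rw [sum_congr rfl (fun s hs => if_pos (mem_range.1 hs))]
  simp

lemma cesaro_step (x : ℕ → ℝ) (m j : ℕ) :
    x j + ((m - j) * cesaro x j + j * cesaro x (j - 1)) = (m + 1) * cesaro x j := by
  have h1 : (j + 1) * cesaro x j = ∑ l ∈ range (j + 1), x l := by
    unfold cesaro; field_simp
  have h2 : j * cesaro x (j - 1) = ∑ l ∈ range j, x l := by
    rcases j with _ | j
    · simp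
    · unfold cesaro; push_cast; field_simp
  rw [sum_range_succ] at h1
  linarith

/-- The mean of the Cesàro averages dominates the average of the means of the initial segments. -/
lemma kedlaya {M : (n : ℕ) → (Fin n → ℝ) → ℝ} (hM : IsConcaveFamily M) {x : ℕ → ℝ}
    (hx : ∀ k, 0 < x k) (n : ℕ) :
    ∑ k ∈ range (n + 1), M (k + 1) (fun i => x i) ≤
      (n + 1) * M (n + 1) (fun i => cesaro x i) := by
  induction n with
  | zero =>
    have : (fun i : Fin (0 + 1) => x i) = fun i : Fin (0 + 1) => cesaro x i := by
      funext i
      have : i.val = 0 := by omega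
      rw [this]
      simp [cesaro]
    rw [← this]
    simp
  | succ n ih =>
    have toType : ∀ (k : ℕ) (y : ℕ → ℝ), (∀ i, 0 < y i) →
        M (k + 1) (fun i => y i) = typeMean M (fun i : Fin (k + 1) => y i) := fun k y hy =>
      (hM.typeMean_eq (Equiv.refl (Fin (k + 1))) _ (fun i => hy _)).symm
    have hA := cesaro_pos hx
    set B : Fin (n + 1 + 1) → ℝ := fun j =>
      (∑ s, cesaro x (stepEquiv (n + 1) (j, s)).1) / ((n + 1 : ℕ) : ℝ) with hB
    have hBpos : ∀ j, 0 < B j := fun j =>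
      div_pos (sum_pos (fun s _ => hA _) univ_nonempty) (by positivity)
    have h1 : M (n + 1) (fun i => cesaro x i) ≤ typeMean M B := by
      rw [toType n _ hA, ← hM.typeMean_rep (n + 1) _ (fun i => hA _),
        ← hM.typeMean_comp (stepEquiv (n + 1)) _ (fun i => hA _)]
      exact hM.le_blockAverage n (fun p => cesaro x (stepEquiv (n + 1) p).1) (fun p => hA _)
    -- the Cesàro vector of length `n + 2` is the mean of one copy of `x` and `n + 1` copies of `B`
    have key := jensen_average (typeMean M (ι := Fin (n + 1 + 1))) hM.typeMean_conc (n + 1 + 1)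
      (by omega) (fun t => if t = 0 then fun i => x i else B) (by
        intro t i
        split_ifs
        exacts [hx _, hBpos i])
    have h2 : (fun i : Fin (n + 1 + 1) => (∑ t ∈ range (n + 1 + 1),
        (if t = 0 then fun i : Fin (n + 1 + 1) => x i else B) i) / ((n + 1 + 1 : ℕ) : ℝ)) =
        fun i : Fin (n + 1 + 1) => cesaro x i := by
      funext i
      rw [sum_range_succ', div_eq_iff (by positivity)]
      simp only [Nat.add_eq_zero_iff, one_ne_zero, and_false, if_false, if_true, sum_const,
        card_range, nsmul_eq_mul, hB]
      rw [sum_stepEquiv, mul_div_cancel₀ _ (by positivity), add_comm, cesaro_step, mul_comm]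
      push_cast
      ring
    rw [h2, sum_range_succ'] at key
    simp only [Nat.add_eq_zero_iff, one_ne_zero, and_false, if_false, if_true, sum_const,
      card_range, nsmul_eq_mul] at key
    rw [← toType _ _ hA, ← toType _ _ hx] at key
    rw [sum_range_succ]
    have h3 := mul_le_mul_of_nonneg_left h1 (by positivity : (0 : ℝ) ≤ n + 1)
    push_cast at key ⊢
    linarith

/-! ### The Hardy inequality and its best constant -/



/-- **Theorem 2 (Páles–Pasteczka), first part.** If `M` is an increasing, symmetric, repetition
invariant and Jensen concave mean on `ℝ₊`, and
`K = sup_{y>0} liminf_n (n/y)·M(y/1,…,y/n)` is finite, then `K` satisfies the Hardy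
inequality `∑ M(x_1,…,x_n) ≤ K ∑ x_n` for all positive sequences, and `K` is the smallest
constant with this property. -/
theorem hardy_constant_of_concave_mean (M : (n : ℕ) → (Fin n → ℝ) → ℝ)
    (hmean : ∀ (n : ℕ) (x : Fin (n + 1) → ℝ), (∀ i, 0 < x i) →
      Finset.univ.inf' Finset.univ_nonempty x ≤ M (n + 1) x ∧
        M (n + 1) x ≤ Finset.univ.sup' Finset.univ_nonempty x)
    (hsymm : ∀ (n : ℕ) (σ : Equiv.Perm (Fin (n + 1))) (x : Fin (n + 1) → ℝ),
      (∀ i, 0 < x i) → M (n + 1) (x ∘ σ) = M (n + 1) x)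
    (hmono : ∀ (n : ℕ) (x y : Fin (n + 1) → ℝ), (∀ i, 0 < x i) → (∀ i, 0 < y i) →
      (∀ i, x i ≤ y i) → M (n + 1) x ≤ M (n + 1) y)
    (hrep : ∀ (n m : ℕ) (x : Fin (n + 1) → ℝ), (∀ i, 0 < x i) →
      M ((n + 1) * (m + 1)) (fun i => x i.divNat) = M (n + 1) x)
    (hconc : ∀ (n : ℕ) (x y : Fin (n + 1) → ℝ), (∀ i, 0 < x i) → (∀ i, 0 < y i) →
      (M (n + 1) x + M (n + 1) y) / 2 ≤ M (n + 1) (fun i => (x i + y i) / 2))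
    (K : ℝ≥0∞)
    (hK : K = ⨆ y ∈ Set.Ioi (0 : ℝ),
      Filter.liminf
        (fun n : ℕ =>
          ENNReal.ofReal ((((n : ℝ) + 1) / y) * M (n + 1) (fun i => y / ((i : ℕ) + 1))))
        Filter.atTop)
    (hKfin : K ≠ ⊤) :
    (∀ x : ℕ → ℝ, (∀ k, 0 < x k) →
      ∑' k : ℕ, ENNReal.ofReal (M (k + 1) (fun i => x i.val)) ≤
        K * ∑' k : ℕ, ENNReal.ofReal (x k)) ∧
    (∀ C : ℝ≥0∞, (∀ x : ℕ → ℝ, (∀ k, 0 < x k) →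
        ∑' k : ℕ, ENNReal.ofReal (M (k + 1) (fun i => x i.val)) ≤
          C * ∑' k : ℕ, ENNReal.ofReal (x k)) → K ≤ C) := by
  have hM : IsConcaveFamily M := ⟨hsymm, hrep, hconc⟩
  have hle : ∀ (n : ℕ) (x : Fin (n + 1) → ℝ), (∀ i, 0 < x i) → ∀ c, (∀ i, c ≤ x i) →
      c ≤ M (n + 1) x := fun n x hx c hc =>
    le_trans ((Finset.le_inf'_iff _ _).2 fun i _ => hc i) (hmean n x hx).1
  constructor
  · intro x hx
    have hMx : ∀ k : ℕ, 0 ≤ M (k + 1) (fun i => x i.val) := fun k =>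
      hle k _ (fun i => hx _) 0 (fun i => (hx _).le)
    by_cases hS : ∑' k : ℕ, ENNReal.ofReal (x k) = ⊤
    -- if the series diverges, `K * ⊤ = ⊤` requires `K ≠ 0`, which holds as `M` is at least the minimum
    · have hK1 : 1 ≤ K := by
        rw [hK]
        refine le_trans ?_ (le_iSup₂ (1 : ℝ) (by simp))
        refine Filter.le_liminf_of_le (by isBoundedDefault) (Filter.Eventually.of_forall ?_)
        intro n
        rw [ENNReal.one_le_ofReal]
        have h := hle n (fun i => 1 / ((i : ℕ) + 1 : ℝ)) (fun i => by positivity)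
          (1 / ((n : ℝ) + 1)) (fun i => by
            have : ((i : ℕ) : ℝ) ≤ n := by exact_mod_cast Nat.lt_succ_iff.1 i.2
            gcongr)
        calc (1 : ℝ) = ((n : ℝ) + 1) / 1 * (1 / ((n : ℝ) + 1)) := by field_simp
          _ ≤ _ := by gcongr
      rw [hS, ENNReal.mul_top (by positivity)]
      exact le_top
    · have hxs : Summable x := by
        have := ENNReal.summable_toReal hS
        simpa [ENNReal.toReal_ofReal (hx _).le] using this
      set S : ℝ := ∑' k, x k with hSdef
      have hSpos : 0 < S := hxs.tsum_pos (fun k => (hx k).le) 0 (hx 0)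
      rw [← ENNReal.ofReal_tsum_of_nonneg (fun k => (hx k).le) hxs, ← hSdef]
      have hS0 : ENNReal.ofReal S ≠ 0 := by simpa using hSpos
      rw [ENNReal.tsum_eq_iSup_nat]
      refine iSup_le fun n₀ => ?_
      rw [← ENNReal.div_le_iff hS0 ENNReal.ofReal_ne_top, hK]
      refine le_trans ?_ (le_iSup₂ S hSpos)
      refine Filter.le_liminf_of_le (by isBoundedDefault) ?_
      filter_upwards [Filter.eventually_ge_atTop n₀] with n hn
      rw [ENNReal.div_le_iff hS0 ENNReal.ofReal_ne_top,
        ← ENNReal.ofReal_mul' hSpos.le, ← ENNReal.ofReal_sum_of_nonneg (fun k _ => hMx k)]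
      apply ENNReal.ofReal_le_ofReal
      calc ∑ k ∈ range n₀, M (k + 1) (fun i => x i.val)
          ≤ ∑ k ∈ range (n + 1), M (k + 1) (fun i => x i.val) :=
            sum_le_sum_of_subset_of_nonneg (range_mono (by omega)) (fun k _ _ => hMx k)
        _ ≤ (n + 1) * M (n + 1) (fun i => cesaro x i) := kedlaya hM hx n
        _ ≤ (n + 1) * M (n + 1) (fun i => S / ((i : ℕ) + 1)) := by
            refine mul_le_mul_of_nonneg_left ?_ (by positivity)
            refine hmono n _ _ (fun i => cesaro_pos hx _) (fun i => by positivity) fun i => ?_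
            exact div_le_div_of_nonneg_right (hxs.sum_le_tsum _ fun k _ => (hx k).le)
              (by positivity)
        _ = _ := by field_simp
  · intro C hC
    by_contra hlt
    rw [not_le, hK, lt_iSup_iff] at hlt
    obtain ⟨y, hlt⟩ := hlt
    rw [lt_iSup_iff] at hlt
    obtain ⟨hy, hlt⟩ := hlt
    have hy : 0 < y := hy
    obtain ⟨D, hCD, hD⟩ := exists_between hlt
    obtain ⟨n₀, hn₀⟩ := Filter.eventually_atTop.1 (Filter.eventually_lt_of_lt_liminf hD)
    have hCtop : C ≠ ⊤ := (hCD.trans_le le_top).ne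
    have hDtop : D ≠ ⊤ := (hD.trans_le le_top).ne
    set c := C.toReal with hc
    set d := D.toReal with hd
    have hc0 : 0 ≤ c := ENNReal.toReal_nonneg
    have hcd : c < d := (ENNReal.toReal_lt_toReal hCtop hDtop).2 hCD
    have hlow : ∀ n ≥ n₀, d * y * (1 / ((n : ℝ) + 1)) ≤
        M (n + 1) (fun i => y / ((i : ℕ) + 1)) := by
      intro n hn
      have h := hn₀ n hn
      rw [← ENNReal.ofReal_toReal hDtop, ← hd] at h
      have h := (ENNReal.ofReal_lt_ofReal_iff'.1 h).1
      have h2 : d * y * (1 / ((n : ℝ) + 1)) = d * (y / (n + 1)) := by ring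
      rw [h2]
      calc d * (y / (n + 1)) ≤ _ := mul_le_mul_of_nonneg_right h.le (by positivity)
        _ = _ := by field_simp
    set H : ℕ → ℝ := fun N => ∑ k ∈ range N, 1 / ((k : ℝ) + 1) with hH
    have bound : ∀ N ≥ n₀, (d - c) * H N ≤ 2 * c + d * H n₀ := by
      intro N hN
      -- the geometric tail keeps the sequence positive and adds at most `2 * y` to its sum
      set x : ℕ → ℝ := fun k => if k < N then y * (1 / ((k : ℝ) + 1)) else y * (1 / 2) ^ k with hx
      have hxpos : ∀ k, 0 < x k := by
        intro k
        simp only [hx]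
        split_ifs <;> positivity
      have h := hC x hxpos
      have hright : ∑' k : ℕ, ENNReal.ofReal (x k) ≤ ENNReal.ofReal (y * H N + y * 2) := by
        have hg : HasSum (fun k : ℕ => y * (1 / 2 : ℝ) ^ k) (y * 2) :=
          hasSum_geometric_two.mul_left y
        have hf : HasSum (fun k : ℕ => if k < N then y * (1 / ((k : ℝ) + 1)) else 0)
            (y * H N) := by
          have : HasSum (fun k : ℕ => if k < N then y * (1 / ((k : ℝ) + 1)) else 0)
              (∑ k ∈ range N, if k < N then y * (1 / ((k : ℝ) + 1)) else 0) :=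
            hasSum_sum_of_ne_finset_zero (fun k hk => if_neg (by simpa using hk))
          rwa [sum_congr rfl (fun k hk => if_pos (mem_range.1 hk)), ← mul_sum] at this
        rw [← (hf.add hg).tsum_eq, ENNReal.ofReal_tsum_of_nonneg _ (hf.add hg).summable]
        · refine ENNReal.tsum_le_tsum fun k => ENNReal.ofReal_le_ofReal ?_
          simp only [hx]
          split_ifs
          · have : 0 ≤ y * (1 / 2) ^ k := by positivity
            linarith
          · simp
        · intro k
          split_ifs <;> positivity
      have hd0 : 0 ≤ d := hc0.trans hcd.le
      have hleft : ENNReal.ofReal (d * y * (H N - H n₀)) ≤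
          ∑' k : ℕ, ENNReal.ofReal (M (k + 1) (fun i => x i.val)) := by
        refine le_trans ?_ (ENNReal.sum_le_tsum (Ico n₀ N))
        have hIco : H N - H n₀ = ∑ k ∈ Ico n₀ N, 1 / ((k : ℝ) + 1) :=
          (sum_Ico_eq_sub _ hN).symm
        rw [hIco, mul_sum, ENNReal.ofReal_sum_of_nonneg (fun k _ => by positivity)]
        refine sum_le_sum fun k hk => ENNReal.ofReal_le_ofReal ?_
        rw [mem_Ico] at hk
        refine (hlow k hk.1).trans_eq ?_
        congr 1
        funext i
        have : i.val < N := by omega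
        simp only [hx, this, if_true]
        ring
      have hH0 : 0 ≤ H N := sum_nonneg fun k _ => by positivity
      have hfin := hleft.trans (h.trans (mul_le_mul_right hright C))
      rw [← ENNReal.ofReal_toReal hCtop, ← hc, ← ENNReal.ofReal_mul hc0] at hfin
      have hnn : 0 ≤ c * (y * H N + y * 2) :=
        mul_nonneg hc0 (add_nonneg (mul_nonneg hy.le hH0) (by linarith))
      have hfin := (ENNReal.ofReal_le_ofReal_iff hnn).1 hfin
      have : y * ((d - c) * H N) ≤ y * (2 * c + d * H n₀) := by linarith
      exact le_of_mul_le_mul_left this hy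
    have hdiv := Real.tendsto_sum_range_one_div_nat_succ_atTop.const_mul_atTop (sub_pos.2 hcd)
    obtain ⟨N, hN, hN'⟩ := ((hdiv.eventually_gt_atTop (2 * c + d * H n₀)).and
      (Filter.eventually_ge_atTop n₀)).exists
    exact absurd (bound N hN') (not_le.2 hN)
end

section
/- Let M be a mean on ℝ₊ that is increasing, symmetric, repetition invariant, Jensen concave, and positively homogeneous. Then the limit lim_{n→∞} n · M(1, 1/2, …, 1/n) exists in the extended reals and equals sup_{y>0} liminf_{n→∞} (n/y) · M(y/1, y/2, …, y/n); in particular, when this limit is a finite number K, then ∑_{n=1}^∞ M(x_1,…,x_n) ≤ K · ∑_{n=1}^∞ x_n for every positive sequence (x_n), and K is the smallest constant with this property. -/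
/-!
Write `aₙ = n · M(1, 1/2, …, 1/n)`. By homogeneity every liminf under the supremum defining `K`
equals `liminf aₙ`, so everything is about the sequence `aₙ`.

*The limit exists.* Repeating entries brings the tuples `p / k` (`k ≤ p`) and `q / k` (`k ≤ q`) to
the common length `p q`; there the entries at position `t` are `p / (⌊t/q⌋ + 1)` and
`q / (⌊t/p⌋ + 1)`, and the first times `(p + q) / p` dominates the second. Hence
`a_q · p / (p + q) ≤ a_p` (`harmVal_almost_mono`), and letting `p → ∞` gives
`sup aₙ ≤ liminf aₙ`, so `aₙ → K` and `aₙ ≤ K` for all `n`.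

*The Hardy inequality.* Kedlaya's inequality
`∑_{k ≤ n} M(x₁, …, x_k) ≤ n · M(A₁, …, A_n)`, where `A_k` is the average of `x₁, …, x_k`, together
with `A_k ≤ (x₁ + ⋯ + x_n) / k`, bounds the left side by `(x₁ + ⋯ + x_n) · aₙ`. Kedlaya's inequality
is proved by induction: with `y_j = ((j - 1) A_{j-1} + (n - j + 1) A_j) / n` one has
`A_j = (n y_j + x_j) / (n + 1)` for `j ≤ n + 1`, so by concavity
`(n + 1) M(A₁, …, A_{n+1}) ≥ n M(y₁, …, y_{n+1}) + M(x₁, …, x_{n+1})`. Moreover `y` arises from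
`A₁, …, A_n`, each repeated `n + 1` times, by averaging over consecutive blocks of length `n`,
and averaging over blocks can only increase the mean (`block_avg`).

*Sharpness.* On the sequence that is harmonic up to `N` and geometric afterwards, the two sides of
the inequality are, up to bounded terms, at least `c log N` for any `c < K`, and at most `C log N`.
-/

open scoped ENNReal

/-- The standing assumptions on a mean, for tuples of length at least one. -/
structure IsGoodMean (M : (n : ℕ) → (Fin n → ℝ) → ℝ) : Prop where
  mean : ∀ (n : ℕ) (x : Fin (n + 1) → ℝ), (∀ i, 0 < x i) →
    Finset.univ.inf' Finset.univ_nonempty x ≤ M (n + 1) x ∧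
      M (n + 1) x ≤ Finset.univ.sup' Finset.univ_nonempty x
  symm : ∀ (n : ℕ) (σ : Equiv.Perm (Fin (n + 1))) (x : Fin (n + 1) → ℝ),
    (∀ i, 0 < x i) → M (n + 1) (x ∘ σ) = M (n + 1) x
  mono : ∀ (n : ℕ) (x y : Fin (n + 1) → ℝ), (∀ i, 0 < x i) → (∀ i, 0 < y i) →
    (∀ i, x i ≤ y i) → M (n + 1) x ≤ M (n + 1) y
  rep : ∀ (n m : ℕ) (x : Fin (n + 1) → ℝ), (∀ i, 0 < x i) →
    M ((n + 1) * (m + 1)) (fun i => x i.divNat) = M (n + 1) x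
  conc : ∀ (n : ℕ) (x y : Fin (n + 1) → ℝ), (∀ i, 0 < x i) → (∀ i, 0 < y i) →
    (M (n + 1) x + M (n + 1) y) / 2 ≤ M (n + 1) (fun i => (x i + y i) / 2)
  hom : ∀ (n : ℕ) (t : ℝ) (x : Fin (n + 1) → ℝ), 0 < t → (∀ i, 0 < x i) →
    M (n + 1) (fun i => t * x i) = t * M (n + 1) x

/-! ### Jensen's inequality with equal weights -/

theorem jensen_two_pow {E : Type*} [AddCommGroup E] [Module ℝ E] (S : Set E) (hS : Convex ℝ S)
    (f : E → ℝ) (hf : ∀ x ∈ S, ∀ y ∈ S, (f x + f y) / 2 ≤ f ((1 / 2 : ℝ) • (x + y)))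
    (k : ℕ) : ∀ v : ℕ → E, (∀ i, v i ∈ S) →
      ((1 / 2 ^ k : ℝ) • ∑ i ∈ Finset.range (2 ^ k), v i) ∈ S ∧
      (∑ i ∈ Finset.range (2 ^ k), f (v i)) / 2 ^ k ≤
        f ((1 / 2 ^ k : ℝ) • ∑ i ∈ Finset.range (2 ^ k), v i) := by
  induction k with
  | zero => intro v hv; simpa using hv 0
  | succ k ih =>
    intro v hv
    obtain ⟨h1, h2⟩ := ih v hv
    obtain ⟨h3, h4⟩ := ih (fun i => v (2 ^ k + i)) (fun i => hv _)
    have e : (1 / 2 ^ (k + 1) : ℝ) • ∑ i ∈ Finset.range (2 ^ (k + 1)), v i =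
        (1 / 2 : ℝ) • ((1 / 2 ^ k : ℝ) • ∑ i ∈ Finset.range (2 ^ k), v i +
          (1 / 2 ^ k : ℝ) • ∑ i ∈ Finset.range (2 ^ k), v (2 ^ k + i)) := by
      have e0 : 2 ^ (k + 1) = 2 ^ k + 2 ^ k := by rw [pow_succ, mul_two]
      rw [e0, Finset.sum_range_add, ← smul_add, smul_smul]
      congr 1
      rw [pow_succ]; field_simp
    rw [e]
    constructor
    · rw [smul_add]
      exact hS h1 h3 (by norm_num) (by norm_num) (by norm_num)
    · refine le_trans ?_ (hf _ h1 _ h3)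
      have e1 : (∑ i ∈ Finset.range (2 ^ (k + 1)), f (v i)) / 2 ^ (k + 1) =
          ((∑ i ∈ Finset.range (2 ^ k), f (v i)) / 2 ^ k +
            (∑ i ∈ Finset.range (2 ^ k), f (v (2 ^ k + i))) / 2 ^ k) / 2 := by
        have e0 : 2 ^ (k + 1) = 2 ^ k + 2 ^ k := by rw [pow_succ, mul_two]
        rw [e0, Finset.sum_range_add, pow_succ]
        field_simp
      rw [e1]
      linarith

/-- Midpoint concavity gives Jensen's inequality for any number of equally weighted points; no
continuity is needed. -/
theorem jensen_avg {E : Type*} [AddCommGroup E] [Module ℝ E] (S : Set E) (hS : Convex ℝ S)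
    (f : E → ℝ) (hf : ∀ x ∈ S, ∀ y ∈ S, (f x + f y) / 2 ≤ f ((1 / 2 : ℝ) • (x + y)))
    (N : ℕ) (hN : 0 < N) (v : ℕ → E) (hv : ∀ i, v i ∈ S) :
      (∑ i ∈ Finset.range N, f (v i)) / N ≤
        f ((1 / N : ℝ) • ∑ i ∈ Finset.range N, v i) := by
  have hN' : (0 : ℝ) < N := by exact_mod_cast hN
  set a := (1 / N : ℝ) • ∑ i ∈ Finset.range N, v i with ha
  have haS : a ∈ S := by
    rw [ha, Finset.smul_sum]
    refine hS.sum_mem (fun _ _ => by positivity) ?_ (fun i _ => hv i)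
    simp [hN'.ne']
  -- Pad the family by copies of its own average up to a power of two.
  obtain ⟨d, hd⟩ := Nat.exists_eq_add_of_le (Nat.lt_two_pow_self (n := N)).le
  have hlt (i) (hi : i ∈ Finset.range N) : i < N := Finset.mem_range.1 hi
  have h := (jensen_two_pow S hS f hf N (fun i => if i < N then v i else a)
    (fun i => by split_ifs <;> simp [hv, haS])).2
  have e1 : ∑ i ∈ Finset.range (2 ^ N), (if i < N then v i else a) = (2 ^ N : ℝ) • a := by
    have h2 : (2 ^ N : ℝ) = N + d := by exact_mod_cast hd
    rw [hd, Finset.sum_range_add, Finset.sum_congr rfl (fun i hi => if_pos (hlt i hi)), h2,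
      add_smul]
    congr 1
    · rw [ha, smul_smul]; field_simp; simp
    · simp [Nat.cast_smul_eq_nsmul]
  have e2 : ∑ i ∈ Finset.range (2 ^ N), f (if i < N then v i else a) =
      ∑ i ∈ Finset.range N, f (v i) + d * f a := by
    rw [hd, Finset.sum_range_add]
    congr 1
    · exact Finset.sum_congr rfl (fun i hi => by rw [if_pos (hlt i hi)])
    · simp
  rw [e1, e2, smul_smul, one_div_mul_cancel (by positivity), one_smul,
    div_le_iff₀ (by positivity)] at h
  have h2 : (2 ^ N : ℝ) = N + d := by exact_mod_cast hd
  rw [h2] at h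
  rw [div_le_iff₀ hN']
  linarith

/-! ### Averaging over blocks -/

namespace IsGoodMean

variable {M : (n : ℕ) → (Fin n → ℝ) → ℝ}

theorem pos (h : IsGoodMean M) (n : ℕ) (x : Fin (n + 1) → ℝ) (hx : ∀ i, 0 < x i) :
    0 < M (n + 1) x :=
  lt_of_lt_of_le ((Finset.lt_inf'_iff _).2 fun i _ => hx i) (h.mean n x hx).1

theorem jensen (h : IsGoodMean M) (n N : ℕ) (v : ℕ → Fin (n + 1) → ℝ)
    (hv : ∀ k i, 0 < v k i) :
    (∑ k ∈ Finset.range (N + 1), M (n + 1) (v k)) / (N + 1) ≤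
      M (n + 1) (fun i => (∑ k ∈ Finset.range (N + 1), v k i) / (N + 1)) := by
  have hS : Convex ℝ {x : Fin (n + 1) → ℝ | ∀ i, 0 < x i} := by
    have : {x : Fin (n + 1) → ℝ | ∀ i, 0 < x i} = Set.univ.pi fun _ => Set.Ioi 0 := by
      ext; simp
    rw [this]
    exact convex_pi fun _ _ => convex_Ioi 0
  have := jensen_avg _ hS (M (n + 1)) (fun x hx y hy => by
    convert h.conc n x y hx hy using 2
    ext i; simp; ring) (N + 1) N.succ_pos v hv
  push_cast at this
  convert this using 2
  ext i; simp; ring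

theorem cast_seq (M : (n : ℕ) → (Fin n → ℝ) → ℝ) {n m : ℕ} (e : n = m) (x : ℕ → ℝ) :
    M n (fun i => x i.val) = M m (fun i => x i.val) := by subst e; rfl

/-- Repetition invariance for tuples that are initial segments of a sequence. -/
theorem rep_seq (h : IsGoodMean M) (n m : ℕ) (x : ℕ → ℝ) (hx : ∀ i, 0 < x i) :
    M ((n + 1) * (m + 1)) (fun t => x (t.val / (m + 1))) = M (n + 1) (fun i => x i.val) :=
  h.rep n m (fun i => x i.val) (fun _ => hx _)

/-- Replacing every entry of a tuple by the average over its block of consecutive entries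
increases the mean: the averaged tuple is the average of the `b + 1` tuples obtained by rotating
all blocks simultaneously. -/
theorem block_avg (h : IsGoodMean M) (a b : ℕ) (B : ℕ → ℝ) (hB : ∀ i, 0 < B i) :
    M ((a + 1) * (b + 1)) (fun t => B t.val) ≤
      M (a + 1) (fun j => (∑ r ∈ Finset.range (b + 1), B (j.val * (b + 1) + r)) / (b + 1)) := by
  set y : ℕ → ℝ := fun j => (∑ r ∈ Finset.range (b + 1), B (j * (b + 1) + r)) / (b + 1) with hy
  have hypos (j) : 0 < y j :=
    div_pos (Finset.sum_pos (fun _ _ => hB _) ⟨0, by simp⟩) (by positivity)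
  obtain ⟨c, hc⟩ : ∃ c, (a + 1) * (b + 1) = c + 1 := ⟨_, (Nat.succ_pred (by positivity)).symm⟩
  rw [← h.rep_seq a b y hypos]
  rw [cast_seq M hc (fun t => y (t / (b + 1))), cast_seq M hc B]
  -- The simultaneous rotation of all blocks by `s`.
  let F : Fin (a + 1) × Fin (b + 1) ≃ Fin (c + 1) := finProdFinEquiv.trans (finCongr hc)
  let σ (s : ℕ) : Equiv.Perm (Fin (c + 1)) :=
    F.symm.trans (((Equiv.refl _).prodCongr (Equiv.addRight (Fin.ofNat (b + 1) s))).trans F)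
  have hF (p) : (F p).val = p.1.val * (b + 1) + p.2.val := by
    simp [F, finProdFinEquiv]; ring
  have hj := h.jensen c b (fun s => (fun t : Fin (c + 1) => B t.val) ∘ σ s) (fun _ _ => hB _)
  rw [Finset.sum_congr rfl (fun s _ => h.symm c (σ s) (fun t => B t.val) (fun _ => hB _))] at hj
  have hb : (b + 1 : ℝ) ≠ 0 := by positivity
  simp only [Finset.sum_const, Finset.card_range, nsmul_eq_mul] at hj
  push_cast at hj
  rw [mul_div_cancel_left₀ _ hb] at hj
  refine hj.trans (le_of_eq ?_)
  congr 1
  ext t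
  obtain ⟨⟨j, r⟩, rfl⟩ := F.surjective t
  have h1 : (F (j, r)).val / (b + 1) = j.val := by
    rw [hF]
    simp only
    rw [mul_comm, Nat.mul_add_div (by positivity), Nat.div_eq_of_lt r.isLt, add_zero]
  rw [h1, hy]
  simp only [Function.comp, σ, Equiv.trans_apply, Equiv.symm_apply_apply, Equiv.prodCongr_apply,
    Prod.map, Equiv.refl_apply, Equiv.coe_addRight, hF]
  congr 1
  rw [Finset.sum_range, Finset.sum_range]
  simp only [Fin.ofNat_val_eq_self]
  exact Equiv.sum_comp (Equiv.addLeft r) (fun i : Fin (b + 1) => B (j.val * (b + 1) + i.val))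

end IsGoodMean

/-! ### Kedlaya's inequality -/

/-- The running average `(x₀ + ⋯ + xₙ) / (n + 1)`. -/
noncomputable def runAvg (x : ℕ → ℝ) (n : ℕ) : ℝ := (∑ i ∈ Finset.range (n + 1), x i) / (n + 1)

theorem runAvg_pos {x : ℕ → ℝ} (hx : ∀ i, 0 < x i) (n : ℕ) : 0 < runAvg x n :=
  div_pos (Finset.sum_pos (fun _ _ => hx _) ⟨0, by simp⟩) (by positivity)

/-- The `j`-th block of length `n + 1` of the sequence in which every term of `A` is repeated
`n + 2` times consists of `j` copies of `A (j - 1)` followed by `n + 1 - j` copies of `A j`. -/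
theorem sum_block (A : ℕ → ℝ) (n j : ℕ) (hj : j ≤ n + 1) :
    ∑ r ∈ Finset.range (n + 1), A ((j * (n + 1) + r) / (n + 1 + 1)) =
      j * A (j - 1) + (n + 1 - j) * A j := by
  obtain ⟨d, hd⟩ := Nat.exists_eq_add_of_le hj
  have hd' : (n + 1 : ℝ) = j + d := by exact_mod_cast hd
  nth_rw 1 [hd]
  rw [Finset.sum_range_add, hd']
  congr 1
  · rw [Finset.sum_congr rfl (g := fun _ => A (j - 1))]
    · simp
    · intro r hr
      have hr := Finset.mem_range.1 hr
      congr 1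
      obtain ⟨i, rfl⟩ : ∃ i, j = i + 1 := ⟨j - 1, by omega⟩
      rw [Nat.div_eq_iff (by positivity)]
      have e1 : (i + 1) * (n + 1) = i * (n + 1) + (n + 1) := by ring
      have e2 : i * (n + 1 + 1) = i * (n + 1) + i := by ring
      constructor <;> simp only [Nat.add_sub_cancel] <;> omega
  · rw [Finset.sum_congr rfl (g := fun _ => A j)]
    · simp
    · intro r hr
      have hr := Finset.mem_range.1 hr
      congr 1
      rw [Nat.div_eq_iff (by positivity)]
      constructor
      · nlinarith
      · have : j * (n + 1 + 1) = j * (n + 1) + j := by ring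
        omega

/-- The identity behind the inductive step of Kedlaya's inequality: the running averages up to
`n + 1` are a convex combination of `x` and of block averages of the first `n + 1` running
averages. -/
theorem runAvg_step (x : ℕ → ℝ) (n j : ℕ) (hj : j ≤ n + 1) :
    runAvg x j = ((n + 1) * ((∑ r ∈ Finset.range (n + 1),
      runAvg x ((j * (n + 1) + r) / (n + 1 + 1))) / (n + 1)) + x j) / (n + 1 + 1) := by
  rw [sum_block _ n j hj, mul_div_cancel₀ _ (by positivity), eq_div_iff (by positivity)]
  have h1 : (j + 1) * runAvg x j = j * runAvg x (j - 1) + x j := by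
    unfold runAvg
    rw [mul_div_cancel₀ _ (by positivity), Finset.sum_range_succ]
    cases j with
    | zero => simp
    | succ i => push_cast [Nat.add_sub_cancel]; rw [mul_div_cancel₀ _ (by positivity)]
  linarith

namespace IsGoodMean

variable {M : (n : ℕ) → (Fin n → ℝ) → ℝ}

/-- Kedlaya's inequality: the average of the means of initial segments is at most the mean of the
running averages. -/
theorem kedlaya (h : IsGoodMean M) (x : ℕ → ℝ) (hx : ∀ i, 0 < x i) (n : ℕ) :
    ∑ k ∈ Finset.range (n + 1), M (k + 1) (fun i => x i.val) ≤
      (n + 1) * M (n + 1) (fun i => runAvg x i.val) := by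
  induction n with
  | zero =>
    have : (fun i : Fin 1 => x i.val) = fun i => runAvg x i.val := by
      ext i; simp [runAvg]
    simp only [zero_add, Finset.sum_range_one, this, Nat.cast_zero, one_mul, le_refl]
  | succ n ih =>
    have hA := runAvg_pos hx
    set y : ℕ → ℝ := fun j => (∑ r ∈ Finset.range (n + 1),
      runAvg x ((j * (n + 1) + r) / (n + 1 + 1))) / (n + 1) with hy
    have hypos (j) : 0 < y j :=
      div_pos (Finset.sum_pos (fun _ _ => hA _) ⟨0, by simp⟩) (by positivity)
    have h1 : M (n + 1) (fun i => runAvg x i.val) ≤ M (n + 1 + 1) (fun j => y j.val) := by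
      rw [← h.rep_seq n (n + 1) (runAvg x) hA,
        cast_seq M (mul_comm (n + 1) (n + 1 + 1)) (fun t => runAvg x (t / (n + 1 + 1)))]
      exact h.block_avg (n + 1) n (fun t => runAvg x (t / (n + 1 + 1))) (fun _ => hA _)
    have h2 := h.jensen (n + 1) (n + 1)
      (fun k i => if k < n + 1 then y i.val else x i.val)
      (fun k i => by split_ifs <;> simp [hx, hypos])
    have e1 : ∀ k ∈ Finset.range (n + 1), k < n + 1 := fun k => Finset.mem_range.1
    have e2 : (fun i : Fin (n + 1 + 1) => (∑ k ∈ Finset.range (n + 1 + 1),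
        if k < n + 1 then y i.val else x i.val) / (((n + 1 : ℕ) : ℝ) + 1)) =
        fun i => runAvg x i.val := by
      ext i
      rw [runAvg_step x n i.val (by omega), Finset.sum_range_succ,
        Finset.sum_congr rfl (fun k hk => if_pos (e1 k hk))]
      simp [hy]
    have e3 : ∑ k ∈ Finset.range (n + 1), M (n + 1 + 1)
        (fun i => if k < n + 1 then y i.val else x i.val) =
        ∑ k ∈ Finset.range (n + 1), M (n + 1 + 1) (fun i => y i.val) :=
      Finset.sum_congr rfl (fun k hk => by simp only [if_pos (e1 k hk)])
    rw [e2, Finset.sum_range_succ, e3, div_le_iff₀ (by positivity)] at h2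
    simp only [lt_irrefl, if_false, Finset.sum_const, Finset.card_range, nsmul_eq_mul] at h2
    rw [Finset.sum_range_succ]
    push_cast at h2 ⊢
    have : (n + 1 : ℝ) * M (n + 1) (fun i => runAvg x i.val) ≤
      (n + 1 : ℝ) * M (n + 1 + 1) (fun j => y j.val) := by gcongr
    linarith

end IsGoodMean

/-! ### The harmonic tuples and the Hardy constant -/

/-- The value `(n + 1) · M(1, 1/2, …, 1/(n + 1))` of the mean on a harmonic tuple, with the index
shifted so that the tuple is never empty. -/
noncomputable def harmVal (M : (n : ℕ) → (Fin n → ℝ) → ℝ) (n : ℕ) : ℝ :=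
  ((n : ℝ) + 1) * M (n + 1) (fun i => 1 / ((i : ℕ) + 1))

namespace IsGoodMean

variable {M : (n : ℕ) → (Fin n → ℝ) → ℝ}

theorem harmVal_pos (h : IsGoodMean M) (n : ℕ) : 0 < harmVal M n :=
  mul_pos (by positivity) (h.pos n _ fun i => by positivity)

theorem scaled_harmonic (h : IsGoodMean M) (n : ℕ) {y : ℝ} (hy : 0 < y) :
    ((n : ℝ) + 1) * M (n + 1) (fun i => y / ((i : ℕ) + 1)) = y * harmVal M n := by
  have := h.hom n y (fun i => 1 / ((i : ℕ) + 1)) hy (fun i => by positivity)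
  simp only [mul_one_div] at this
  rw [this, harmVal]; ring

/-- With `P = p + 1` and `Q = q + 1`, after repeating entries to the common length `P * Q` the
tuples defining both values become comparable entrywise up to the factor `(P + Q) / P`. -/
theorem harmVal_almost_mono (h : IsGoodMean M) (p q : ℕ) :
    harmVal M q * (((p : ℝ) + 1) / (p + 1 + (q + 1))) ≤ harmVal M p := by
  let u : ℕ → ℝ := fun i => 1 / ((i : ℝ) + 1)
  have hu (i) : 0 < u i := by positivity
  have hp : M (p + 1) (fun i => 1 / ((i : ℕ) + 1)) =
      M ((p + 1) * (q + 1)) (fun t => u (t.val / (q + 1))) := (h.rep_seq p q u hu).symm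
  have hq : M (q + 1) (fun i => 1 / ((i : ℕ) + 1)) =
      M ((p + 1) * (q + 1)) (fun t => u (t.val / (p + 1))) := by
    rw [cast_seq M (mul_comm (p + 1) (q + 1)) (fun t => u (t / (p + 1)))]
    exact (h.rep_seq q p u hu).symm
  obtain ⟨c, hc⟩ : ∃ c, (p + 1) * (q + 1) = c + 1 := ⟨_, (Nat.succ_pred (by positivity)).symm⟩
  rw [cast_seq M hc (fun t => u (t / (q + 1)))] at hp
  rw [cast_seq M hc (fun t => u (t / (p + 1)))] at hq
  unfold harmVal
  rw [hp, hq]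
  have key := h.mono c (fun t => ((q : ℝ) + 1) * u (t.val / (p + 1)))
    (fun t => ((p : ℝ) + 1 + (q + 1)) * u (t.val / (q + 1)))
    (fun t => mul_pos (by positivity) (hu _)) (fun t => mul_pos (by positivity) (hu _)) ?_
  · rw [h.hom c _ _ (by positivity) (fun _ => hu _),
      h.hom c _ _ (by positivity) (fun _ => hu _)] at key
    rw [mul_div_assoc', div_le_iff₀ (by positivity)]
    nlinarith
  · intro t
    simp only [u, mul_one_div]
    rw [div_le_div_iff₀ (by positivity) (by positivity)]
    have h1 : (q + 1) * (t.val / (q + 1)) ≤ t.val := Nat.mul_div_le _ _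
    have h2 : t.val < (p + 1) * (t.val / (p + 1) + 1) := Nat.lt_mul_div_succ _ (by positivity)
    have h3 : (q + 1) * (t.val / (q + 1) + 1) ≤ (p + 1 + (q + 1)) * (t.val / (p + 1) + 1) := by
      nlinarith [Nat.zero_le ((q + 1) * (t.val / (p + 1)))]
    exact_mod_cast h3

/-- Letting the finer index tend to infinity in `harmVal_almost_mono`. -/
theorem harmVal_le_liminf (h : IsGoodMean M) (q : ℕ) :
    ENNReal.ofReal (harmVal M q) ≤
      Filter.liminf (fun n => ENNReal.ofReal (harmVal M n)) Filter.atTop := by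
  have h1 : Filter.Tendsto (fun p : ℕ => ((p : ℝ) + 1) / (p + 1 + (q + 1))) Filter.atTop
      (nhds 1) := by
    have := (tendsto_natCast_div_add_atTop ((q : ℝ) + 1)).comp (Filter.tendsto_add_atTop_nat 1)
    simpa [Function.comp_def] using this
  have h2 := ENNReal.tendsto_ofReal (h1.const_mul (harmVal M q))
  rw [mul_one] at h2
  rw [← h2.liminf_eq]
  exact Filter.liminf_le_liminf
    (Filter.Eventually.of_forall fun p => ENNReal.ofReal_le_ofReal (h.harmVal_almost_mono p q))

/-- Kedlaya's inequality combined with the bound of each running average by `S / (i + 1)`, where `S`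
is the full partial sum. -/
theorem hardy_partial (h : IsGoodMean M) (x : ℕ → ℝ) (hx : ∀ i, 0 < x i) (n : ℕ) :
    ∑ k ∈ Finset.range (n + 1), M (k + 1) (fun i => x i.val) ≤
      (∑ k ∈ Finset.range (n + 1), x k) * harmVal M n := by
  have hS : 0 < ∑ k ∈ Finset.range (n + 1), x k := Finset.sum_pos (fun _ _ => hx _) ⟨0, by simp⟩
  rw [← h.scaled_harmonic n hS]
  refine (h.kedlaya x hx n).trans (mul_le_mul_of_nonneg_left ?_ (by positivity))
  refine h.mono n _ _ (fun i => runAvg_pos hx _) (fun i => by positivity) (fun i => ?_)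
  refine div_le_div_of_nonneg_right ?_ (by positivity)
  exact Finset.sum_le_sum_of_subset_of_nonneg
    (Finset.range_subset_range.2 (by omega)) (fun j _ _ => (hx j).le)

theorem hardy (h : IsGoodMean M) (K : ℝ≥0∞) (hK : ∀ n, ENNReal.ofReal (harmVal M n) ≤ K)
    (x : ℕ → ℝ) (hx : ∀ i, 0 < x i) :
    ∑' k : ℕ, ENNReal.ofReal (M (k + 1) (fun i => x i.val)) ≤
      K * ∑' k : ℕ, ENNReal.ofReal (x k) := by
  refine ENNReal.tsum_le_of_sum_range_le fun n => ?_
  refine (Finset.sum_le_sum_of_subset (Finset.range_subset_range.2 n.le_succ)).trans ?_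
  rw [← ENNReal.ofReal_sum_of_nonneg fun k _ => (h.pos k _ fun i => hx _).le]
  refine (ENNReal.ofReal_le_ofReal (h.hardy_partial x hx n)).trans ?_
  rw [mul_comm, ENNReal.ofReal_mul (h.harmVal_pos n).le,
    ENNReal.ofReal_sum_of_nonneg fun k _ => (hx k).le]
  exact mul_le_mul' (hK n) (ENNReal.sum_le_tsum _)

/-- Sharpness, tested on the sequence that is harmonic up to `N` and geometric afterwards. -/
theorem hardy_sharp (h : IsGoodMean M) (K : ℝ≥0∞)
    (hK : Filter.Tendsto (fun n => ENNReal.ofReal (harmVal M n)) Filter.atTop (nhds K))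
    (C : ℝ≥0∞)
    (hC : ∀ x : ℕ → ℝ, (∀ k, 0 < x k) →
      ∑' k : ℕ, ENNReal.ofReal (M (k + 1) (fun i => x i.val)) ≤
        C * ∑' k : ℕ, ENNReal.ofReal (x k)) : K ≤ C := by
  by_contra! hlt
  obtain ⟨c, hCc, hcK⟩ := ENNReal.lt_iff_exists_nnreal_btwn.1 hlt
  lift C to NNReal using (hlt.trans_le le_top).ne
  have hCc' : (C : ℝ) < c := by exact_mod_cast hCc
  obtain ⟨k₀, hk₀⟩ := Filter.eventually_atTop.1 (hK.eventually (lt_mem_nhds hcK))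
  have hk (k) (hk : k₀ ≤ k) : (c : ℝ) ≤ harmVal M k := by
    have := hk₀ k hk
    rw [← ENNReal.ofReal_coe_nnreal] at this
    exact ((ENNReal.ofReal_lt_ofReal_iff (h.harmVal_pos k)).1 this).le
  let H : ℕ → ℝ := fun N => ∑ k ∈ Finset.range N, 1 / ((k : ℝ) + 1)
  have key (N : ℕ) : c * (H N - H k₀) ≤ C * (H N + 2) := by
    let x : ℕ → ℝ := fun k => if k < N then 1 / ((k : ℝ) + 1) else (1 / 2) ^ k
    have hx (k) : 0 < x k := by simp only [x]; split_ifs <;> positivity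
    have h1 := hC x hx
    have h2 : ∑' k : ℕ, ENNReal.ofReal (x k) ≤ ENNReal.ofReal (H N + 2) := by
      refine ENNReal.tsum_le_of_sum_range_le fun n => ?_
      rw [← ENNReal.ofReal_sum_of_nonneg fun k _ => (hx k).le]
      refine ENNReal.ofReal_le_ofReal ?_
      have h3 : ∑ k ∈ Finset.range n, x k ≤
          ∑ k ∈ Finset.range n, (if k < N then 1 / ((k : ℝ) + 1) else 0) +
          ∑ k ∈ Finset.range n, (1 / 2 : ℝ) ^ k := by
        rw [← Finset.sum_add_distrib]
        refine Finset.sum_le_sum fun k _ => ?_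
        simp only [x]
        split_ifs
        · have : (0 : ℝ) ≤ (1 / 2) ^ k := by positivity
          linarith
        · simp
      have h4 : ∑ k ∈ Finset.range n, (if k < N then 1 / ((k : ℝ) + 1) else 0) ≤ H N := by
        rw [← Finset.sum_filter]
        refine Finset.sum_le_sum_of_subset_of_nonneg ?_ (fun k _ _ => by positivity)
        intro k hk
        simpa using (Finset.mem_filter.1 hk).2
      have h5 : ∑ k ∈ Finset.range n, (1 / 2 : ℝ) ^ k ≤ 2 := sum_geometric_two_le n
      linarith
    have h3 : ENNReal.ofReal (c * (H N - H k₀)) ≤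
        ∑' k : ℕ, ENNReal.ofReal (M (k + 1) (fun i => x i.val)) := by
      refine le_trans ?_ (ENNReal.sum_le_tsum (Finset.range N))
      rw [← ENNReal.ofReal_sum_of_nonneg fun k _ => (h.pos k _ fun i => hx _).le]
      refine ENNReal.ofReal_le_ofReal ?_
      have h4 : ∑ k ∈ Finset.range N, (if k₀ ≤ k then c * (1 / ((k : ℝ) + 1)) else 0) ≤
          ∑ k ∈ Finset.range N, M (k + 1) (fun i => x i.val) := by
        refine Finset.sum_le_sum fun k hkN => ?_
        split_ifs with hkk
        · have e : (fun i : Fin (k + 1) => x i.val) = fun i : Fin (k + 1) => 1 / (((i : ℕ) : ℝ) + 1) := by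
            ext i
            have := Finset.mem_range.1 hkN
            simp only [x]
            rw [if_pos (by omega)]
          have := hk k hkk
          rw [e, mul_one_div, div_le_iff₀ (by positivity)]
          rw [harmVal] at this
          linarith
        · exact (h.pos k _ fun i => hx _).le
      refine le_trans ?_ h4
      have h5 : H N = ∑ k ∈ Finset.range N, (if k₀ ≤ k then (1 / ((k : ℝ) + 1)) else 0) +
          ∑ k ∈ Finset.range N, (if k < k₀ then (1 / ((k : ℝ) + 1)) else 0) := by
        rw [← Finset.sum_add_distrib]
        refine Finset.sum_congr rfl fun k _ => ?_
        by_cases hkk : k₀ ≤ k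
        · simp [hkk]
        · simp [hkk, not_le.1 hkk]
      have h6 : ∑ k ∈ Finset.range N, (if k < k₀ then (1 / ((k : ℝ) + 1)) else 0) ≤ H k₀ := by
        rw [← Finset.sum_filter]
        refine Finset.sum_le_sum_of_subset_of_nonneg ?_ (fun k _ _ => by positivity)
        intro k hk
        simpa using (Finset.mem_filter.1 hk).2
      have h7 : ∑ k ∈ Finset.range N, (if k₀ ≤ k then c * (1 / ((k : ℝ) + 1)) else 0) =
          c * ∑ k ∈ Finset.range N, (if k₀ ≤ k then (1 / ((k : ℝ) + 1)) else 0) := by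
        rw [Finset.mul_sum]
        exact Finset.sum_congr rfl fun k _ => by simp
      rw [h7]
      exact mul_le_mul_of_nonneg_left (by linarith) c.2
    have hH : 0 ≤ H N := Finset.sum_nonneg fun k _ => by positivity
    have h4 := h3.trans (h1.trans (mul_le_mul_right h2 _))
    rw [← ENNReal.ofReal_coe_nnreal, ← ENNReal.ofReal_mul C.coe_nonneg] at h4
    exact (ENNReal.ofReal_le_ofReal_iff (mul_nonneg C.2 (by linarith))).1 h4
  have hdiv : Filter.Tendsto H Filter.atTop Filter.atTop :=
    Real.tendsto_sum_range_one_div_nat_succ_atTop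
  obtain ⟨N, hN⟩ := (hdiv.eventually_gt_atTop ((c * H k₀ + 2 * C) / (c - C))).exists
  rw [div_lt_iff₀ (by linarith)] at hN
  linarith [key N]

end IsGoodMean

/-- **Theorem 2 (Páles–Pasteczka), homogeneous case.** If `M` is an increasing, symmetric,
repetition invariant, Jensen concave and positively homogeneous mean on `ℝ₊`, then the limit
`lim_n n·M(1,1/2,…,1/n)` exists in the extended reals and equals
`K = sup_{y>0} liminf_n (n/y)·M(y/1,…,y/n)`; and when `K` is finite it satisfies the Hardy
inequality and is the smallest constant doing so. -/
theorem hardy_constant_of_concave_homogeneous_mean (M : (n : ℕ) → (Fin n → ℝ) → ℝ)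
    (hmean : ∀ (n : ℕ) (x : Fin (n + 1) → ℝ), (∀ i, 0 < x i) →
      Finset.univ.inf' Finset.univ_nonempty x ≤ M (n + 1) x ∧
        M (n + 1) x ≤ Finset.univ.sup' Finset.univ_nonempty x)
    (hsymm : ∀ (n : ℕ) (σ : Equiv.Perm (Fin (n + 1))) (x : Fin (n + 1) → ℝ),
      (∀ i, 0 < x i) → M (n + 1) (x ∘ σ) = M (n + 1) x)
    (hmono : ∀ (n : ℕ) (x y : Fin (n + 1) → ℝ), (∀ i, 0 < x i) → (∀ i, 0 < y i) →
      (∀ i, x i ≤ y i) → M (n + 1) x ≤ M (n + 1) y)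
    (hrep : ∀ (n m : ℕ) (x : Fin (n + 1) → ℝ), (∀ i, 0 < x i) →
      M ((n + 1) * (m + 1)) (fun i => x i.divNat) = M (n + 1) x)
    (hconc : ∀ (n : ℕ) (x y : Fin (n + 1) → ℝ), (∀ i, 0 < x i) → (∀ i, 0 < y i) →
      (M (n + 1) x + M (n + 1) y) / 2 ≤ M (n + 1) (fun i => (x i + y i) / 2))
    (hhom : ∀ (n : ℕ) (t : ℝ) (x : Fin (n + 1) → ℝ), 0 < t → (∀ i, 0 < x i) →
      M (n + 1) (fun i => t * x i) = t * M (n + 1) x)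
    (K : ℝ≥0∞)
    (hK : K = ⨆ y ∈ Set.Ioi (0 : ℝ),
      Filter.liminf
        (fun n : ℕ =>
          ENNReal.ofReal ((((n : ℝ) + 1) / y) * M (n + 1) (fun i => y / ((i : ℕ) + 1))))
        Filter.atTop) :
    Filter.Tendsto
        (fun n : ℕ =>
          ENNReal.ofReal (((n : ℝ) + 1) * M (n + 1) (fun i => 1 / ((i : ℕ) + 1))))
        Filter.atTop (nhds K) ∧
    (K ≠ ⊤ →
      (∀ x : ℕ → ℝ, (∀ k, 0 < x k) →
        ∑' k : ℕ, ENNReal.ofReal (M (k + 1) (fun i => x i.val)) ≤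
          K * ∑' k : ℕ, ENNReal.ofReal (x k)) ∧
      (∀ C : ℝ≥0∞, (∀ x : ℕ → ℝ, (∀ k, 0 < x k) →
          ∑' k : ℕ, ENNReal.ofReal (M (k + 1) (fun i => x i.val)) ≤
            C * ∑' k : ℕ, ENNReal.ofReal (x k)) → K ≤ C)) := by
  have h : IsGoodMean M := ⟨hmean, hsymm, hmono, hrep, hconc, hhom⟩
  have hK' : K = Filter.liminf (fun n => ENNReal.ofReal (harmVal M n)) Filter.atTop := by
    rw [hK]
    refine (biSup_congr fun y hy => ?_).trans (biSup_const ⟨1, Set.mem_Ioi.2 one_pos⟩)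
    have hy : 0 < y := hy
    congr 1
    ext n
    rw [div_mul_eq_mul_div, h.scaled_harmonic n hy, mul_div_cancel_left₀ _ hy.ne']
  have hle (n) : ENNReal.ofReal (harmVal M n) ≤ K := hK' ▸ h.harmVal_le_liminf n
  have hlim : Filter.Tendsto (fun n => ENNReal.ofReal (harmVal M n)) Filter.atTop (nhds K) :=
    tendsto_of_le_liminf_of_limsup_le hK'.le
      (Filter.limsup_le_of_le (by isBoundedDefault) (Filter.Eventually.of_forall hle))
  exact ⟨hlim, fun _ => ⟨fun x hx => h.hardy K hle x hx, fun C hC => h.hardy_sharp K hlim C hC⟩⟩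
end

section
/- Let f : ℝ₊ → ℝ be a strictly increasing concave function with f(1) = 0. Then for every n ≥ 1 and all positive reals x_1,…,x_n, there exists a unique y > 0 such that f(x_1/y) + f(x_2/y) + ⋯ + f(x_n/y) = 0; moreover this y satisfies min(x_1,…,x_n) ≤ y ≤ max(x_1,…,x_n). -/
/-!
The map `g y = ∑ i, f (x i / y)` is strictly decreasing on `(0, ∞)` because `f` is strictly
increasing, and continuous there because a concave function on an open interval is continuous.
At `y = min x` every quotient `x i / y` is at least `1`, so `g ≥ 0`; at `y = max x` every quotient
is at most `1`, so `g ≤ 0`. The intermediate value theorem gives a zero of `g` in `[min x, max x]`,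
and strict monotonicity makes it the only zero of `g`.
-/

/-- **Existence, uniqueness and mean property of homogeneous deviation means.**
For a strictly increasing concave `f : ℝ₊ → ℝ` with `f(1) = 0` and positive `x_1,…,x_n`,
there is a unique `y > 0` with `f(x_1/y)+⋯+f(x_n/y) = 0`, and it lies between
`min(x_1,…,x_n)` and `max(x_1,…,x_n)`. -/
theorem deviation_mean_exists_unique (f : ℝ → ℝ)
    (hmono : StrictMonoOn f (Set.Ioi 0)) (hconc : ConcaveOn ℝ (Set.Ioi 0) f)
    (hf1 : f 1 = 0) (n : ℕ) (x : Fin (n + 1) → ℝ) (hx : ∀ i, 0 < x i) :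
    (∃! y : ℝ, 0 < y ∧ ∑ i, f (x i / y) = 0) ∧
      ∀ y : ℝ, 0 < y → ∑ i, f (x i / y) = 0 →
        Finset.univ.inf' Finset.univ_nonempty x ≤ y ∧
          y ≤ Finset.univ.sup' Finset.univ_nonempty x := by
  set g : ℝ → ℝ := fun y => ∑ i, f (x i / y) with hg
  set a := Finset.univ.inf' Finset.univ_nonempty x with ha
  set b := Finset.univ.sup' Finset.univ_nonempty x with hb
  have hanti : StrictAntiOn g (Set.Ioi 0) := by
    intro y hy z hz hyz
    rw [Set.mem_Ioi] at hy hz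
    refine Finset.sum_lt_sum_of_nonempty Finset.univ_nonempty fun i _ => ?_
    exact hmono (div_pos (hx i) hz) (div_pos (hx i) hy) (div_lt_div_of_pos_left (hx i) hy hyz)
  have hcont : ContinuousOn g (Set.Ioi 0) := by
    refine continuousOn_finsetSum _ fun i _ => ?_
    refine (hconc.continuousOn isOpen_Ioi).comp
      (continuousOn_const.div continuousOn_id fun y hy => (Set.mem_Ioi.mp hy).ne') ?_
    exact fun y hy => div_pos (hx i) hy
  have ha0 : 0 < a := (Finset.lt_inf'_iff _).2 fun i _ => hx i
  have hal : ∀ i, a ≤ x i := fun i => Finset.inf'_le _ (Finset.mem_univ i)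
  have hbl : ∀ i, x i ≤ b := fun i => Finset.le_sup' _ (Finset.mem_univ i)
  have hab : a ≤ b := (hal 0).trans (hbl 0)
  have hb0 : 0 < b := ha0.trans_le hab
  have hga : 0 ≤ g a := Finset.sum_nonneg fun i _ => hf1 ▸
    hmono.monotoneOn (Set.mem_Ioi.2 one_pos) (div_pos (hx i) ha0) ((one_le_div ha0).2 (hal i))
  have hgb : g b ≤ 0 := Finset.sum_nonpos fun i _ => hf1 ▸
    hmono.monotoneOn (div_pos (hx i) hb0) (Set.mem_Ioi.2 one_pos) ((div_le_one hb0).2 (hbl i))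
  obtain ⟨y, hy, hgy⟩ := intermediate_value_Icc' hab
    (hcont.mono fun z hz => ha0.trans_le hz.1) ⟨hgb, hga⟩
  have hy0 : 0 < y := ha0.trans_le hy.1
  have huniq : ∀ z, 0 < z → g z = 0 → z = y := fun z hz hgz =>
    hanti.injOn hz hy0 (hgz.trans hgy.symm)
  refine ⟨⟨y, ⟨hy0, hgy⟩, fun z hz => huniq z hz.1 hz.2⟩, fun z hz hgz => ?_⟩
  rw [huniq z hz hgz]
  exact hy
end

section
/- Let f : ℝ₊ → ℝ be a strictly increasing concave function with f(1) = 0. Suppose y > 0 and v > 0 satisfy f(x_1/y) + ⋯ + f(x_n/y) = 0 and f(u_1/v) + ⋯ + f(u_n/v) = 0 for positive reals x_1,…,x_n and u_1,…,u_n. Then f((x_1+u_1)/(y+v)) + ⋯ + f((x_n+u_n)/(y+v)) ≥ 0; consequently, if w > 0 satisfies f((x_1+u_1)/w) + ⋯ + f((x_n+u_n)/w) = 0, then w ≥ y + v. In particular the homogeneous deviation mean E_f is Jensen concave (superadditive). -/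
/-!
The point `(xᵢ + uᵢ) / (y + v)` is the convex combination of `xᵢ / y` and `uᵢ / v` with weights
`y / (y + v)` and `v / (y + v)`, which do not depend on `i`. Concavity of `f` at each `i`, summed
over `i`, gives the first claim. If `w < y + v`, then strict monotonicity of `f` makes
`∑ f((xᵢ + uᵢ) / w)` strictly larger than this nonnegative sum, so `w` cannot be a zero.
-/

/-- **Jensen concavity (superadditivity) of homogeneous deviation means.**
If `f : ℝ₊ → ℝ` is strictly increasing, concave, `f(1) = 0`, and `y, v > 0` are the deviation
mean values of the positive tuples `x` and `u` respectively, then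
`∑ f((x_i+u_i)/(y+v)) ≥ 0`; consequently the deviation mean value `w` of `x + u`
satisfies `w ≥ y + v`. -/
theorem deviation_mean_superadditive (f : ℝ → ℝ)
    (hmono : StrictMonoOn f (Set.Ioi 0)) (hconc : ConcaveOn ℝ (Set.Ioi 0) f)
    (hf1 : f 1 = 0) (n : ℕ) (x u : Fin (n + 1) → ℝ)
    (hx : ∀ i, 0 < x i) (hu : ∀ i, 0 < u i)
    (y v : ℝ) (hy : 0 < y) (hv : 0 < v)
    (hxy : ∑ i, f (x i / y) = 0) (huv : ∑ i, f (u i / v) = 0) :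
    0 ≤ ∑ i, f ((x i + u i) / (y + v)) ∧
      ∀ w : ℝ, 0 < w → ∑ i, f ((x i + u i) / w) = 0 → y + v ≤ w := by
  have hyv : 0 < y + v := add_pos hy hv
  have key : 0 ≤ ∑ i, f ((x i + u i) / (y + v)) := by
    have h : ∀ i, y / (y + v) * f (x i / y) + v / (y + v) * f (u i / v)
        ≤ f ((x i + u i) / (y + v)) := by
      intro i
      have h1 := hconc.2 (Set.mem_Ioi.2 (div_pos (hx i) hy)) (Set.mem_Ioi.2 (div_pos (hu i) hv))
        (div_pos hy hyv).le (div_pos hv hyv).le (by field_simp)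
      have h2 : y / (y + v) * (x i / y) + v / (y + v) * (u i / v) = (x i + u i) / (y + v) := by
        field_simp
      simpa only [smul_eq_mul, h2] using h1
    calc (0 : ℝ) = ∑ i, (y / (y + v) * f (x i / y) + v / (y + v) * f (u i / v)) := by
          rw [Finset.sum_add_distrib, ← Finset.mul_sum, ← Finset.mul_sum, hxy, huv]; simp
      _ ≤ _ := Finset.sum_le_sum fun i _ => h i
  refine ⟨key, fun w hw h0 => ?_⟩
  by_contra! hlt
  have hs : ∑ i, f ((x i + u i) / (y + v)) < ∑ i, f ((x i + u i) / w) := by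
    -- The sum is nonempty (indexed by `Fin (n + 1)`), so termwise strictness is preserved.
    refine Finset.sum_lt_sum_of_nonempty Finset.univ_nonempty fun i _ => ?_
    have hp := add_pos (hx i) (hu i)
    exact hmono (Set.mem_Ioi.2 (div_pos hp hyv)) (Set.mem_Ioi.2 (div_pos hp hw))
      (div_lt_div_of_pos_left hp hw hlt)
  linarith
end

section
/- Let I be a real interval with inf I = 0 and let f : I → ℝ be twice continuously differentiable with nowhere vanishing first derivative. Set q := liminf_{x→0⁺} κ_f(x) and p := limsup_{x→0⁺} κ_f(x), where κ_f(x) = x·f''(x)/f'(x) + 1. Then for every x ∈ I: C(q) ≤ liminf_{n→∞} (n/x)·QA_f(x/1, x/2, …, x/n) ≤ limsup_{n→∞} (n/x)·QA_f(x/1, x/2, …, x/n) ≤ C(p). -/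
open scoped ENNReal

/-- The operator `κ_f(x) = x f''(x)/f'(x) + 1`. -/
noncomputable def kappaQA (f : ℝ → ℝ) (x : ℝ) : ℝ :=
  x * deriv (deriv f) x / deriv f x + 1

/-- The extended-real Hardy constant `C(p)` of the `p`-th power mean:
`C(−∞)=1`, `C(0)=e`, `C(p)=(1−p)^{-1/p}` for `p ∈ (−∞,0)∪(0,1)` and `C(p)=+∞` for `p ≥ 1`. -/
noncomputable def hardyCp (p : EReal) : ℝ≥0∞ :=
  if p = ⊥ then 1
  else if p = 0 then ENNReal.ofReal (Real.exp 1)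
  else if p < 1 then ENNReal.ofReal ((1 - p.toReal) ^ (-1 / p.toReal))
  else ⊤

/-- The quasi-arithmetic mean generated by `f` on the interval `I`. -/
noncomputable def quasiArith (f : ℝ → ℝ) (I : Set ℝ) {n : ℕ} (x : Fin n → ℝ) : ℝ :=
  Function.invFunOn f I ((∑ i, f (x i)) / (n : ℝ))

/-!
The mean of `f(x/1), …, f(x/n)` is compared with `f` at the point `y = c x/n`; as `f` may be
replaced by `-f`, assume `f' > 0`. Everything follows by comparing `f` with the power generators
`g(t) = t^s / s`, `s < 1`, `s ≠ 0`.

* The derivative of `r = f'/g'` has the sign of `κ_f - s` (`hasDerivAt_powRatio`). So if `κ_f ≤ s`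
  on `(0, δ]`, then `r` decreases there, `f` is concave as a function of `g`, and
  `f(u) - f(y) ≤ r(y) (g(u) - g(y))` by Cauchy's mean value theorem (`sub_le_powRatio_mul`). For
  `κ_f ≥ s` the inequality is reversed (`powRatio_mul_le_sub`).
* Since `∑_{i ≤ n} i^{-s} ∼ n^{1-s} / (1-s)` (`tendsto_sum_rpow_div`), the sum
  `∑_{i ≤ n} (g(x/i) - g(c x/n))` is asymptotic to `n^{1-s} x^s (g(C(s)) - g(c))`. It tends to `-∞`
  for `c > C(s)` and to `+∞` for `c < C(s)`, because `g` is increasing.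
* Only boundedly many of the points `x/i` lie above `δ`. They produce a bounded error, which the
  divergent sum absorbs (`eventually_sum_le`, `eventually_le_sum`). Hence the mean is eventually
  at most `c x/n` when `c > C(s)` and `s > p`, and at least `c x/n` when `c < C(s)` and `s < q`.

Finally, `C` is continuous, with the limits `1` at `-∞`, `e` at `0` and `+∞` at `1`, so `s` can be
taken close to `p` or `q` (`exists_const_lt`, `exists_lt_const`). In particular the logarithmic
generator is never needed. The remaining case `q = -∞` only says that a mean is at least the
smallest of its entries.
-/

section

open Filter Topology

noncomputable section

namespace QuasiArithHardy

/-! ### Power sums and power means of the harmonic points -/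

/-- `∑_{i ≤ n} i^{-p} ∼ n^{1-p} / (1-p)` for `p < 1`: the summands are asymptotically proportional
to the increments of `n^{1-p}`. -/
lemma tendsto_sum_rpow_div {p : ℝ} (hp : p < 1) :
    Tendsto (fun n : ℕ => (∑ i ∈ Finset.range n, ((i : ℝ) + 1) ^ (-p)) / (n : ℝ) ^ (1 - p))
      atTop (𝓝 (1 / (1 - p))) := by
  set e : ℝ := 1 - p with he
  have he0 : 0 < e := by linarith
  set g : ℕ → ℝ := fun i => ((i : ℝ) + 1) ^ e - (i : ℝ) ^ e with hg
  have hgpos : ∀ i, 0 < g i := fun i =>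
    sub_pos.2 (Real.rpow_lt_rpow (by positivity) (by linarith) he0)
  have hsum : ∀ n : ℕ, ∑ i ∈ Finset.range n, g i = (n : ℝ) ^ e := by
    intro n
    have := Finset.sum_range_sub (fun i : ℕ => (i : ℝ) ^ e) n
    simpa [hg, Real.zero_rpow he0.ne'] using this
  have hslope : Tendsto (fun i : ℕ => ((i : ℝ) + 1) * (1 - (1 - 1 / ((i : ℝ) + 1)) ^ e))
      atTop (𝓝 e) := by
    have hd : HasDerivAt (fun t : ℝ => t ^ e) e 1 := by
      simpa using Real.hasDerivAt_rpow_const (x := 1) (p := e) (Or.inl one_ne_zero)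
    have hd' := hd.tendsto_slope
    have hu : Tendsto (fun i : ℕ => 1 - 1 / ((i : ℝ) + 1)) atTop (𝓝[≠] 1) := by
      refine tendsto_nhdsWithin_iff.2 ⟨?_, Eventually.of_forall fun i => ?_⟩
      · simpa using tendsto_one_div_add_atTop_nhds_zero_nat.const_sub (1 : ℝ)
      · have : 0 < 1 / ((i : ℝ) + 1) := by positivity
        simp only [Set.mem_compl_iff, Set.mem_singleton_iff]
        linarith
    refine (hd'.comp hu).congr fun i => ?_
    have : ((i : ℝ) + 1) ≠ 0 := by positivity
    simp only [Function.comp, slope_def_field, Real.one_rpow]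
    field_simp
    ring
  have hratio : Tendsto (fun i : ℕ => e * ((i : ℝ) + 1) ^ (-p) / g i) atTop (𝓝 1) := by
    have h1 := (tendsto_const_nhds (x := e)).div hslope he0.ne'
    rw [div_self he0.ne'] at h1
    refine h1.congr fun i => ?_
    have hi : (0 : ℝ) < (i : ℝ) + 1 := by positivity
    have hgi : g i = ((i : ℝ) + 1) ^ (-p) * (((i : ℝ) + 1) * (1 - (1 - 1 / ((i : ℝ) + 1)) ^ e)) := by
      have e1 : (1 - 1 / ((i : ℝ) + 1)) = i / ((i : ℝ) + 1) := by field_simp; ring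
      have e2 : ((i : ℝ) + 1) ^ e = ((i : ℝ) + 1) ^ (-p) * ((i : ℝ) + 1) := by
        rw [he, sub_eq_neg_add, Real.rpow_add hi, Real.rpow_one]
      rw [e1, Real.div_rpow (by positivity) hi.le, ← mul_assoc, ← e2]
      have : ((i : ℝ) + 1) ^ e ≠ 0 := by positivity
      simp only [hg]
      field_simp
    rw [hgi, mul_comm e, mul_div_mul_left _ _ (by positivity)]
    rfl
  have hlo : (fun i : ℕ => e * ((i : ℝ) + 1) ^ (-p) - g i) =o[atTop] g := by
    rw [Asymptotics.isLittleO_iff_tendsto fun i hi => absurd hi (hgpos i).ne']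
    have := hratio.sub_const 1
    rw [sub_self] at this
    refine this.congr fun i => ?_
    rw [sub_div, div_self (hgpos i).ne']
  have htop : Tendsto (fun n : ℕ => ∑ i ∈ Finset.range n, g i) atTop atTop := by
    simp only [hsum]
    exact (tendsto_rpow_atTop he0).comp tendsto_natCast_atTop_atTop
  have h := (hlo.sum_range (fun i => (hgpos i).le) htop).tendsto_div_nhds_zero
  have h2 := (h.add_const 1).const_mul (1 / e)
  rw [zero_add, mul_one] at h2
  refine h2.congr' ?_
  filter_upwards [eventually_gt_atTop 0] with n hn
  have hn' : (0 : ℝ) < n := by exact_mod_cast hn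
  have : (n : ℝ) ^ e ≠ 0 := by positivity
  rw [Finset.sum_sub_distrib, hsum, ← Finset.mul_sum]
  field_simp
  ring

/-- The generator `t ↦ t^p / p` of the `p`-th power mean, `p ≠ 0`, normalised so that its derivative
is `t^{p-1}`. -/
def powGen (p t : ℝ) : ℝ := t ^ p / p

/-- The sum of `g(x/i) - g(c x/(n+1))` over `i = 1, …, n+1`, for `g = powGen p`. Its sign tells on
which side of `c x/(n+1)` the `p`-th power mean of `x/1, …, x/(n+1)` lies. -/
def powGap (p c x : ℝ) (n : ℕ) : ℝ :=
  ∑ i ∈ Finset.range (n + 1), (powGen p (x / ((i : ℝ) + 1)) - powGen p (c * x / ((n : ℝ) + 1)))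

lemma powGen_strictMono {p a b : ℝ} (hp : p ≠ 0) (ha : 0 < a) (hab : a < b) :
    powGen p a < powGen p b := by
  unfold powGen
  rcases hp.lt_or_gt with h | h
  · exact div_lt_div_of_neg_of_lt h (Real.rpow_lt_rpow_of_neg ha hab h)
  · exact div_lt_div_of_pos_right (Real.rpow_lt_rpow ha.le hab h) h

lemma powGap_eq (p : ℝ) {c x : ℝ} (hc : 0 < c) (hx : 0 < x) (n : ℕ) :
    powGap p c x n = ((n + 1 : ℕ) : ℝ) ^ (1 - p) * (x ^ p *
      (((∑ i ∈ Finset.range (n + 1), ((i : ℝ) + 1) ^ (-p)) / ((n + 1 : ℕ) : ℝ) ^ (1 - p)) / p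
        - c ^ p / p)) := by
  have hn : (0 : ℝ) < (n : ℝ) + 1 := by positivity
  have h1 : ∀ i : ℕ, powGen p (x / ((i : ℝ) + 1)) = x ^ p / p * ((i : ℝ) + 1) ^ (-p) := by
    intro i
    rw [powGen, Real.div_rpow hx.le (by positivity), Real.rpow_neg (by positivity)]
    ring
  have h2 : powGen p (c * x / ((n : ℝ) + 1)) = x ^ p * c ^ p / p * ((n : ℝ) + 1) ^ (-p) := by
    rw [powGen, Real.div_rpow (by positivity) hn.le, Real.mul_rpow hc.le hx.le,
      Real.rpow_neg hn.le]
    ring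
  have h3 : ((n : ℝ) + 1) ^ (1 - p) = ((n : ℝ) + 1) * ((n : ℝ) + 1) ^ (-p) := by
    rw [sub_eq_add_neg, Real.rpow_add hn, Real.rpow_one]
  have h4 : ((n : ℝ) + 1) ^ (1 - p) ≠ 0 := by positivity
  unfold powGap
  rw [Finset.sum_sub_distrib, Finset.sum_const, Finset.card_range, nsmul_eq_mul, h2]
  simp only [h1]
  rw [← Finset.mul_sum]
  push_cast
  generalize (∑ i ∈ Finset.range (n + 1), ((i : ℝ) + 1) ^ (-p)) = S
  rw [mul_sub, mul_sub, show x ^ p * c ^ p / p * ((n : ℝ) + 1) ^ (-p) = x ^ p * (c ^ p / p) * ((n : ℝ) + 1) ^ (-p) by ring]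
  have : ((n : ℝ) + 1) ^ (1 - p) * (x ^ p * (S / ((n : ℝ) + 1) ^ (1 - p) / p)) = x ^ p / p * S := by
    field_simp
  rw [this, h3]
  ring

/-- `c = (1-p)^{-1/p}` is where the limit of `powGap p c x n / n^{1-p}` vanishes. -/
lemma powGen_const {p : ℝ} (hp : p < 1) (hp0 : p ≠ 0) :
    powGen p ((1 - p) ^ (-1 / p)) = 1 / (1 - p) / p := by
  rw [powGen, ← Real.rpow_mul (by linarith), div_mul_cancel₀ _ hp0,
    Real.rpow_neg (by linarith), Real.rpow_one, one_div]

lemma tendsto_powGap_aux {p c x : ℝ} (hp : p < 1) :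
    Tendsto (fun n : ℕ => x ^ p *
      (((∑ i ∈ Finset.range (n + 1), ((i : ℝ) + 1) ^ (-p)) / ((n + 1 : ℕ) : ℝ) ^ (1 - p)) / p
        - c ^ p / p)) atTop (𝓝 (x ^ p * (1 / (1 - p) / p - c ^ p / p))) :=
  ((((tendsto_sum_rpow_div hp).comp (tendsto_add_atTop_nat 1)).div_const p).sub_const _).const_mul _

lemma tendsto_natCast_succ_rpow {p : ℝ} (hp : p < 1) :
    Tendsto (fun n : ℕ => ((n + 1 : ℕ) : ℝ) ^ (1 - p)) atTop atTop :=
  ((tendsto_rpow_atTop (sub_pos.2 hp)).comp tendsto_natCast_atTop_atTop).comp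
    (tendsto_add_atTop_nat 1)

lemma tendsto_powGap_atBot {p c x : ℝ} (hp : p < 1) (hp0 : p ≠ 0) (hx : 0 < x)
    (hc : (1 - p) ^ (-1 / p) < c) : Tendsto (powGap p c x) atTop atBot := by
  have hC : 0 < (1 - p) ^ (-1 / p) := Real.rpow_pos_of_pos (by linarith) _
  have h := powGen_strictMono hp0 hC hc
  rw [powGen_const hp hp0, powGen] at h
  have hneg : x ^ p * (1 / (1 - p) / p - c ^ p / p) < 0 :=
    mul_neg_of_pos_of_neg (by positivity) (by linarith)
  exact ((tendsto_natCast_succ_rpow hp).atTop_mul_neg hneg (tendsto_powGap_aux hp)).congr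
    fun n => (powGap_eq p (hC.trans hc) hx n).symm

lemma tendsto_powGap_atTop {p c x : ℝ} (hp : p < 1) (hp0 : p ≠ 0) (hx : 0 < x) (hc0 : 0 < c)
    (hc : c < (1 - p) ^ (-1 / p)) : Tendsto (powGap p c x) atTop atTop := by
  have h := powGen_strictMono hp0 hc0 hc
  rw [powGen_const hp hp0, powGen] at h
  have hpos : 0 < x ^ p * (1 / (1 - p) / p - c ^ p / p) :=
    mul_pos (by positivity) (by linarith)
  exact ((tendsto_natCast_succ_rpow hp).atTop_mul_pos hpos (tendsto_powGap_aux hp)).congr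
    fun n => (powGap_eq p hc0 hx n).symm

/-! ### Continuity of the Hardy constant -/

lemma const_eq_exp {p : ℝ} (hp : p < 1) :
    (1 - p) ^ (-1 / p) = Real.exp (-(Real.log (1 - p) / p)) := by
  rw [Real.rpow_def_of_pos (by linarith)]
  congr 1
  ring

lemma hardyCp_coe {p : ℝ} (hp : p < 1) (hp0 : p ≠ 0) :
    hardyCp p = ENNReal.ofReal ((1 - p) ^ (-1 / p)) := by
  have h : ((p : ℝ) : EReal) < 1 := by exact_mod_cast hp
  simp [hardyCp, h, hp0]

/-- Continuity of the Hardy constant at a finite exponent below `1`, including the exponent `0`. -/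
lemma tendsto_const {p : ℝ} (hp : p < 1) :
    Tendsto (fun s : ℝ => ENNReal.ofReal ((1 - s) ^ (-1 / s))) (𝓝[≠] p) (𝓝 (hardyCp p)) := by
  by_cases hp0 : p = 0
  · subst hp0
    have hC : hardyCp ((0 : ℝ) : EReal) = ENNReal.ofReal (Real.exp 1) := by simp [hardyCp]
    rw [hC]
    refine (ENNReal.continuous_ofReal.tendsto _).comp ?_
    have hd : HasDerivAt (fun t : ℝ => Real.log (1 - t)) (-1) 0 := by
      have := ((hasDerivAt_id (0 : ℝ)).const_sub 1).log (by simp)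
      simpa using this
    have h1 := (Real.continuous_exp.tendsto _).comp hd.tendsto_slope.neg
    rw [neg_neg] at h1
    refine h1.congr' ?_
    have : ∀ᶠ s : ℝ in 𝓝[≠] 0, s < 1 := nhdsWithin_le_nhds (Iio_mem_nhds (by norm_num))
    filter_upwards [this] with s hs
    rw [const_eq_exp hs]
    simp [slope_def_field]
  · rw [hardyCp_coe hp hp0]
    refine (ENNReal.continuous_ofReal.tendsto _).comp ?_
    have : ContinuousAt (fun s : ℝ => (1 - s) ^ (-1 / s)) p := by
      refine ContinuousAt.rpow (by fun_prop) ?_ (Or.inl (by linarith))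
      exact continuousAt_const.div continuousAt_id hp0
    exact this.tendsto.mono_left nhdsWithin_le_nhds

lemma tendsto_const_atBot :
    Tendsto (fun s : ℝ => ENNReal.ofReal ((1 - s) ^ (-1 / s))) atBot (𝓝 1) := by
  rw [← ENNReal.ofReal_one]
  refine (ENNReal.continuous_ofReal.tendsto _).comp ?_
  have h1 : Tendsto (fun u : ℝ => Real.log u / (1 * u + (-1))) atTop (𝓝 0) := by
    simpa using Real.tendsto_pow_log_div_mul_add_atTop 1 (-1) 1 one_ne_zero
  have h2 : Tendsto (fun s : ℝ => 1 - s) atBot atTop :=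
    tendsto_atTop_add_const_left _ (1 : ℝ) tendsto_neg_atBot_atTop
  have h3 := (Real.continuous_exp.tendsto _).comp (h1.comp h2)
  rw [Real.exp_zero] at h3
  refine h3.congr' ?_
  filter_upwards [eventually_lt_atBot (0 : ℝ)] with s hs
  rw [const_eq_exp (by linarith)]
  simp only [Function.comp]
  congr 1
  rw [show 1 * (1 - s) + -1 = -s by ring, div_neg]

lemma tendsto_const_one :
    Tendsto (fun s : ℝ => ENNReal.ofReal ((1 - s) ^ (-1 / s))) (𝓝[<] 1) (𝓝 ⊤) := by
  refine ENNReal.tendsto_ofReal_nhds_top.2 ?_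
  have h1 : Tendsto (fun s : ℝ => 1 - s) (𝓝[<] 1) (𝓝[>] 0) := by
    refine tendsto_nhdsWithin_iff.2 ⟨?_, ?_⟩
    · have : Tendsto (fun s : ℝ => 1 - s) (𝓝 1) (𝓝 (1 - 1)) :=
        (continuous_const.sub continuous_id).tendsto _
      rw [sub_self] at this
      exact this.mono_left nhdsWithin_le_nhds
    · filter_upwards [self_mem_nhdsWithin] with s hs
      exact sub_pos.2 (Set.mem_Iio.1 hs)
  have h2 : Tendsto (fun s : ℝ => s⁻¹) (𝓝[<] 1) (𝓝 1) := by
    have := (continuousAt_inv₀ (one_ne_zero (α := ℝ))).tendsto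
    rw [inv_one] at this
    exact this.mono_left nhdsWithin_le_nhds
  have h3 := (Real.tendsto_log_nhdsGT_zero.comp h1).atBot_mul_pos one_pos h2
  refine (Real.tendsto_exp_atTop.comp (tendsto_neg_atBot_atTop.comp h3)).congr' ?_
  filter_upwards [self_mem_nhdsWithin] with s hs
  rw [const_eq_exp hs]
  rfl

/-- Any number above `C(p)` is above `C(s)` for some nonzero `s` between `p` and `1`. -/
lemma exists_const_lt {p : EReal} {c : ℝ} (h : hardyCp p < ENNReal.ofReal c) :
    ∃ s : ℝ, p < s ∧ s < 1 ∧ s ≠ 0 ∧ (1 - s) ^ (-1 / s) < c := by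
  suffices ∃ s : ℝ, p < s ∧ s < 1 ∧ s ≠ 0 ∧
      ENNReal.ofReal ((1 - s) ^ (-1 / s)) < ENNReal.ofReal c by
    obtain ⟨s, h1, h2, h3, h4⟩ := this
    exact ⟨s, h1, h2, h3, (ENNReal.ofReal_lt_ofReal_iff_of_nonneg
      (Real.rpow_nonneg (by linarith) _)).1 h4⟩
  induction p with
  | bot =>
    have h' : (1 : ℝ≥0∞) < ENNReal.ofReal c := by simpa [hardyCp] using h
    obtain ⟨s, hs, hs0⟩ :=
      ((tendsto_const_atBot.eventually_lt_const h').and (eventually_lt_atBot (0 : ℝ))).exists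
    exact ⟨s, EReal.bot_lt_coe s, by linarith, hs0.ne, hs⟩
  | top => simp [hardyCp] at h
  | coe p =>
    have hp : p < 1 := by
      by_contra hp
      have h1 : ¬ ((p : ℝ) : EReal) < 1 := by exact_mod_cast hp
      have h0 : p ≠ 0 := by rintro rfl; simp at hp
      simp [hardyCp, h1, h0] at h
    have h1 := ((tendsto_const hp).mono_left
      (nhdsWithin_mono p (show Set.Ioi p ⊆ {p}ᶜ from fun s hs => (Set.mem_Ioi.1 hs).ne'))).eventually_lt_const h
    have h2 : ∀ᶠ s in 𝓝[>] p, s ∈ Set.Ioo p 1 := Ioo_mem_nhdsGT hp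
    have h3 : ∀ᶠ s in 𝓝[>] p, s ≠ 0 := by
      by_cases hp0 : p < 0
      · filter_upwards [Ioo_mem_nhdsGT hp0] with s hs using hs.2.ne
      · filter_upwards [self_mem_nhdsWithin] with s hs
        exact (lt_of_le_of_lt (not_lt.1 hp0) hs).ne'
    obtain ⟨s, h1, h2, h3⟩ := (h1.and (h2.and h3)).exists
    exact ⟨s, EReal.coe_lt_coe_iff.2 h2.1, h2.2, h3, h1⟩

/-- Any number below `C(p)`, `p ≠ -∞`, is below `C(s)` for some nonzero `s` smaller than both `p`
and `1`. -/
lemma exists_lt_const {p : EReal} (hb : p ≠ ⊥) {c : ℝ} (h : ENNReal.ofReal c < hardyCp p) :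
    ∃ s : ℝ, s < p ∧ s < 1 ∧ s ≠ 0 ∧ c < (1 - s) ^ (-1 / s) := by
  suffices ∃ s : ℝ, s < p ∧ s < 1 ∧ s ≠ 0 ∧
      ENNReal.ofReal c < ENNReal.ofReal ((1 - s) ^ (-1 / s)) by
    obtain ⟨s, h1, h2, h3, h4⟩ := this
    exact ⟨s, h1, h2, h3, (ENNReal.ofReal_lt_ofReal_iff
      (Real.rpow_pos_of_pos (by linarith) _)).1 h4⟩
  by_cases hp : p < 1
  · lift p to ℝ using ⟨(hp.trans (by exact EReal.coe_lt_top 1)).ne, hb⟩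
    have hp : p < 1 := by exact_mod_cast hp
    have h1 := ((tendsto_const hp).mono_left
      (nhdsWithin_mono p (show Set.Iio p ⊆ {p}ᶜ from fun s hs => (Set.mem_Iio.1 hs).ne))).eventually_const_lt h
    have h3 : ∀ᶠ s in 𝓝[<] p, s ≠ 0 := by
      by_cases hp0 : 0 < p
      · filter_upwards [Ioo_mem_nhdsLT hp0] with s hs using hs.1.ne'
      · filter_upwards [self_mem_nhdsWithin] with s hs
        exact (lt_of_lt_of_le hs (not_lt.1 hp0)).ne
    obtain ⟨s, h1, h2, h3⟩ := (h1.and ((eventually_mem_nhdsWithin).and h3)).exists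
    have h2 : s < p := h2
    exact ⟨s, EReal.coe_lt_coe_iff.2 h2, h2.trans hp, h3, h1⟩
  · have h1 := tendsto_const_one.eventually_const_lt (ENNReal.ofReal_lt_top (r := c))
    have h2 : ∀ᶠ s : ℝ in 𝓝[<] 1, s ∈ Set.Ioo 0 1 := Ioo_mem_nhdsLT zero_lt_one
    obtain ⟨s, h1, h2⟩ := (h1.and h2).exists
    refine ⟨s, lt_of_lt_of_le ?_ (not_lt.1 hp), h2.2, h2.1.ne', h1⟩
    exact_mod_cast h2.2

/-! ### Comparison of a generator with a power -/

/-- The ratio `f'(t) / g'(t)` for `g = powGen p`. -/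
def powRatio (f : ℝ → ℝ) (p t : ℝ) : ℝ := deriv f t * t ^ (1 - p)

lemma powRatio_pos {f : ℝ → ℝ} {p t : ℝ} (ht : 0 < t) (h : 0 < deriv f t) :
    0 < powRatio f p t := mul_pos h (Real.rpow_pos_of_pos ht _)

lemma differentiableAt_deriv {f : ℝ → ℝ} {t : ℝ} (h : ContDiffAt ℝ 2 f t) :
    DifferentiableAt ℝ (deriv f) t := by
  have h1 : ContDiffAt ℝ 1 (fderiv ℝ f) t := h.fderiv_right (by norm_num [one_add_one_eq_two])
  exact (h1.clm_apply contDiffAt_const).differentiableAt one_ne_zero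

/-- `κ_f - p` is, up to a factor with the sign of `f'`, the derivative of the ratio `f'/g'`. -/
lemma hasDerivAt_powRatio {f : ℝ → ℝ} {p t : ℝ} (h : ContDiffAt ℝ 2 f t) (ht : 0 < t)
    (hf : deriv f t ≠ 0) :
    HasDerivAt (powRatio f p) (deriv f t * t ^ (-p) * (kappaQA f t - p)) t := by
  have h1 := (differentiableAt_deriv h).hasDerivAt.mul
    (Real.hasDerivAt_rpow_const (x := t) (p := 1 - p) (Or.inl ht.ne'))
  refine h1.congr_deriv ?_
  have e1 : t ^ (1 - p) = t ^ (-p) * t := by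
    rw [sub_eq_neg_add, Real.rpow_add ht, Real.rpow_one]
  have e2 : 1 - p - 1 = -p := by ring
  rw [e2, e1, kappaQA]
  field_simp
  ring

section Comparison

variable {f : ℝ → ℝ} {p δ : ℝ}

lemma powRatio_antitoneOn (hf : ∀ t ∈ Set.Ioc 0 δ, ContDiffAt ℝ 2 f t)
    (hpos : ∀ t ∈ Set.Ioc 0 δ, 0 < deriv f t) (hκ : ∀ t ∈ Set.Ioc 0 δ, kappaQA f t ≤ p) :
    AntitoneOn (powRatio f p) (Set.Ioc 0 δ) := by
  have hd : ∀ t ∈ Set.Ioc 0 δ, _ := fun t ht =>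
    hasDerivAt_powRatio (p := p) (hf t ht) ht.1 (hpos t ht).ne'
  refine antitoneOn_of_deriv_nonpos (convex_Ioc 0 δ)
    (fun t ht => (hd t ht).continuousAt.continuousWithinAt)
    (fun t ht => (hd t (interior_subset ht)).differentiableAt.differentiableWithinAt) ?_
  intro t ht
  replace ht := interior_subset ht
  rw [(hd t ht).deriv]
  exact mul_nonpos_of_nonneg_of_nonpos
    (mul_nonneg (hpos t ht).le (Real.rpow_nonneg ht.1.le _)) (by linarith [hκ t ht])

lemma powRatio_monotoneOn (hf : ∀ t ∈ Set.Ioc 0 δ, ContDiffAt ℝ 2 f t)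
    (hpos : ∀ t ∈ Set.Ioc 0 δ, 0 < deriv f t) (hκ : ∀ t ∈ Set.Ioc 0 δ, p ≤ kappaQA f t) :
    MonotoneOn (powRatio f p) (Set.Ioc 0 δ) := by
  have hd : ∀ t ∈ Set.Ioc 0 δ, _ := fun t ht =>
    hasDerivAt_powRatio (p := p) (hf t ht) ht.1 (hpos t ht).ne'
  refine monotoneOn_of_deriv_nonneg (convex_Ioc 0 δ)
    (fun t ht => (hd t ht).continuousAt.continuousWithinAt)
    (fun t ht => (hd t (interior_subset ht)).differentiableAt.differentiableWithinAt) ?_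
  intro t ht
  replace ht := interior_subset ht
  rw [(hd t ht).deriv]
  exact mul_nonneg
    (mul_nonneg (hpos t ht).le (Real.rpow_nonneg ht.1.le _)) (by linarith [hκ t ht])

lemma hasDerivAt_powGen (hp0 : p ≠ 0) {t : ℝ} (ht : 0 < t) :
    HasDerivAt (powGen p) (t ^ (p - 1)) t := by
  refine ((Real.hasDerivAt_rpow_const (p := p) (Or.inl ht.ne')).div_const p).congr_deriv ?_
  field_simp

lemma exists_sub_eq_powRatio_mul (hf : ∀ t ∈ Set.Ioc 0 δ, ContDiffAt ℝ 2 f t) (hp0 : p ≠ 0)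
    {a b : ℝ} (ha : 0 < a) (hab : a < b) (hb : b ≤ δ) :
    ∃ ξ ∈ Set.Ioo a b, f b - f a = powRatio f p ξ * (powGen p b - powGen p a) := by
  have hd : ∀ t ∈ Set.Icc a b, HasDerivAt f (deriv f t) t := fun t ht =>
    ((hf t ⟨ha.trans_le ht.1, ht.2.trans hb⟩).differentiableAt two_ne_zero).hasDerivAt
  have hg : ∀ t ∈ Set.Icc a b, HasDerivAt (powGen p) (t ^ (p - 1)) t := fun t ht =>
    hasDerivAt_powGen hp0 (ha.trans_le ht.1)
  obtain ⟨ξ, hξ, h⟩ := exists_ratio_hasDerivAt_eq_ratio_slope f (deriv f) hab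
    (fun t ht => (hd t ht).continuousAt.continuousWithinAt)
    (fun t ht => hd t (Set.Ioo_subset_Icc_self ht)) (powGen p) (fun t => t ^ (p - 1))
    (fun t ht => (hg t ht).continuousAt.continuousWithinAt)
    (fun t ht => hg t (Set.Ioo_subset_Icc_self ht))
  refine ⟨ξ, hξ, ?_⟩
  have h1 : ξ ^ (p - 1) * ξ ^ (1 - p) = 1 := by
    rw [← Real.rpow_add (ha.trans hξ.1)]
    simp
  have h2 : f b - f a = (f b - f a) * ξ ^ (p - 1) * ξ ^ (1 - p) := by
    rw [mul_assoc, h1, mul_one]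
  rw [h2, ← h, powRatio]
  ring

/-- If `f'/g'` is decreasing then `f` is concave as a function of `g = powGen p`: the graph lies
below its tangent at `y`. -/
lemma sub_le_powRatio_mul (hf : ∀ t ∈ Set.Ioc 0 δ, ContDiffAt ℝ 2 f t) (hp0 : p ≠ 0)
    (h : AntitoneOn (powRatio f p) (Set.Ioc 0 δ)) {u y : ℝ} (hu : u ∈ Set.Ioc 0 δ)
    (hy : y ∈ Set.Ioc 0 δ) :
    f u - f y ≤ powRatio f p y * (powGen p u - powGen p y) := by
  rcases lt_trichotomy u y with huy | rfl | huy
  · obtain ⟨ξ, hξ, e⟩ := exists_sub_eq_powRatio_mul (p := p) hf hp0 hu.1 huy hy.2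
    have h1 := h ⟨hu.1.trans hξ.1, hξ.2.le.trans hy.2⟩ hy hξ.2.le
    nlinarith [powGen_strictMono hp0 hu.1 huy]
  · simp
  · obtain ⟨ξ, hξ, e⟩ := exists_sub_eq_powRatio_mul (p := p) hf hp0 hy.1 huy hu.2
    have h1 := h hy ⟨hy.1.trans hξ.1, hξ.2.le.trans hu.2⟩ hξ.1.le
    nlinarith [powGen_strictMono hp0 hy.1 huy]

/-- If `f'/g'` is increasing then `f` is convex as a function of `g = powGen p`: the graph lies
above its tangent at `y`. -/
lemma powRatio_mul_le_sub (hf : ∀ t ∈ Set.Ioc 0 δ, ContDiffAt ℝ 2 f t) (hp0 : p ≠ 0)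
    (h : MonotoneOn (powRatio f p) (Set.Ioc 0 δ)) {u y : ℝ} (hu : u ∈ Set.Ioc 0 δ)
    (hy : y ∈ Set.Ioc 0 δ) :
    powRatio f p y * (powGen p u - powGen p y) ≤ f u - f y := by
  rcases lt_trichotomy u y with huy | rfl | huy
  · obtain ⟨ξ, hξ, e⟩ := exists_sub_eq_powRatio_mul (p := p) hf hp0 hu.1 huy hy.2
    have h1 := h ⟨hu.1.trans hξ.1, hξ.2.le.trans hy.2⟩ hy hξ.2.le
    nlinarith [powGen_strictMono hp0 hu.1 huy]
  · simp
  · obtain ⟨ξ, hξ, e⟩ := exists_sub_eq_powRatio_mul (p := p) hf hp0 hy.1 huy hu.2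
    have h1 := h hy ⟨hy.1.trans hξ.1, hξ.2.le.trans hu.2⟩ hξ.1.le
    nlinarith [powGen_strictMono hp0 hy.1 huy]

end Comparison

section Sums

variable {f : ℝ → ℝ} {p δ x c : ℝ}

/-- Only boundedly many of the points `x/1, x/2, …` exceed `δ`. -/
lemma exists_index (x : ℝ) (hδ : 0 < δ) :
    ∃ M : ℕ, ∀ i : ℕ, M ≤ i → x / ((i : ℝ) + 1) ≤ δ := by
  obtain ⟨M, hM⟩ := exists_nat_ge (x / δ)
  refine ⟨M, fun i hi => ?_⟩
  have : (M : ℝ) ≤ i := by exact_mod_cast hi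
  rw [div_le_iff₀ (by positivity)]
  rw [div_le_iff₀ hδ] at hM
  nlinarith

lemma sum_indicator_le (M n : ℕ) {K : ℝ} (hK : 0 ≤ K) :
    ∑ i ∈ Finset.range n, (if i < M then K else 0) ≤ M * K := by
  rw [← Finset.sum_filter, Finset.sum_const, nsmul_eq_mul]
  refine mul_le_mul_of_nonneg_right ?_ hK
  have : (Finset.range n).filter (· < M) ⊆ Finset.range M := fun i hi => by
    simpa using (Finset.mem_filter.1 hi).2
  exact_mod_cast (Finset.card_le_card this).trans_eq (Finset.card_range M)

lemma eventually_point_mem (hδ : 0 < δ) (hx : 0 < x) (hc : 0 < c) :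
    ∀ᶠ n : ℕ in atTop, c * x / ((n : ℝ) + 1) ∈ Set.Ioc 0 δ := by
  have h : Tendsto (fun n : ℕ => c * x / ((n : ℝ) + 1)) atTop (𝓝 0) := by
    have := tendsto_one_div_add_atTop_nhds_zero_nat.const_mul (c * x)
    rw [mul_zero] at this
    exact this.congr fun n => by ring
  filter_upwards [h.eventually_lt_const hδ] with n hn
  exact ⟨by positivity, hn.le⟩

lemma div_succ_mem (hx : 0 < x) (i : ℕ) : x / ((i : ℝ) + 1) ∈ Set.Ioc 0 x := by
  refine ⟨by positivity, div_le_self hx.le ?_⟩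
  linarith [(Nat.cast_nonneg i : (0 : ℝ) ≤ i)]

/-- The upper estimate. The points above `δ`, where `κ_f ≤ p` is not available, contribute a bounded
error, which the divergence of `powGap` to `-∞` absorbs. -/
lemma eventually_sum_le (hf : ∀ t ∈ Set.Ioc 0 δ, ContDiffAt ℝ 2 f t) (hp : p < 1) (hp0 : p ≠ 0)
    (hδ : 0 < δ) (hδx : δ ≤ x) (hmono : MonotoneOn f (Set.Ioc 0 x))
    (hpos : ∀ t ∈ Set.Ioc 0 δ, 0 < deriv f t)
    (hκ : ∀ t ∈ Set.Ioc 0 δ, kappaQA f t ≤ p) (hc : (1 - p) ^ (-1 / p) < c) :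
    ∀ᶠ n : ℕ in atTop, ∑ i ∈ Finset.range (n + 1), f (x / ((i : ℝ) + 1)) ≤
      ((n : ℝ) + 1) * f (c * x / ((n : ℝ) + 1)) := by
  have hx : 0 < x := hδ.trans_le hδx
  have hc0 : 0 < c := (Real.rpow_pos_of_pos (by linarith) _).trans hc
  have hanti := powRatio_antitoneOn hf hpos hκ
  obtain ⟨M, hM⟩ := exists_index x hδ
  have hδm : δ ∈ Set.Ioc 0 δ := ⟨hδ, le_rfl⟩
  have hr : 0 < powRatio f p δ := powRatio_pos hδ (hpos δ hδm)
  set K := f x - f δ with hKdef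
  have hK : 0 ≤ K := sub_nonneg.2 (hmono ⟨hδ, hδx⟩ ⟨hx, le_rfl⟩ hδx)
  filter_upwards [eventually_point_mem hδ hx hc0,
    (tendsto_powGap_atBot hp hp0 hx hc).eventually_le_atBot (-(M * K / powRatio f p δ))]
    with n hy hgap
  set y := c * x / ((n : ℝ) + 1) with hydef
  have hterm : ∀ i ∈ Finset.range (n + 1), f (x / ((i : ℝ) + 1)) - f y ≤
      powRatio f p y * (powGen p (x / ((i : ℝ) + 1)) - powGen p y) +
        (if i < M then K else 0) := by
    intro i _
    have hui := div_succ_mem hx i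
    set u := x / ((i : ℝ) + 1)
    by_cases hu : u ≤ δ
    · have h1 := sub_le_powRatio_mul hf hp0 hanti ⟨hui.1, hu⟩ hy
      have h2 : (0 : ℝ) ≤ if i < M then K else 0 := by split_ifs <;> simp [hK]
      linarith
    · have hiM : i < M := by
        by_contra h
        exact hu (hM i (not_lt.1 h))
      rw [if_pos hiM]
      have h1 := sub_le_powRatio_mul hf hp0 hanti hδm hy
      have h2 := hmono hui ⟨hx, le_rfl⟩ hui.2
      have h3 := powGen_strictMono hp0 hδ (not_le.1 hu)
      have h4 := powRatio_pos (p := p) hy.1 (hpos y hy)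
      nlinarith
  have hsum := Finset.sum_le_sum hterm
  rw [Finset.sum_add_distrib, ← Finset.mul_sum, Finset.sum_sub_distrib, Finset.sum_const,
    Finset.card_range, nsmul_eq_mul] at hsum
  have hgapeq : ∑ i ∈ Finset.range (n + 1), (powGen p (x / ((i : ℝ) + 1)) - powGen p y)
    = powGap p c x n := rfl
  rw [hgapeq] at hsum
  push_cast at hsum
  have hind := sum_indicator_le M (n + 1) hK
  have hMK : 0 ≤ M * K / powRatio f p δ := by positivity
  have hry : powRatio f p δ ≤ powRatio f p y := hanti hy hδm hy.2
  have h5 : powRatio f p y * powGap p c x n ≤ powRatio f p δ * powGap p c x n :=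
    mul_le_mul_of_nonpos_right hry (by linarith)
  have h6 : powRatio f p δ * powGap p c x n ≤ -(M * K) := by
    calc _ ≤ powRatio f p δ * (-(M * K / powRatio f p δ)) :=
          mul_le_mul_of_nonneg_left hgap hr.le
      _ = -(M * K) := by field_simp
  linarith

/-- The lower estimate. The points above `δ` are replaced by `δ`, at the cost of a bounded multiple
of `powRatio f p y`, which the divergence of `powGap` to `+∞` absorbs. -/
lemma eventually_le_sum (hf : ∀ t ∈ Set.Ioc 0 δ, ContDiffAt ℝ 2 f t) (hp : p < 1) (hp0 : p ≠ 0)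
    (hδ : 0 < δ) (hδx : δ ≤ x) (hmono : MonotoneOn f (Set.Ioc 0 x))
    (hpos : ∀ t ∈ Set.Ioc 0 δ, 0 < deriv f t)
    (hκ : ∀ t ∈ Set.Ioc 0 δ, p ≤ kappaQA f t) (hc0 : 0 < c) (hc : c < (1 - p) ^ (-1 / p)) :
    ∀ᶠ n : ℕ in atTop, ((n : ℝ) + 1) * f (c * x / ((n : ℝ) + 1)) ≤
      ∑ i ∈ Finset.range (n + 1), f (x / ((i : ℝ) + 1)) := by
  have hx : 0 < x := hδ.trans_le hδx
  have hmon := powRatio_monotoneOn hf hpos hκ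
  obtain ⟨M, hM⟩ := exists_index x hδ
  have hδm : δ ∈ Set.Ioc 0 δ := ⟨hδ, le_rfl⟩
  set K := powGen p x - powGen p δ with hKdef
  have hgmono : ∀ {a b : ℝ}, 0 < a → a ≤ b → powGen p a ≤ powGen p b := fun ha hab =>
    hab.eq_or_lt.elim (fun h => h ▸ le_rfl) fun h => (powGen_strictMono hp0 ha h).le
  have hK : 0 ≤ K := sub_nonneg.2 (hgmono hδ hδx)
  filter_upwards [eventually_point_mem hδ hx hc0,
    (tendsto_powGap_atTop hp hp0 hx hc0 hc).eventually_ge_atTop (M * K)] with n hy hgap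
  set y := c * x / ((n : ℝ) + 1) with hydef
  have hry : 0 < powRatio f p y := powRatio_pos hy.1 (hpos y hy)
  have hterm : ∀ i ∈ Finset.range (n + 1), powRatio f p y *
      ((powGen p (x / ((i : ℝ) + 1)) - powGen p y) - (if i < M then K else 0)) ≤
        f (x / ((i : ℝ) + 1)) - f y := by
    intro i _
    have hui := div_succ_mem hx i
    set u := x / ((i : ℝ) + 1)
    by_cases hu : u ≤ δ
    · have h1 := powRatio_mul_le_sub hf hp0 hmon ⟨hui.1, hu⟩ hy
      have h2 : (0 : ℝ) ≤ if i < M then K else 0 := by split_ifs <;> simp [hK]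
      nlinarith
    · have hiM : i < M := by
        by_contra h
        exact hu (hM i (not_lt.1 h))
      rw [if_pos hiM]
      have h1 := powRatio_mul_le_sub hf hp0 hmon hδm hy
      have h2 := hmono ⟨hδ, hδx⟩ hui (not_le.1 hu).le
      have h3 := hgmono hui.1 hui.2
      nlinarith
  have hsum := Finset.sum_le_sum hterm
  rw [← Finset.mul_sum, Finset.sum_sub_distrib, Finset.sum_sub_distrib (g := fun _ => f y),
    Finset.sum_const, Finset.card_range, nsmul_eq_mul] at hsum
  have hgapeq : ∑ i ∈ Finset.range (n + 1), (powGen p (x / ((i : ℝ) + 1)) - powGen p y)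
    = powGap p c x n := rfl
  rw [hgapeq] at hsum
  push_cast at hsum
  have hind := sum_indicator_le M (n + 1) hK
  have h5 : 0 ≤ powRatio f p y *
      (powGap p c x n - ∑ i ∈ Finset.range (n + 1), if i < M then K else 0) :=
    mul_nonneg hry.le (by linarith)
  linarith

end Sums

/-! ### The interval, the inverse and the sign of the derivative -/

section Interval

variable {I : Set ℝ}

lemma Ioc_subset_of_sInf (hIint : I.OrdConnected) (hInf : sInf I = 0)
    {a : ℝ} (ha : a ∈ I) : Set.Ioc 0 a ⊆ I := by
  intro t ht
  obtain ⟨s, hs, hst⟩ := exists_lt_of_csInf_lt ⟨a, ha⟩ (hInf ▸ ht.1)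
  exact hIint.out hs ha ⟨hst.le, ht.2⟩

lemma exists_Ioc_of_eventually (hIpos : I ⊆ Set.Ioi 0) (hIint : I.OrdConnected)
    (hInf : sInf I = 0) {x : ℝ} (hx : x ∈ I) {P : ℝ → Prop} (h : ∀ᶠ t in 𝓝[I] 0, P t) :
    ∃ δ, 0 < δ ∧ δ ≤ x ∧ ∀ t ∈ Set.Ioc 0 δ, P t := by
  have hx0 : 0 < x := hIpos hx
  obtain ⟨ε, hε, hP⟩ := Metric.mem_nhdsWithin_iff.1 h
  refine ⟨min x (ε / 2), by positivity, min_le_left _ _, fun t ht => hP ⟨?_, ?_⟩⟩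
  · have := ht.2.trans (min_le_right _ _)
    rw [Metric.mem_ball, Real.dist_eq, sub_zero, abs_of_pos ht.1]
    linarith
  · exact Ioc_subset_of_sInf hIint hInf hx ⟨ht.1, ht.2.trans (min_le_left _ _)⟩

/-- The arithmetic mean of values of `f` on `I` is again such a value, so that the inverse in
`quasiArith` is a genuine one. -/
lemma quasiArith_spec (hIint : I.OrdConnected) {f : ℝ → ℝ} (hf : ContinuousOn f I) {n : ℕ}
    {u : Fin (n + 1) → ℝ} (hu : ∀ i, u i ∈ I) :
    quasiArith f I u ∈ I ∧ f (quasiArith f I u) = (∑ i, f (u i)) / ((n + 1 : ℕ) : ℝ) := by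
  have hconv : Convex ℝ (f '' I) :=
    Real.convex_iff_isPreconnected.2 (hIint.isPreconnected.image f hf)
  have hmem : (∑ i, f (u i)) / ((n + 1 : ℕ) : ℝ) ∈ f '' I := by
    have := hconv.sum_mem (t := Finset.univ) (w := fun _ : Fin (n + 1) => 1 / ((n + 1 : ℕ) : ℝ))
      (z := fun i => f (u i)) (fun _ _ => by positivity)
      (by rw [Finset.sum_const, Finset.card_univ, Fintype.card_fin, nsmul_eq_mul]; field_simp)
      (fun i _ => ⟨u i, hu i, rfl⟩)
    simp only [smul_eq_mul, ← Finset.mul_sum] at this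
    rwa [one_div_mul_eq_div] at this
  exact ⟨Function.invFunOn_mem hmem, Function.invFunOn_eq hmem⟩

lemma kappaQA_neg (f : ℝ → ℝ) : kappaQA (fun t => -f t) = kappaQA f := by
  have h : deriv (fun t => -f t) = fun t => -deriv f t := by
    funext t
    simp
  funext t
  unfold kappaQA
  rw [h]
  simp [neg_div_neg_eq]

/-- The generator may be replaced by its negative, so it may be taken increasing: this changes
neither `κ_f` nor the means. -/
lemma exists_increasing_generator (hIint : I.OrdConnected) {f : ℝ → ℝ}
    (hf : ∀ x ∈ I, ContDiffAt ℝ 2 f x) (hf' : ∀ x ∈ I, deriv f x ≠ 0) :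
    ∃ h : ℝ → ℝ, (∀ x ∈ I, ContDiffAt ℝ 2 h x) ∧ (∀ x ∈ I, 0 < deriv h x) ∧
      kappaQA h = kappaQA f ∧ ∀ (n : ℕ) (u : Fin (n + 1) → ℝ), (∀ i, u i ∈ I) →
        quasiArith f I u ∈ I ∧
          ((n : ℝ) + 1) * h (quasiArith f I u) = ∑ i, h (u i) := by
  have hc : ContinuousOn f I := fun x hx => (hf x hx).continuousAt.continuousWithinAt
  have hmean : ∀ (n : ℕ) (u : Fin (n + 1) → ℝ), (∀ i, u i ∈ I) →
      quasiArith f I u ∈ I ∧ ((n : ℝ) + 1) * f (quasiArith f I u) = ∑ i, f (u i) := by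
    intro n u hu
    obtain ⟨h1, h2⟩ := quasiArith_spec hIint hc hu
    refine ⟨h1, ?_⟩
    rw [h2]
    push_cast
    field_simp
  have hd : ∀ x ∈ I, HasDerivWithinAt f (deriv f x) I x := fun x hx =>
    ((hf x hx).differentiableAt two_ne_zero).hasDerivAt.hasDerivWithinAt
  rcases hasDerivWithinAt_forall_lt_or_forall_gt_of_forall_ne hIint.convex hd hf' with h | h
  · refine ⟨fun t => -f t, fun x hx => (hf x hx).neg, fun x hx => ?_, kappaQA_neg f, ?_⟩
    · simpa using h x hx
    · intro n u hu
      obtain ⟨h1, h2⟩ := hmean n u hu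
      refine ⟨h1, ?_⟩
      rw [Finset.sum_neg_distrib, ← h2]
      ring
  · exact ⟨f, hf, h, rfl, hmean⟩

end Interval

end QuasiArithHardy

end

end

/-! ### The estimates -/

open QuasiArithHardy Filter Topology

/-- **Theorem (main estimate for quasi-arithmetic means).** Let `I` be an interval with
`inf I = 0` and `f : I → ℝ` twice continuously differentiable with nowhere vanishing first
derivative; let `q`, `p` be the lower and upper limits of `κ_f` at `0⁺`. Then for every
`x ∈ I`,
`C(q) ≤ liminf_n (n/x)·QA_f(x/1,…,x/n) ≤ limsup_n (n/x)·QA_f(x/1,…,x/n) ≤ C(p)`. -/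
theorem quasiArith_hardy_estimates (I : Set ℝ) (hIpos : I ⊆ Set.Ioi 0)
    (hIint : I.OrdConnected) (hInf : sInf I = 0) (hne : I.Nonempty)
    (f : ℝ → ℝ) (hf : ∀ x ∈ I, ContDiffAt ℝ 2 f x) (hf' : ∀ x ∈ I, deriv f x ≠ 0) :
    ∀ x ∈ I,
      hardyCp (Filter.liminf (fun t => (kappaQA f t : EReal)) (nhdsWithin 0 I)) ≤
        Filter.liminf
          (fun n : ℕ =>
            ENNReal.ofReal
              ((((n : ℝ) + 1) / x) *
                quasiArith f I (fun i : Fin (n + 1) => x / ((i : ℕ) + 1))))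
          Filter.atTop ∧
      Filter.liminf
          (fun n : ℕ =>
            ENNReal.ofReal
              ((((n : ℝ) + 1) / x) *
                quasiArith f I (fun i : Fin (n + 1) => x / ((i : ℕ) + 1))))
          Filter.atTop ≤
        Filter.limsup
          (fun n : ℕ =>
            ENNReal.ofReal
              ((((n : ℝ) + 1) / x) *
                quasiArith f I (fun i : Fin (n + 1) => x / ((i : ℕ) + 1))))
          Filter.atTop ∧
      Filter.limsup
          (fun n : ℕ =>
            ENNReal.ofReal
              ((((n : ℝ) + 1) / x) *
                quasiArith f I (fun i : Fin (n + 1) => x / ((i : ℕ) + 1))))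
          Filter.atTop ≤
        hardyCp (Filter.limsup (fun t => (kappaQA f t : EReal)) (nhdsWithin 0 I)) := by
  intro x hx
  have hx0 : 0 < x := hIpos hx
  obtain ⟨h, hh, hh', hκ, hmean⟩ := exists_increasing_generator hIint hf hf'
  have hsub : Set.Ioc 0 x ⊆ I := Ioc_subset_of_sInf hIint hInf hx
  have hstrict : StrictMonoOn h I :=
    strictMonoOn_of_deriv_pos hIint.convex
      (fun t ht => (hh t ht).continuousAt.continuousWithinAt)
      fun t ht => hh' t (interior_subset ht)
  set y : ℕ → ℝ := fun n => quasiArith f I (fun i : Fin (n + 1) => x / ((i : ℕ) + 1)) with hy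
  have hyI : ∀ n, y n ∈ I := fun n => (hmean n _ fun i => hsub (div_succ_mem hx0 i)).1
  have hym : ∀ n : ℕ, ((n : ℝ) + 1) * h (y n) =
      ∑ i ∈ Finset.range (n + 1), h (x / ((i : ℝ) + 1)) := fun n => by
    rw [(hmean n _ fun i => hsub (div_succ_mem hx0 i)).2, Finset.sum_range]
  have hpt : ∀ {c : ℝ}, 0 < c → ∀ᶠ n : ℕ in atTop, c * x / ((n : ℝ) + 1) ∈ I := fun hc =>
    (eventually_point_mem hx0 hx0 hc).mono fun n hn => hsub hn
  refine ⟨?_, liminf_le_limsup, ?_⟩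
  · by_cases hb : liminf (fun t => (kappaQA f t : EReal)) (𝓝[I] 0) = ⊥
    · -- For `q = -∞` the bound says that a mean is at least the smallest entry `x/(n+1)`.
      rw [hb, hardyCp, if_pos rfl]
      refine le_liminf_of_le (by isBoundedDefault) (Eventually.of_forall fun n => ?_)
      rw [ENNReal.one_le_ofReal]
      have hn : (0 : ℝ) < (n : ℝ) + 1 := by positivity
      have hmem := hsub (div_succ_mem hx0 n)
      have hle : x / ((n : ℝ) + 1) ≤ y n := by
        rw [← hstrict.le_iff_le hmem (hyI n), ← mul_le_mul_iff_right₀ hn, hym]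
        have : ∑ i ∈ Finset.range (n + 1), h (x / ((n : ℝ) + 1)) ≤
            ∑ i ∈ Finset.range (n + 1), h (x / ((i : ℝ) + 1)) := by
          refine Finset.sum_le_sum fun i hi => ?_
          rw [hstrict.le_iff_le hmem (hsub (div_succ_mem hx0 i))]
          have : (i : ℝ) ≤ n := by exact_mod_cast Nat.lt_succ_iff.1 (Finset.mem_range.1 hi)
          gcongr
        simpa using this
      calc (1 : ℝ) = ((n : ℝ) + 1) / x * (x / ((n : ℝ) + 1)) := by field_simp
        _ ≤ ((n : ℝ) + 1) / x * y n := by gcongr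
    · refine le_of_forall_lt_imp_le_of_dense fun a ha => ?_
      lift a to NNReal using ha.ne_top
      rcases eq_or_ne a 0 with rfl | ha0
      · simp
      have hc0 : (0 : ℝ) < a := by exact_mod_cast pos_iff_ne_zero.2 ha0
      rw [← ENNReal.ofReal_coe_nnreal] at ha ⊢
      obtain ⟨s, hsp, hs1, hs0, hsc⟩ := exists_lt_const hb ha
      obtain ⟨δ, hδ, hδx, hδκ⟩ := exists_Ioc_of_eventually hIpos hIint hInf hx
        (eventually_lt_of_lt_liminf hsp)
      have hδI : Set.Ioc 0 δ ⊆ I := fun t ht => hsub ⟨ht.1, ht.2.trans hδx⟩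
      have hev := eventually_le_sum (fun t ht => hh t (hδI ht)) hs1 hs0 hδ hδx
        (hstrict.monotoneOn.mono hsub) (fun t ht => hh' t (hδI ht))
        (fun t ht => by rw [hκ]; exact (EReal.coe_lt_coe_iff.1 (hδκ t ht)).le) hc0 hsc
      refine le_liminf_of_le (by isBoundedDefault) ?_
      filter_upwards [hev, hpt hc0] with n hn hmem
      have hn0 : (0 : ℝ) < (n : ℝ) + 1 := by positivity
      rw [← hym, mul_le_mul_iff_right₀ hn0, hstrict.le_iff_le hmem (hyI n),
        div_le_iff₀ hn0] at hn
      refine ENNReal.ofReal_le_ofReal ?_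
      rw [div_mul_eq_mul_div, le_div_iff₀ hx0]
      linarith
  · refine le_of_forall_gt_imp_ge_of_dense fun a ha => ?_
    rcases eq_or_ne a ⊤ with rfl | hat
    · exact le_top
    lift a to NNReal using hat
    rw [← ENNReal.ofReal_coe_nnreal] at ha ⊢
    obtain ⟨s, hsp, hs1, hs0, hsc⟩ := exists_const_lt ha
    have hc0 : (0 : ℝ) < a := (Real.rpow_pos_of_pos (by linarith) _).trans hsc
    obtain ⟨δ, hδ, hδx, hδκ⟩ := exists_Ioc_of_eventually hIpos hIint hInf hx
      (eventually_lt_of_limsup_lt hsp)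
    have hδI : Set.Ioc 0 δ ⊆ I := fun t ht => hsub ⟨ht.1, ht.2.trans hδx⟩
    have hev := eventually_sum_le (fun t ht => hh t (hδI ht)) hs1 hs0 hδ hδx
      (hstrict.monotoneOn.mono hsub) (fun t ht => hh' t (hδI ht))
      (fun t ht => by rw [hκ]; exact (EReal.coe_lt_coe_iff.1 (hδκ t ht)).le) hsc
    refine limsup_le_of_le (by isBoundedDefault) ?_
    filter_upwards [hev, hpt hc0] with n hn hmem
    have hn0 : (0 : ℝ) < (n : ℝ) + 1 := by positivity
    rw [← hym, mul_le_mul_iff_right₀ hn0, hstrict.le_iff_le (hyI n) hmem,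
      le_div_iff₀ hn0] at hn
    refine ENNReal.ofReal_le_ofReal ?_
    rw [div_mul_eq_mul_div, div_le_iff₀ hx0]
    linarith
end

section
/- Let I be a real interval with inf I = 0 and let f : I → ℝ be twice continuously differentiable with nowhere vanishing first derivative. Set q := liminf_{x→0⁺} κ_f(x), where κ_f(x) = x·f''(x)/f'(x) + 1. If C ≥ 0 is a constant such that ∑_{n=1}^∞ QA_f(x_1,…,x_n) ≤ C·∑_{n=1}^∞ x_n for every sequence (x_n) in I, then C ≥ C(q). -/
/-!
Test the Hardy inequality on the sequence `c, c/2, c/3, …, c/N`, continued by a geometric tail,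
where `c ∈ I` is close to `0`. The right-hand side is then `C * (c * H_N + O(1))`, with `H_N` the
harmonic number. Hence, as soon as `QA_f (c, c/2, …, c/n) ≥ K * c / n` for all large `n`, the
divergence of the harmonic series gives `K ≤ C` (`le_of_eventually_quasiArith`).

Such bounds come from comparing `QA_f` with a power mean. Let `p < q`, `p < 1`, `p ≠ 0`, so that
`κ_f ≥ p` on some `(0, c]`. Up to replacing `f` by `-f`, assume `f' > 0`. Then `f'(t) t^{1-p}`, the
ratio of the derivatives of `f` and `g(t) = t^p / p`, is monotone on `(0, c]`, so that
`f(x) - f(m) ≥ f'(m) m^{1-p} (g(x) - g(m))` for all `x, m`. Summing over the entries,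
`f(m)` is at most the average of the `f(x_i)` as soon as `g(m)` is at most the average of the
`g(x_i)` (`tangent_sum`). For `x_i = c / i` and `m = K c / n` with `K < C(p)` the latter holds for
large `n`, because `∑_{k ≤ n} k^{-p} ∼ n^{1-p} / (1-p)` (`eventually_power_sum`).

So `C(p) ≤ C` for all admissible `p < q`, and `p → q⁻` gives the claim; in the case `q ≥ 1` the
values `C(p)` are unbounded as `p → 1⁻`, which is absurd. In the case `q = -∞` the bound with
`K = 1` only says that a mean is at least the least of its entries.
-/

open scoped ENNReal

open Filter Topology Set

/-- If the quasi-arithmetic means of `c, c/2, …, c/(n+1)` are eventually at least `K c/(n+1)`, then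
`K` is a lower bound for every constant in the Hardy inequality. -/
lemma le_of_eventually_quasiArith (I : Set ℝ) (f : ℝ → ℝ) (C : ℝ) (hC : 0 ≤ C)
    (hHardy : ∀ x : ℕ → ℝ, (∀ k, x k ∈ I) →
      ∑' k : ℕ,
          ENNReal.ofReal (quasiArith f I (fun i : Fin (k + 1) => x i.val)) ≤
        ENNReal.ofReal C * ∑' k : ℕ, ENNReal.ofReal (x k))
    (c : ℝ) (hc : 0 < c) (hcI : Ioc 0 c ⊆ I) (K : ℝ) (hK : 0 ≤ K)
    (h : ∀ᶠ n : ℕ in atTop,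
      K * c / (n + 1) ≤ quasiArith f I (fun i : Fin (n + 1) => c / ((i.val : ℝ) + 1))) :
    K ≤ C := by
  obtain ⟨N0, hN0⟩ := eventually_atTop.1 h
  set H : ℕ → ℝ := fun N => ∑ i ∈ Finset.range N, 1 / ((i : ℝ) + 1) with hH
  have key : ∀ N, N0 ≤ N → K * (H N - H N0) ≤ C * (H N + 2) := by
    intro N hN
    let x : ℕ → ℝ := fun k => if k < N then c / ((k : ℝ) + 1) else c * (1 / 2) ^ k
    have hxI : ∀ k, x k ∈ I := by
      intro k
      apply hcI
      simp only [x]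
      split_ifs
      · exact ⟨by positivity, div_le_self hc.le (by linarith [(Nat.cast_nonneg k : (0 : ℝ) ≤ k)])⟩
      · refine ⟨by positivity, ?_⟩
        have : ((1 : ℝ) / 2) ^ k ≤ 1 := pow_le_one₀ (by norm_num) (by norm_num)
        nlinarith
    let y : ℕ → ℝ := fun k => (if k < N then c / ((k : ℝ) + 1) else 0) + c * (1 / 2) ^ k
    have hxy : ∀ k, x k ≤ y k := by
      intro k
      have : 0 ≤ c * (1 / 2 : ℝ) ^ k := by positivity
      simp only [x, y]
      split_ifs <;> linarith
    have hy0 : ∀ k, 0 ≤ y k := fun k => by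
      simp only [y]
      split_ifs <;> positivity
    have hysum : HasSum y (c * H N + c * 2) := by
      refine HasSum.add ?_ (hasSum_geometric_two.mul_left c)
      have := hasSum_sum_of_ne_finset_zero (L := .unconditional ℕ) (s := Finset.range N)
        (f := fun k : ℕ => if k < N then c / ((k : ℝ) + 1) else 0) (by
          intro b hb
          rw [Finset.mem_range] at hb
          simp [hb])
      convert this using 1
      rw [hH, Finset.mul_sum]
      refine Finset.sum_congr rfl fun i hi => ?_
      rw [if_pos (Finset.mem_range.1 hi)]
      ring
    have h1 : ∑' k : ℕ, ENNReal.ofReal (x k) ≤ ENNReal.ofReal (c * H N + c * 2) := by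
      rw [← hysum.tsum_eq, ENNReal.ofReal_tsum_of_nonneg hy0 hysum.summable]
      exact ENNReal.tsum_le_tsum fun k => ENNReal.ofReal_le_ofReal (hxy k)
    have h2 : ENNReal.ofReal (∑ n ∈ Finset.Ico N0 N, K * c / ((n : ℝ) + 1)) ≤
        ∑' k : ℕ, ENNReal.ofReal (quasiArith f I (fun i : Fin (k + 1) => x i.val)) := by
      rw [ENNReal.ofReal_sum_of_nonneg (fun i _ => by positivity)]
      refine le_trans (Finset.sum_le_sum fun n hn => ?_) (ENNReal.sum_le_tsum (Finset.Ico N0 N))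
      rw [Finset.mem_Ico] at hn
      apply ENNReal.ofReal_le_ofReal
      have heq : (fun i : Fin (n + 1) => x i.val) = fun i => c / ((i.val : ℝ) + 1) := by
        funext i
        have : i.val < N := by have := i.2; omega
        simp [x, this]
      rw [heq]
      exact hN0 n hn.1
    have h3 := (h2.trans (hHardy x hxI)).trans (mul_le_mul_right h1 _)
    have hHN : 0 ≤ H N := Finset.sum_nonneg fun i _ => by positivity
    rw [← ENNReal.ofReal_mul hC, ENNReal.ofReal_le_ofReal_iff (by positivity)] at h3
    have h4 : ∑ n ∈ Finset.Ico N0 N, K * c / ((n : ℝ) + 1) = c * (K * (H N - H N0)) := by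
      rw [hH, ← Finset.sum_Ico_eq_sub _ hN, Finset.mul_sum, Finset.mul_sum]
      exact Finset.sum_congr rfl fun i _ => by ring
    rw [h4, show C * (c * H N + c * 2) = c * (C * (H N + 2)) by ring] at h3
    exact le_of_mul_le_mul_left h3 hc
  by_contra! hlt
  have hdiv : Tendsto H atTop atTop := Real.tendsto_sum_range_one_div_nat_succ_atTop
  obtain ⟨N, hN, hNN⟩ := ((hdiv.eventually_gt_atTop
    ((2 * C + K * H N0) / (K - C))).and (eventually_ge_atTop N0)).exists
  rw [div_lt_iff₀ (by linarith)] at hN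
  nlinarith [key N hNN]

/-- Tangent-line inequality for `F` relative to `t ^ p / p`, summed over a finite family. The
hypothesis `hκ` is the bound `p ≤ κ_F` with denominators cleared. -/
lemma tangent_sum (F F' F'' : ℝ → ℝ) (p : ℝ) (hp : p ≠ 0) (c : ℝ)
    (h1 : ∀ t ∈ Ioc 0 c, HasDerivAt F (F' t) t)
    (h2 : ∀ t ∈ Ioc 0 c, HasDerivAt F' (F'' t) t)
    (hpos : ∀ t ∈ Ioc 0 c, 0 < F' t)
    (hκ : ∀ t ∈ Ioc 0 c, (p - 1) * F' t ≤ t * F'' t)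
    {n : ℕ} (x : Fin n → ℝ) (hx : ∀ i, x i ∈ Ioc 0 c) (m : ℝ) (hm : m ∈ Ioc 0 c)
    (hsum : (n : ℝ) * (m ^ p / p) ≤ ∑ i, x i ^ p / p) :
    n * F m ≤ ∑ i, F (x i) := by
  have hconv : Convex ℝ (Ioc 0 c) := convex_Ioc 0 c
  -- `h = F' / g'` with `g t = t ^ p / p`
  set h : ℝ → ℝ := fun t => F' t * t ^ (1 - p) with hh
  have hd : ∀ t ∈ Ioc 0 c,
      HasDerivAt h (F'' t * t ^ (1 - p) + F' t * ((1 - p) * t ^ (1 - p - 1))) t := fun t ht =>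
    (h2 t ht).mul (Real.hasDerivAt_rpow_const (Or.inl ht.1.ne'))
  have hmono : MonotoneOn h (Ioc 0 c) := by
    refine monotoneOn_of_hasDerivWithinAt_nonneg hconv
      (fun t ht => (hd t ht).continuousAt.continuousWithinAt)
      (fun t ht => (hd t (interior_subset ht)).hasDerivWithinAt) fun t ht => ?_
    have ht := interior_subset ht
    have e : t ^ (1 - p) = t ^ (1 - p - 1) * t := by
      rw [← Real.rpow_add_one ht.1.ne']; ring_nf
    have h0 : 0 < t ^ (1 - p - 1) := Real.rpow_pos_of_pos ht.1 _
    have := mul_nonneg h0.le (sub_nonneg.2 (hκ t ht))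
    rw [e]; nlinarith
  set φ : ℝ → ℝ := fun t => F t - h m * (t ^ p / p) with hφ
  have hdφ : ∀ t ∈ Ioc 0 c, HasDerivAt φ (t ^ (p - 1) * (h t - h m)) t := by
    intro t ht
    have := (h1 t ht).sub
      (((Real.hasDerivAt_rpow_const (p := p) (Or.inl ht.1.ne')).div_const p).const_mul (h m))
    have e : t ^ (p - 1) * t ^ (1 - p) = 1 := by
      rw [← Real.rpow_add ht.1]; simp
    have e2 : t ^ (p - 1) * h t = F' t := by
      simp only [hh]; rw [mul_left_comm, e, mul_one]
    have e3 : t ^ (p - 1) * (h t - h m) = F' t - h m * (p * t ^ (p - 1) / p) := by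
      rw [mul_sub, e2]
      field_simp
    rw [e3]
    exact this
  -- `φ` attains its minimum over `(0, c]` at `m`
  have hmin : ∀ t ∈ Ioc 0 c, φ m ≤ φ t := by
    intro t ht
    rcases le_total m t with hmt | htm
    · have hsub : Icc m t ⊆ Ioc 0 c := fun s hs => ⟨hm.1.trans_le hs.1, hs.2.trans ht.2⟩
      refine monotoneOn_of_hasDerivWithinAt_nonneg (convex_Icc m t)
        (fun s hs => (hdφ s (hsub hs)).continuousAt.continuousWithinAt)
        (fun s hs => (hdφ s (hsub (interior_subset hs))).hasDerivWithinAt) (fun s hs => ?_)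
        (left_mem_Icc.2 hmt) (right_mem_Icc.2 hmt) hmt
      have hs := interior_subset hs
      exact mul_nonneg (Real.rpow_nonneg (hsub hs).1.le _)
        (sub_nonneg.2 (hmono hm (hsub hs) hs.1))
    · have hsub : Icc t m ⊆ Ioc 0 c := fun s hs => ⟨ht.1.trans_le hs.1, hs.2.trans hm.2⟩
      refine antitoneOn_of_hasDerivWithinAt_nonpos (convex_Icc t m)
        (fun s hs => (hdφ s (hsub hs)).continuousAt.continuousWithinAt)
        (fun s hs => (hdφ s (hsub (interior_subset hs))).hasDerivWithinAt) (fun s hs => ?_)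
        (left_mem_Icc.2 htm) (right_mem_Icc.2 htm) htm
      have hs := interior_subset hs
      exact mul_nonpos_of_nonneg_of_nonpos (Real.rpow_nonneg (hsub hs).1.le _)
        (sub_nonpos.2 (hmono (hsub hs) hm hs.2))
  have hS : ∑ _i : Fin n, φ m ≤ ∑ i, φ (x i) := Finset.sum_le_sum fun i _ => hmin _ (hx i)
  simp only [hφ, Finset.sum_sub_distrib, Finset.sum_const, Finset.card_univ, Fintype.card_fin,
    nsmul_eq_mul, ← Finset.mul_sum] at hS
  have hm0 : 0 < h m := mul_pos (hpos m hm) (Real.rpow_pos_of_pos hm.1 _)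
  nlinarith [mul_le_mul_of_nonneg_left hsum hm0.le]

/-- Bernoulli's inequality as a comparison of `a ^ (-p)` with an increment of `t ^ (1 - p)`; the
division by `p` makes one inequality serve for both signs of `p`. -/
lemma bernoulli_step (p : ℝ) (hp : p ≠ 0) (hp1 : p < 1) (a : ℝ) (ha : 0 < a) :
    ((a + 1) ^ (1 - p) - a ^ (1 - p)) / (p * (1 - p)) ≤ a ^ (-p) / p := by
  have hr : 0 < 1 - p := by linarith
  have e1 : (a + 1) ^ (1 - p) = a ^ (1 - p) * (1 + 1 / a) ^ (1 - p) := by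
    rw [← Real.mul_rpow ha.le (by positivity)]; congr 1; field_simp
  have e2 : a ^ (1 - p) = a ^ (-p) * a := by
    rw [← Real.rpow_add_one ha.ne']; ring_nf
  have e3 : a ^ (-p) / p = (a ^ (1 - p) * ((1 - p) * (1 / a))) / (p * (1 - p)) := by
    rw [e2]; field_simp
  have hapos : 0 < a ^ (1 - p) := Real.rpow_pos_of_pos ha _
  have h1a : (-1 : ℝ) ≤ 1 / a := by have : 0 < 1 / a := by positivity
                                    linarith
  rw [e3, e1]
  rcases hp.lt_or_gt with hneg | hpos
  · have hB := one_add_mul_self_le_rpow_one_add h1a (p := 1 - p) (by linarith)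
    apply div_le_div_of_nonpos_of_le (mul_neg_of_neg_of_pos hneg hr).le
    nlinarith [mul_le_mul_of_nonneg_left hB hapos.le]
  · have hB := rpow_one_add_le_one_add_mul_self h1a (p := 1 - p) hr.le (by linarith)
    apply div_le_div_of_nonneg_right _ (mul_pos hpos hr).le
    nlinarith [mul_le_mul_of_nonneg_left hB hapos.le]

lemma power_sum_ge (p : ℝ) (hp : p ≠ 0) (hp1 : p < 1) (n : ℕ) :
    (((n : ℝ) + 1) ^ (1 - p) - 1) / (p * (1 - p)) ≤
      ∑ k ∈ Finset.range n, ((k : ℝ) + 1) ^ (-p) / p := by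
  induction n with
  | zero => simp
  | succ n ih =>
    rw [Finset.sum_range_succ]
    have := bernoulli_step p hp hp1 ((n : ℝ) + 1) (by positivity)
    push_cast
    have e : (((n : ℝ) + 1 + 1) ^ (1 - p) - 1) / (p * (1 - p)) =
      (((n : ℝ) + 1) ^ (1 - p) - 1) / (p * (1 - p)) +
        (((n : ℝ) + 1 + 1) ^ (1 - p) - ((n : ℝ) + 1) ^ (1 - p)) / (p * (1 - p)) := by ring
    linarith

/-- For `K < C(p)`, the power mean of exponent `p` of `1, 1/2, …, 1/n` eventually exceeds `K/n`. -/
lemma eventually_power_sum (p : ℝ) (hp : p ≠ 0) (hp1 : p < 1) (K : ℝ) (hK : 0 < K)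
    (hKC : K < (1 - p) ^ (-1 / p)) :
    ∀ᶠ n : ℕ in atTop, (n : ℝ) * ((K / n) ^ p / p) ≤
      ∑ k ∈ Finset.range n, (1 / ((k : ℝ) + 1)) ^ p / p := by
  have hr : 0 < 1 - p := by linarith
  have hKp : K ^ p / p < 1 / (p * (1 - p)) := by
    have e : ((1 - p) ^ (-1 / p)) ^ p = (1 - p)⁻¹ := by
      rw [← Real.rpow_mul hr.le, div_mul_cancel₀ _ hp, Real.rpow_neg_one]
    have e2 : 1 / (p * (1 - p)) = (1 - p)⁻¹ / p := by field_simp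
    rw [e2, ← e]
    rcases hp.lt_or_gt with hneg | hpos
    · exact div_lt_div_of_neg_of_lt hneg (Real.rpow_lt_rpow_of_neg hK hKC hneg)
    · exact div_lt_div_of_pos_right (Real.rpow_lt_rpow hK.le hKC hpos) hpos
  have hlim : Tendsto (fun n : ℕ => ((1 + 1 / (n : ℝ)) ^ (1 - p) - (n : ℝ) ^ (-(1 - p))) /
      (p * (1 - p))) atTop (𝓝 (1 / (p * (1 - p)))) := by
    have a1 : Tendsto (fun n : ℕ => (1 + 1 / (n : ℝ)) ^ (1 - p)) atTop (𝓝 1) := by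
      have := (tendsto_one_div_atTop_nhds_zero_nat (𝕜 := ℝ)).const_add 1
      simpa using this.rpow_const (p := 1 - p) (Or.inr hr.le)
    have a2 : Tendsto (fun n : ℕ => (n : ℝ) ^ (-(1 - p))) atTop (𝓝 0) :=
      (tendsto_rpow_neg_atTop hr).comp tendsto_natCast_atTop_atTop
    simpa using (a1.sub a2).div_const (p * (1 - p))
  filter_upwards [hlim.eventually (lt_mem_nhds hKp), eventually_gt_atTop 0] with n hn hn0
  have hn0' : (0 : ℝ) < n := by exact_mod_cast hn0
  have hnr : 0 < (n : ℝ) ^ (1 - p) := Real.rpow_pos_of_pos hn0' _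
  have e1 : (n : ℝ) * ((K / n) ^ p / p) = (n : ℝ) ^ (1 - p) * (K ^ p / p) := by
    rw [Real.div_rpow hK.le hn0'.le, Real.rpow_sub hn0', Real.rpow_one]; ring
  have e2 : (n : ℝ) ^ (1 - p) * (((1 + 1 / (n : ℝ)) ^ (1 - p) - (n : ℝ) ^ (-(1 - p))) /
      (p * (1 - p))) = (((n : ℝ) + 1) ^ (1 - p) - 1) / (p * (1 - p)) := by
    rw [← mul_div_assoc, mul_sub, ← Real.mul_rpow hn0'.le (by positivity),
      ← Real.rpow_add hn0']
    congr 2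
    · congr 1; field_simp
    · simp
  have e3 : ∀ k : ℕ, (1 / ((k : ℝ) + 1)) ^ p = ((k : ℝ) + 1) ^ (-p) := fun k => by
    rw [one_div, Real.inv_rpow (by positivity), Real.rpow_neg (by positivity)]
  simp only [e3]
  refine le_trans ?_ (power_sum_ge p hp hp1 n)
  rw [e1, ← e2]
  exact mul_le_mul_of_nonneg_left hn.le hnr.le

/-- The average of `f` over points of `I` is a value of `f` on `I`, so that the inverse in
`quasiArith` is taken at a point of the image. -/
lemma quasiArith_spec (I : Set ℝ) (hIint : I.OrdConnected) (f : ℝ → ℝ) (hf : ContinuousOn f I)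
    {n : ℕ} (x : Fin (n + 1) → ℝ) (hx : ∀ i, x i ∈ I) :
    quasiArith f I x ∈ I ∧
      ((n + 1 : ℕ) : ℝ) * f (quasiArith f I x) = ∑ i, f (x i) := by
  have hconv : Convex ℝ (f '' I) :=
    (hIint.isPreconnected.image f hf).ordConnected.convex
  have hn : ((n + 1 : ℕ) : ℝ) ≠ 0 := by positivity
  have hmem : (∑ i, f (x i)) / ((n + 1 : ℕ) : ℝ) ∈ f '' I := by
    have := hconv.sum_mem (t := Finset.univ) (w := fun _ : Fin (n + 1) => 1 / ((n + 1 : ℕ) : ℝ))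
      (z := fun i => f (x i)) (fun i _ => by positivity)
      (by simp [Finset.sum_const]; field_simp) (fun i _ => mem_image_of_mem f (hx i))
    convert this using 1
    simp only [smul_eq_mul, ← Finset.mul_sum]
    ring
  refine ⟨Function.invFunOn_mem hmem, ?_⟩
  have h := Function.invFunOn_eq hmem
  unfold quasiArith
  rw [h]
  field_simp

/-- A lower bound `m` for the average of an increasing `F = ± f` is one for the mean. -/
lemma le_quasiArith (I : Set ℝ) (hIint : I.OrdConnected) (f F : ℝ → ℝ) (hf : ContinuousOn f I)
    (hF : F = f ∨ F = -f) (hmono : StrictMonoOn F I)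
    {n : ℕ} (x : Fin (n + 1) → ℝ) (hx : ∀ i, x i ∈ I) (m : ℝ) (hm : m ∈ I)
    (hle : ((n + 1 : ℕ) : ℝ) * F m ≤ ∑ i, F (x i)) : m ≤ quasiArith f I x := by
  obtain ⟨hv, hsum⟩ := quasiArith_spec I hIint f hf x hx
  have hS : ((n + 1 : ℕ) : ℝ) * F (quasiArith f I x) = ∑ i, F (x i) := by
    rcases hF with rfl | rfl
    · exact hsum
    · simp only [Pi.neg_apply, Finset.sum_neg_distrib, ← hsum]; ring
  rw [← hS] at hle
  exact (hmono.le_iff_le hm hv).1 (le_of_mul_le_mul_left hle (by positivity))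

/-- **Lower estimate of the Hardy constant of a quasi-arithmetic mean.** Let `I` be an
interval with `inf I = 0` and `f : I → ℝ` twice continuously differentiable with nowhere
vanishing first derivative; let `q = liminf_{x→0⁺} κ_f(x)`. If `C ≥ 0` satisfies the Hardy
inequality for `QA_f` on all sequences in `I`, then `C ≥ C(q)`. -/
theorem quasiArith_hardy_constant_lower (I : Set ℝ) (hIpos : I ⊆ Set.Ioi 0)
    (hIint : I.OrdConnected) (hInf : sInf I = 0) (hne : I.Nonempty)
    (f : ℝ → ℝ) (hf : ∀ x ∈ I, ContDiffAt ℝ 2 f x) (hf' : ∀ x ∈ I, deriv f x ≠ 0)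
    (C : ℝ) (hC : 0 ≤ C)
    (hHardy : ∀ x : ℕ → ℝ, (∀ k, x k ∈ I) →
      ∑' k : ℕ,
          ENNReal.ofReal (quasiArith f I (fun i : Fin (k + 1) => x i.val)) ≤
        ENNReal.ofReal C * ∑' k : ℕ, ENNReal.ofReal (x k)) :
    hardyCp (Filter.liminf (fun t => (kappaQA f t : EReal)) (nhdsWithin 0 I)) ≤
      ENNReal.ofReal C := by
  have hd1 : ∀ t ∈ I, HasDerivAt f (deriv f t) t := fun t ht =>
    ((hf t ht).differentiableAt (by norm_num)).hasDerivAt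
  have hd2 : ∀ t ∈ I, HasDerivAt (deriv f) (deriv (deriv f) t) t := fun t ht =>
    (((hf t ht).derivWithin (m := 1) (by norm_num)).differentiableAt (by norm_num)).hasDerivAt
  have hcont : ContinuousOn f I := fun t ht => (hd1 t ht).continuousAt.continuousWithinAt
  have hIoc : ∀ c ∈ I, Ioc 0 c ⊆ I := by
    intro c hc t ht
    obtain ⟨b, hb, hbt⟩ := exists_lt_of_csInf_lt hne (hInf.symm ▸ ht.1)
    exact hIint.out hb hc ⟨hbt.le, ht.2⟩
  -- normalise the sign of the derivative
  obtain ⟨F, F', F'', hF, hF1, hF2, hFpos, hFκ⟩ : ∃ F F' F'' : ℝ → ℝ, (F = f ∨ F = -f) ∧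
      (∀ t ∈ I, HasDerivAt F (F' t) t) ∧ (∀ t ∈ I, HasDerivAt F' (F'' t) t) ∧
      (∀ t ∈ I, 0 < F' t) ∧ (∀ t, kappaQA f t = t * F'' t / F' t + 1) := by
    have hsign : (∀ t ∈ I, 0 < deriv f t) ∨ (∀ t ∈ I, deriv f t < 0) := by
      have hoc : (deriv f '' I).OrdConnected := (hIint.isPreconnected.image _
        fun t ht => (hd2 t ht).continuousAt.continuousWithinAt).ordConnected
      by_contra! hcon
      obtain ⟨⟨s, hs, hs0⟩, ⟨t, ht, ht0⟩⟩ := hcon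
      obtain ⟨u, hu, hu0⟩ := hoc.out (mem_image_of_mem _ hs) (mem_image_of_mem _ ht) ⟨hs0, ht0⟩
      exact hf' u hu hu0
    rcases hsign with h | h
    · exact ⟨f, deriv f, deriv (deriv f), Or.inl rfl, hd1, hd2, h, fun t => rfl⟩
    · refine ⟨-f, fun t => -deriv f t, fun t => -deriv (deriv f) t, Or.inr rfl,
        fun t ht => (hd1 t ht).neg, fun t ht => (hd2 t ht).neg,
        fun t ht => neg_pos.2 (h t ht), fun t => ?_⟩
      rw [mul_neg, neg_div_neg_eq]; rfl
  have hFmono : StrictMonoOn F I :=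
    strictMonoOn_of_hasDerivWithinAt_pos hIint.convex
      (fun t ht => (hF1 t ht).continuousAt.continuousWithinAt)
      (fun t ht => (hF1 t (interior_subset ht)).hasDerivWithinAt)
      (fun t ht => hFpos t (interior_subset ht))
  have hxmem : ∀ c : ℝ, 0 < c → ∀ k : ℕ, c / ((k : ℝ) + 1) ∈ Ioc 0 c := fun c hc k =>
    ⟨by positivity, div_le_self hc.le (by linarith [(Nat.cast_nonneg k : (0 : ℝ) ≤ k)])⟩
  -- a mean is at least its least entry
  have hone : 1 ≤ C := by
    obtain ⟨c, hc⟩ := hne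
    have hc0 : 0 < c := hIpos hc
    refine le_of_eventually_quasiArith I f C hC hHardy c hc0 (hIoc c hc) 1 zero_le_one
      (Eventually.of_forall fun n => ?_)
    have hx := fun k => hIoc c hc (hxmem c hc0 k)
    rw [one_mul]
    refine le_quasiArith I hIint f F hcont hF hFmono _ (fun i => hx i) _ (hx n) ?_
    have hS : ∑ _i : Fin (n + 1), F (c / ((n : ℝ) + 1)) ≤
        ∑ i : Fin (n + 1), F (c / ((i.val : ℝ) + 1)) := by
      refine Finset.sum_le_sum fun i _ => hFmono.monotoneOn (hx n) (hx i) ?_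
      have : (i.val : ℝ) ≤ n := by exact_mod_cast Nat.lt_succ_iff.1 i.2
      gcongr
    simpa using hS
  set q := Filter.liminf (fun t => (kappaQA f t : EReal)) (nhdsWithin 0 I) with hq
  have main : ∀ p : ℝ, p ≠ 0 → p < 1 → (p : EReal) < q → (1 - p) ^ (-1 / p) ≤ C := by
    intro p hp hp1 hpq
    have hev := eventually_lt_of_lt_liminf hpq
    rw [eventually_nhdsWithin_iff, Metric.eventually_nhds_iff] at hev
    obtain ⟨δ, hδ, hev⟩ := hev
    obtain ⟨c, hc, hcδ⟩ := exists_lt_of_csInf_lt hne (hInf.symm ▸ hδ)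
    have hc0 : 0 < c := hIpos hc
    have hsub := hIoc c hc
    refine le_of_forall_lt_imp_le_of_dense fun K hKC => ?_
    rcases le_or_gt K 0 with hK | hK
    · exact hK.trans hC
    refine le_of_eventually_quasiArith I f C hC hHardy c hc0 hsub K hK.le ?_
    filter_upwards [(tendsto_add_atTop_nat 1).eventually (eventually_power_sum p hp hp1 K hK hKC),
      tendsto_natCast_atTop_atTop.eventually (eventually_ge_atTop K)] with n hn hnK
    have hm : K * c / ((n : ℝ) + 1) ∈ Ioc 0 c := by
      refine ⟨by positivity, ?_⟩
      rw [div_le_iff₀ (by positivity)]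
      nlinarith
    have hcp : 0 < c ^ p := Real.rpow_pos_of_pos hc0 _
    refine le_quasiArith I hIint f F hcont hF hFmono _ (fun i => hsub (hxmem c hc0 i)) _
      (hsub hm) ?_
    refine tangent_sum F F' F'' p hp c (fun t ht => hF1 t (hsub ht))
      (fun t ht => hF2 t (hsub ht)) (fun t ht => hFpos t (hsub ht)) (fun t ht => ?_) _
      (fun i => hxmem c hc0 i) _ hm ?_
    · have h1 := hev (y := t) (by
        rw [Real.dist_eq, sub_zero, abs_of_pos ht.1]; exact ht.2.trans_lt hcδ) (hsub ht)
      rw [EReal.coe_lt_coe_iff, hFκ, ← sub_lt_iff_lt_add, lt_div_iff₀ (hFpos t (hsub ht))] at h1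
      exact h1.le
    · rw [Fin.sum_univ_eq_sum_range (fun k : ℕ => (c / ((k : ℝ) + 1)) ^ p / p)]
      have e1 : ∀ k : ℕ, (c / ((k : ℝ) + 1)) ^ p / p
          = c ^ p * ((1 / ((k : ℝ) + 1)) ^ p / p) := fun k => by
        rw [div_eq_mul_one_div c, Real.mul_rpow hc0.le (by positivity)]; ring
      have e2 : (K * c / ((n : ℝ) + 1)) ^ p = c ^ p * (K / ((n + 1 : ℕ) : ℝ)) ^ p := by
        rw [← Real.mul_rpow hc0.le (by positivity)]; push_cast; congr 1; ring
      simp only [e1, ← Finset.mul_sum]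
      rw [e2, mul_div_assoc, mul_left_comm]
      exact mul_le_mul_of_nonneg_left hn hcp.le
  clear_value q
  unfold hardyCp
  split_ifs with h1 h2 h3
  · simpa using hone
  · apply ENNReal.ofReal_le_ofReal
    -- `p = -1/n` yields `(1 + 1/n) ^ n ≤ C`
    refine le_of_tendsto (Real.tendsto_one_add_div_pow_exp 1) ?_
    filter_upwards [eventually_gt_atTop 0] with n hn
    have hn0 : (0 : ℝ) < n := by exact_mod_cast hn
    have hneg : -(1 / (n : ℝ)) < 0 := by simpa using hn
    have := main (-(1 / (n : ℝ))) hneg.ne (by linarith) (by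
      rw [h2]; exact_mod_cast hneg)
    rw [show -1 / -(1 / (n : ℝ)) = n by field_simp, sub_neg_eq_add, Real.rpow_natCast] at this
    exact this
  · apply ENNReal.ofReal_le_ofReal
    have hqt : q ≠ ⊤ := fun h => by simp [h] at h3
    lift q to ℝ using ⟨hqt, h1⟩
    rw [EReal.toReal_coe]
    have hq0 : q ≠ 0 := by exact_mod_cast h2
    have hq1 : q < 1 := by exact_mod_cast h3
    have hca : ContinuousAt (fun p : ℝ => (1 - p) ^ (-1 / p)) q :=
      ContinuousAt.rpow (by fun_prop) (continuousAt_const.div continuousAt_id hq0)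
        (Or.inl (by linarith))
    refine le_of_tendsto (hca.tendsto.mono_left (nhdsWithin_le_nhds (s := Iio q))) ?_
    filter_upwards [self_mem_nhdsWithin,
      nhdsWithin_le_nhds (isOpen_ne.mem_nhds hq0)] with p hpq hp0
    exact main p hp0 (lt_trans hpq hq1) (by exact_mod_cast hpq)
  · exfalso
    -- `(1 - p) ^ (-1/p) ≥ (1 - p)⁻¹`, which is `C + 2` for this `p`
    set p : ℝ := 1 - (C + 2)⁻¹ with hpdef
    have hi0 : 0 < (C + 2)⁻¹ := by positivity
    have hi1 : (C + 2)⁻¹ < 1 := inv_lt_one_of_one_lt₀ (by linarith)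
    have hp0 : 0 < p := by linarith
    have hp1 : p < 1 := by linarith
    have hpq : (p : EReal) < q := lt_of_lt_of_le (by exact_mod_cast hp1) (not_lt.1 h3)
    have h4 := main p hp0.ne' hp1 hpq
    have h5 : (1 - p) ^ (-1 : ℝ) ≤ (1 - p) ^ (-1 / p) := by
      apply Real.rpow_le_rpow_of_exponent_ge (by linarith) (by linarith)
      rw [div_le_iff₀ hp0]; linarith
    have h6 : (1 - p)⁻¹ = C + 2 := by rw [hpdef, sub_sub_cancel, inv_inv]
    rw [Real.rpow_neg_one, h6] at h5
    linarith
end
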